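/- Assume additionally that α < 1/2. Then for every t > 0 and every ρ > 0 one has lim_{δ→0+} E|y_δ(t δ^{-2(1-ρ)})|² = 0. -/

import Mathlib

open MeasureTheory ProbabilityTheory Filter Set
open scoped RealInnerProductSpace

/-- The covariance matrix entries `R_{ij}(x) = ∫_{ℝᵈ} cos(k·x) R̂_{ij}(k) dk`, where
`R̂_{ij}(k) = a(|k|)|k|^{-(2α+d-2)} (δ_{ij} - k_i k_j/|k|²)`. -/
noncomputable def covEntry (d : ℕ) (α : ℝ) (a : ℝ → ℝ)
    (x : EuclideanSpace ℝ (Fin d)) (i j : Fin d) : ℝ :=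
  ∫ k : EuclideanSpace ℝ (Fin d),
    Real.cos ⟪k, x⟫ *
      (a ‖k‖ * ‖k‖ ^ (-(2 * α + (d : ℝ) - 2)) *
        ((if i = j then (1:ℝ) else 0) - k i * k j / ‖k‖ ^ 2))

/-!
Since `α < 1/2`, the spectral density is dominated by a Riesz kernel `|k|^{-β}` with `β < d - 1`.
Writing this kernel as a mixture of Gaussians shows that the integral of `F` along a nearly straight
path of length `L` has variance `O(L)`, and that displacing the path by `η` changes the integral by
a Gaussian variable of variance `O(η² L)`. Gaussian tails and a union bound over paths in a fine
grid, rounded in time to the scale under consideration, make these bounds hold simultaneously on all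
dyadic time blocks, up to a factor `Θ = δ^{-κ}` and outside an event of superpolynomially small
probability. An induction over the scales then gives `|y_δ(T)| ≲ δ Θ √T`, which is `O(δ^{ρ-κ})` at
`T = t δ^{-2(1-ρ)}`. On the exceptional event a crude bound by a power of `δ⁻¹` and of an envelope
of `F` with high moments suffices.
-/

/-! ### Riesz energy of trigonometric sums -/

section RieszEnergy

open Module Real

variable {E : Type*} [NormedAddCommGroup E] [InnerProductSpace ℝ E]
  {H : Type*} [NormedAddCommGroup H] [InnerProductSpace ℝ H]

/-- The squared modulus `|∑ m, e^{i⟪k, x m⟫} c m|²` of a trigonometric sum with frequencies `x m`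
and coefficients `c m` in a real inner product space, split into real and imaginary part. -/
noncomputable def trigSq {ι : Type*} [Fintype ι] (c : ι → H) (x : ι → E) (k : E) : ℝ :=
  ‖∑ m, cos ⟪k, x m⟫ • c m‖ ^ 2 + ‖∑ m, sin ⟪k, x m⟫ • c m‖ ^ 2

lemma trigSq_nonneg {ι : Type*} [Fintype ι] (c : ι → H) (x : ι → E) (k : E) :
    0 ≤ trigSq c x k := by
  unfold trigSq
  positivity

@[fun_prop]
lemma continuous_trigSq {ι : Type*} [Fintype ι] (c : ι → H) (x : ι → E) :
    Continuous (trigSq c x) := by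
  unfold trigSq
  fun_prop

lemma trigSq_eq_sum {ι : Type*} [Fintype ι] (c : ι → H) (x : ι → E) (k : E) :
    trigSq c x k = ∑ m, ∑ l, ⟪c m, c l⟫ * cos ⟪k, x m - x l⟫ := by
  simp only [trigSq, ← real_inner_self_eq_norm_sq, sum_inner, inner_sum, ← Finset.sum_add_distrib,
    real_inner_smul_left, real_inner_smul_right, inner_sub_right, cos_sub]
  refine Finset.sum_congr rfl fun m _ => Finset.sum_congr rfl fun l _ => ?_
  rw [real_inner_comm (c l)]
  ring

lemma re_cexp_neg_mul_sq_norm_add_I_inner (τ : ℝ) (x k : E) :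
    RCLike.re (Complex.exp (-(τ : ℂ) * (‖k‖ : ℂ) ^ 2 + Complex.I * ((⟪x, k⟫ : ℝ) : ℂ))) =
      exp (-τ * ‖k‖ ^ 2) * cos ⟪k, x⟫ := by
  simp only [RCLike.re_to_complex, Complex.exp_re]
  congr 2 <;> simp [← Complex.ofReal_pow, real_inner_comm]

/-- The Riesz kernel `|k|^{-β}` with a Gaussian cutoff: the spectral densities in play are dominated
by multiples of it, and it is a mixture of Gaussians, whose Fourier transforms are explicit. -/
noncomputable def rieszGaussian {E : Type*} [NormedAddCommGroup E] (β : ℝ) (k : E) : ℝ :=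
  ‖k‖ ^ (-β) * exp (-‖k‖ ^ 2)

lemma rieszGaussian_nonneg {E : Type*} [NormedAddCommGroup E] (β : ℝ) (k : E) :
    0 ≤ rieszGaussian β k := by
  unfold rieszGaussian
  positivity

variable [FiniteDimensional ℝ E] [MeasurableSpace E] [BorelSpace E]

lemma integrable_exp_neg_mul_sq_norm_mul_cos_inner {τ : ℝ} (hτ : 0 < τ) (x : E) :
    Integrable fun k : E => exp (-τ * ‖k‖ ^ 2) * cos ⟪k, x⟫ := by
  have h := (GaussianFourier.integrable_cexp_neg_mul_sq_norm_add (V := E)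
    (b := (τ : ℂ)) (by simpa using hτ) Complex.I x).re
  simpa only [re_cexp_neg_mul_sq_norm_add_I_inner] using h

lemma integral_exp_neg_mul_sq_norm_mul_cos_inner {τ : ℝ} (hτ : 0 < τ) (x : E) :
    ∫ k : E, exp (-τ * ‖k‖ ^ 2) * cos ⟪k, x⟫ =
      (π / τ) ^ ((finrank ℝ E : ℝ) / 2) * exp (-‖x‖ ^ 2 / (4 * τ)) := by
  have hτ' : 0 < (τ : ℂ).re := by simpa using hτ
  have hre := integral_re
    (GaussianFourier.integrable_cexp_neg_mul_sq_norm_add (V := E) hτ' Complex.I x)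
  simp only [re_cexp_neg_mul_sq_norm_add_I_inner,
    GaussianFourier.integral_cexp_neg_mul_sq_norm_add (V := E) hτ' Complex.I x] at hre
  have hreal : ((π : ℂ) / (τ : ℂ)) ^ ((finrank ℝ E : ℂ) / 2) *
      Complex.exp (Complex.I ^ 2 * (‖x‖ : ℂ) ^ 2 / (4 * (τ : ℂ))) =
      (((π / τ) ^ ((finrank ℝ E : ℝ) / 2) * exp (-‖x‖ ^ 2 / (4 * τ)) : ℝ) : ℂ) := by
    rw [Complex.ofReal_mul, Complex.ofReal_cpow (by positivity)]
    simp
  rw [hre, hreal]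
  exact Complex.ofReal_re _

lemma lintegral_exp_neg_mul_sq_norm_mul_trigSq {ι : Type*} [Fintype ι] (c : ι → H) (x : ι → E)
    {τ : ℝ} (hτ : 0 < τ) :
    ∫⁻ k : E, ENNReal.ofReal (exp (-τ * ‖k‖ ^ 2) * trigSq c x k) =
      ENNReal.ofReal ((π / τ) ^ ((finrank ℝ E : ℝ) / 2) *
        ∑ m, ∑ l, ⟪c m, c l⟫ * exp (-‖x m - x l‖ ^ 2 / (4 * τ))) := by
  have hexpand (k : E) : exp (-τ * ‖k‖ ^ 2) * trigSq c x k =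
      ∑ m, ∑ l, ⟪c m, c l⟫ * (exp (-τ * ‖k‖ ^ 2) * cos ⟪k, x m - x l⟫) := by
    simp only [trigSq_eq_sum, Finset.mul_sum, mul_left_comm]
  have hterm (m l : ι) :
      Integrable fun k : E => ⟪c m, c l⟫ * (exp (-τ * ‖k‖ ^ 2) * cos ⟪k, x m - x l⟫) :=
    (integrable_exp_neg_mul_sq_norm_mul_cos_inner hτ _).const_mul _
  have hrow (m : ι) := integrable_finsetSum Finset.univ fun l _ => hterm m l
  rw [← ofReal_integral_eq_lintegral_ofReal
    (by simpa only [hexpand] using integrable_finsetSum Finset.univ fun m _ => hrow m)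
    (Eventually.of_forall fun k => mul_nonneg (exp_pos _).le (trigSq_nonneg ..))]
  congr 1
  simp only [hexpand]
  rw [integral_finsetSum _ fun m _ => hrow m, Finset.mul_sum]
  refine Finset.sum_congr rfl fun m _ => ?_
  rw [integral_finsetSum _ fun l _ => hterm m l, Finset.mul_sum]
  refine Finset.sum_congr rfl fun l _ => ?_
  rw [integral_const_mul, integral_exp_neg_mul_sq_norm_mul_cos_inner hτ]
  ring

lemma ofReal_rpow_neg_mul_exp_neg_sq {β r : ℝ} (hβ : 0 < β) (hr : 0 < r) :
    ENNReal.ofReal (r ^ (-β) * exp (-r ^ 2)) = ENNReal.ofReal (1 / Gamma (β / 2)) *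
      ∫⁻ u in Ioi (0 : ℝ), ENNReal.ofReal (u ^ (β / 2 - 1) * exp (-(1 + u) * r ^ 2)) := by
  have hGamma := integral_rpow_mul_exp_neg_mul_Ioi (a := β / 2) (r := r ^ 2)
    (by positivity) (by positivity)
  have : 0 < Gamma (β / 2) := Gamma_pos_of_pos (by positivity)
  have hint : IntegrableOn (fun u : ℝ => u ^ (β / 2 - 1) * exp (-(r ^ 2 * u))) (Ioi 0) :=
    not_imp_comm.1 integral_undef (hGamma ▸ by positivity)
  have hsplit (u : ℝ) : ENNReal.ofReal (u ^ (β / 2 - 1) * exp (-(1 + u) * r ^ 2)) =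
      ENNReal.ofReal (exp (-r ^ 2)) * ENNReal.ofReal (u ^ (β / 2 - 1) * exp (-(r ^ 2 * u))) := by
    rw [← ENNReal.ofReal_mul (exp_pos _).le, mul_left_comm, ← exp_add]
    ring_nf
  have hpos : 0 ≤ᵐ[volume.restrict (Ioi 0)] fun u : ℝ => u ^ (β / 2 - 1) * exp (-(r ^ 2 * u)) := by
    filter_upwards [ae_restrict_mem measurableSet_Ioi] with u hu
    have : 0 < u := hu
    positivity
  have hpow : (1 / r ^ 2) ^ (β / 2) = r ^ (-β) := by
    rw [one_div, inv_rpow (by positivity), ← rpow_natCast r 2, ← rpow_mul hr.le, ← rpow_neg hr.le]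
    ring_nf
  simp only [hsplit]
  rw [lintegral_const_mul' _ _ ENNReal.ofReal_ne_top,
    ← ofReal_integral_eq_lintegral_ofReal hint hpos, hGamma, hpow,
    ← ENNReal.ofReal_mul (exp_pos _).le, ← ENNReal.ofReal_mul (by positivity)]
  congr 1
  field_simp

lemma lintegral_rieszGaussian_mul_trigSq [Nontrivial E] {ι : Type*} [Fintype ι] (c : ι → H)
    (x : ι → E) {β : ℝ} (hβ : 0 < β) :
    ∫⁻ k : E, ENNReal.ofReal (rieszGaussian β k * trigSq c x k) =
      ENNReal.ofReal (1 / Gamma (β / 2)) * ∫⁻ u in Ioi (0 : ℝ),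
        ENNReal.ofReal (u ^ (β / 2 - 1) * ((π / (1 + u)) ^ ((finrank ℝ E : ℝ) / 2) *
          ∑ m, ∑ l, ⟪c m, c l⟫ * exp (-‖x m - x l‖ ^ 2 / (4 * (1 + u))))) := by
  have hmix : (fun k : E => ENNReal.ofReal (rieszGaussian β k * trigSq c x k)) =ᵐ[volume]
      fun k => ENNReal.ofReal (1 / Gamma (β / 2)) * ∫⁻ u in Ioi (0 : ℝ),
        ENNReal.ofReal (u ^ (β / 2 - 1)) *
          ENNReal.ofReal (exp (-(1 + u) * ‖k‖ ^ 2) * trigSq c x k) := by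
    filter_upwards [Measure.ae_ne volume (0 : E)] with k hk
    rw [ENNReal.ofReal_mul (rieszGaussian_nonneg β k), rieszGaussian,
      ofReal_rpow_neg_mul_exp_neg_sq hβ (norm_pos_iff.mpr hk), mul_assoc,
      ← lintegral_mul_const' _ _ ENNReal.ofReal_ne_top]
    congr 1
    refine setLIntegral_congr_fun measurableSet_Ioi fun u (hu : 0 < u) => ?_
    rw [← ENNReal.ofReal_mul (by positivity), ← ENNReal.ofReal_mul (by positivity), mul_assoc]
  have hmeas : Measurable (Function.uncurry fun (k : E) (u : ℝ) =>
      ENNReal.ofReal (u ^ (β / 2 - 1)) *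
        ENNReal.ofReal (exp (-(1 + u) * ‖k‖ ^ 2) * trigSq c x k)) := by
    have := (continuous_trigSq c x).measurable
    unfold Function.uncurry
    fun_prop
  rw [lintegral_congr_ae hmix, lintegral_const_mul' _ _ ENNReal.ofReal_ne_top,
    lintegral_lintegral_swap hmeas.aemeasurable]
  congr 1
  refine setLIntegral_congr_fun measurableSet_Ioi fun u (hu : 0 < u) => ?_
  rw [lintegral_const_mul' _ _ ENNReal.ofReal_ne_top,
    lintegral_exp_neg_mul_sq_norm_mul_trigSq c x (by linarith),
    ← ENNReal.ofReal_mul (by positivity)]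

end RieszEnergy

section AdvancingPath

open Module Real

lemma sum_range_exp_neg_mul_succ_sq_le {b : ℝ} (hb : 0 < b) (n : ℕ) :
    ∑ j ∈ Finset.range n, exp (-b * ((j + 1 : ℕ) : ℝ) ^ 2) ≤ √(π / b) / 2 := by
  have hanti : AntitoneOn (fun x : ℝ => exp (-b * x ^ 2)) (Icc 0 (0 + (n : ℝ))) := by
    intro x hx y _ hxy
    have : x ^ 2 ≤ y ^ 2 := pow_le_pow_left₀ hx.1 hxy 2
    simp only [exp_le_exp]
    nlinarith
  calc ∑ j ∈ Finset.range n, exp (-b * ((j + 1 : ℕ) : ℝ) ^ 2)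
      ≤ ∫ x in (0 : ℝ)..n, exp (-b * x ^ 2) := by simpa only [zero_add] using hanti.sum_le_integral
    _ ≤ ∫ x in Ioi (0 : ℝ), exp (-b * x ^ 2) := by
        rw [intervalIntegral.integral_of_le (by positivity)]
        exact setIntegral_mono_set (integrable_exp_neg_mul_sq hb).integrableOn
          (Eventually.of_forall fun x => (exp_pos _).le) Ioc_subset_Ioi_self.eventuallyLE
    _ = √(π / b) / 2 := integral_gaussian_Ioi b

lemma sum_range_exp_neg_mul_sub_sq_le {b : ℝ} (hb : 0 < b) (m n : ℕ) :
    ∑ j ∈ Finset.range n, exp (-b * ((m : ℝ) - j) ^ 2) ≤ 1 + √(π / b) := by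
  have hleft : ∑ j ∈ Finset.range m, exp (-b * ((m : ℝ) - j) ^ 2) ≤ √(π / b) / 2 := by
    rw [← Finset.sum_range_reflect]
    refine (Finset.sum_congr rfl fun j hj => ?_).trans_le (sum_range_exp_neg_mul_succ_sq_le hb m)
    rw [← Nat.cast_sub (by omega), show m - (m - 1 - j) = j + 1 by grind]
  have hright : ∑ j ∈ Finset.range (n + 1), exp (-b * ((m : ℝ) - (m + j : ℕ)) ^ 2) ≤
      1 + √(π / b) / 2 := by
    have := sum_range_exp_neg_mul_succ_sq_le hb n
    rw [Finset.sum_range_succ']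
    simp only [Nat.cast_add, Nat.cast_one, Nat.cast_zero, sub_add_cancel_left, neg_sq] at this ⊢
    simp only [ne_eq, OfNat.ofNat_ne_zero, not_false_eq_true, zero_pow, mul_zero,
      exp_zero]
    linarith
  calc ∑ j ∈ Finset.range n, exp (-b * ((m : ℝ) - j) ^ 2)
      ≤ ∑ j ∈ Finset.range (m + (n + 1)), exp (-b * ((m : ℝ) - j) ^ 2) :=
        Finset.sum_le_sum_of_subset_of_nonneg (Finset.range_mono (by omega))
          fun _ _ _ => (exp_pos _).le
    _ ≤ 1 + √(π / b) := by
        rw [Finset.sum_range_add]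
        linarith

variable {E : Type*} [NormedAddCommGroup E] [InnerProductSpace ℝ E]
  {H : Type*} [NormedAddCommGroup H] [InnerProductSpace ℝ H]

/-- The points `x 0, x 1, …` advance in the direction `v` by at least `ℓ` per step, up to a bounded
error. Discretisations of nearly straight paths satisfy this, and for fixed `v` and `ℓ` the
condition is convex in `x`. -/
def AdvancesAlong (v : E) (ℓ : ℝ) {n : ℕ} (x : Fin n → E) : Prop :=
  ∀ m l : Fin n, ((m : ℝ) - l) * ℓ ≤ ⟪v, x m - x l⟫ + 2

namespace AdvancesAlong

variable {v : E} {ℓ η : ℝ} {n : ℕ} {x y : Fin n → E}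

lemma of_fin_one (x : Fin 1 → E) : AdvancesAlong v ℓ x := by
  intro m l
  simp [Subsingleton.elim m l]

lemma line_add (hv : ‖v‖ = 1) (s : ℝ) {z : Fin n → E} (hz : ∀ m l, ‖z m - z l‖ ≤ 2) :
    AdvancesAlong v ℓ fun m : Fin n => (s + m * ℓ) • v + z m := by
  intro m l
  have hsub : (s + m * ℓ) • v + z m - ((s + l * ℓ) • v + z l) =
      (((m : ℝ) - l) * ℓ) • v + (z m - z l) := by module
  have hz' := (abs_le.1 (abs_real_inner_le_norm v (z m - z l))).1
  rw [hv, one_mul] at hz'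
  rw [hsub, inner_add_right, real_inner_smul_right, real_inner_self_eq_norm_sq, hv]
  linarith [hz m l]

lemma add_smul_sub (hx : AdvancesAlong v ℓ x) (hy : AdvancesAlong v ℓ y) {θ : ℝ}
    (hθ : θ ∈ Icc (0 : ℝ) 1) : AdvancesAlong v ℓ fun m => x m + θ • (y m - x m) := by
  intro m l
  have hsub : x m + θ • (y m - x m) - (x l + θ • (y l - x l)) =
      (1 - θ) • (x m - x l) + θ • (y m - y l) := by module
  rw [hsub, inner_add_right, real_inner_smul_right, real_inner_smul_right]
  nlinarith [hx m l, hy m l, hθ.1, hθ.2]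

lemma abs_sub_mul_le (hx : AdvancesAlong v ℓ x) (hv : ‖v‖ ≤ 1) (m l : Fin n) :
    |((m : ℝ) - l) * ℓ| ≤ ‖x m - x l‖ + 2 := by
  have hinner (p q : Fin n) : ⟪v, x p - x q⟫ ≤ ‖x p - x q‖ :=
    (real_inner_le_norm _ _).trans (mul_le_of_le_one_left (norm_nonneg _) hv)
  rw [abs_le]
  constructor
  · linarith [hx l m, hinner l m, norm_sub_rev (x l) (x m)]
  · linarith [hx m l, hinner m l]

lemma exp_neg_norm_sub_sq_div_le (hx : AdvancesAlong v ℓ x) (hv : ‖v‖ ≤ 1) {τ : ℝ} (hτ : 1 ≤ τ)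
    (m l : Fin n) :
    exp (-‖x m - x l‖ ^ 2 / (4 * τ)) ≤ exp 1 * exp (-(ℓ ^ 2 / (8 * τ)) * ((m : ℝ) - l) ^ 2) := by
  have hsq : (((m : ℝ) - l) * ℓ) ^ 2 ≤ 2 * ‖x m - x l‖ ^ 2 + 8 := by
    rw [← sq_abs]
    have := pow_le_pow_left₀ (abs_nonneg _) (hx.abs_sub_mul_le hv m l) 2
    nlinarith [sq_nonneg (‖x m - x l‖ - 2)]
  have hscale : (1 + -(ℓ ^ 2 / (8 * τ)) * ((m : ℝ) - l) ^ 2) * (4 * τ) =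
      4 * τ - (((m : ℝ) - l) * ℓ) ^ 2 / 2 := by
    field_simp
    ring
  rw [← exp_add, exp_le_exp, div_le_iff₀ (by positivity), hscale]
  linarith

lemma sum_inner_mul_exp_le (hx : AdvancesAlong v ℓ x) (hv : ‖v‖ ≤ 1) (hℓ : ℓ ∈ Ioc (0 : ℝ) 1)
    {τ : ℝ} (hτ : 1 ≤ τ) {c : Fin n → H} (hc : ∀ m, ‖c m‖ ≤ ℓ * η) :
    ∑ m, ∑ l, ⟪c m, c l⟫ * exp (-‖x m - x l‖ ^ 2 / (4 * τ)) ≤ 24 * √τ * (η ^ 2 * (n * ℓ)) := by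
  obtain ⟨hℓ0, hℓ1⟩ := hℓ
  have hentry (m l : Fin n) : ⟪c m, c l⟫ * exp (-‖x m - x l‖ ^ 2 / (4 * τ)) ≤
      (ℓ * η) ^ 2 * exp 1 * exp (-(ℓ ^ 2 / (8 * τ)) * ((m : ℝ) - l) ^ 2) := by
    have hcc : ⟪c m, c l⟫ ≤ (ℓ * η) ^ 2 := by
      rw [sq]
      exact (real_inner_le_norm _ _).trans (mul_le_mul (hc m) (hc l) (norm_nonneg _)
        ((norm_nonneg _).trans (hc m)))
    rw [mul_assoc]
    exact mul_le_mul hcc (hx.exp_neg_norm_sub_sq_div_le hv hτ m l) (exp_pos _).le (sq_nonneg _)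
  have hgauss : ℓ * (1 + √(π / (ℓ ^ 2 / (8 * τ)))) ≤ 8 * √τ := by
    have hsqrt : √(π / (ℓ ^ 2 / (8 * τ))) ≤ 7 * √τ / ℓ := by
      rw [sqrt_le_left (by positivity), div_pow, mul_pow, sq_sqrt (by positivity)]
      rw [div_div_eq_mul_div]
      exact div_le_div_of_nonneg_right (by nlinarith [pi_lt_d2]) (by positivity)
    calc ℓ * (1 + √(π / (ℓ ^ 2 / (8 * τ)))) ≤ ℓ * (1 + 7 * √τ / ℓ) := by gcongr
      _ = ℓ + 7 * √τ := by field_simp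
      _ ≤ 8 * √τ := by linarith [one_le_sqrt.mpr hτ]
  have hrow (m : Fin n) : ∑ l, ⟪c m, c l⟫ * exp (-‖x m - x l‖ ^ 2 / (4 * τ)) ≤
      24 * √τ * (η ^ 2 * ℓ) := by
    have hsum := sum_range_exp_neg_mul_sub_sq_le (b := ℓ ^ 2 / (8 * τ)) (by positivity) m n
    rw [← Fin.sum_univ_eq_sum_range (fun j => exp (-(ℓ ^ 2 / (8 * τ)) * ((m : ℝ) - j) ^ 2))]
      at hsum
    calc _ ≤ ∑ l : Fin n, (ℓ * η) ^ 2 * exp 1 * exp (-(ℓ ^ 2 / (8 * τ)) * ((m : ℝ) - l) ^ 2) :=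
          Finset.sum_le_sum fun l _ => hentry m l
      _ ≤ (ℓ * η) ^ 2 * exp 1 * (1 + √(π / (ℓ ^ 2 / (8 * τ)))) := by
          rw [← Finset.mul_sum]
          gcongr
      _ = ℓ * η ^ 2 * exp 1 * (ℓ * (1 + √(π / (ℓ ^ 2 / (8 * τ))))) := by ring
      _ ≤ ℓ * η ^ 2 * 3 * (8 * √τ) := by
          gcongr
          linarith [exp_one_lt_d9]
      _ = 24 * √τ * (η ^ 2 * ℓ) := by ring
  calc _ ≤ ∑ _m : Fin n, 24 * √τ * (η ^ 2 * ℓ) := Finset.sum_le_sum fun m _ => hrow m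
    _ = 24 * √τ * (η ^ 2 * (n * ℓ)) := by
        simp only [Finset.sum_const, Finset.card_univ, Fintype.card_fin, nsmul_eq_mul]
        ring

lemma rpow_mul_sum_inner_mul_exp_le (h : AdvancesAlong v ℓ x) (hv : ‖v‖ ≤ 1)
    (hℓ : ℓ ∈ Ioc (0 : ℝ) 1) {τ : ℝ} (hτ : 1 ≤ τ) {c : Fin n → H} (hc : ∀ m, ‖c m‖ ≤ ℓ * η)
    (p : ℝ) :
    (π / τ) ^ (p / 2) * ∑ m, ∑ l, ⟪c m, c l⟫ * exp (-‖x m - x l‖ ^ 2 / (4 * τ)) ≤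
      24 * π ^ (p / 2) * τ ^ (-((p - 1) / 2)) * (η ^ 2 * (n * ℓ)) := by
  have hτ_pos : 0 < τ := by linarith
  have hpow : τ ^ (-((p - 1) / 2)) = √τ / τ ^ (p / 2) := by
    rw [sqrt_eq_rpow, ← rpow_sub hτ_pos]
    ring_nf
  calc _ ≤ (π / τ) ^ (p / 2) * (24 * √τ * (η ^ 2 * (n * ℓ))) := by
        gcongr
        exact h.sum_inner_mul_exp_le hv hℓ hτ hc
    _ = _ := by
        rw [hpow, div_rpow pi_pos.le hτ_pos.le]
        ring

end AdvancesAlong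

lemma integrableOn_rpow_mul_one_add_rpow_Ioi {s t : ℝ} (hs : -1 < s) (hst : s - t < -1) :
    IntegrableOn (fun u : ℝ => u ^ s * (1 + u) ^ (-t)) (Ioi 0) := by
  have hmeas : Measurable fun u : ℝ => u ^ s * (1 + u) ^ (-t) := by fun_prop
  rw [← Ioc_union_Ioi_eq_Ioi (zero_le_one' ℝ)]
  refine IntegrableOn.union ?_ ?_
  · refine Integrable.mono' ((intervalIntegrable_iff_integrableOn_Ioc_of_le zero_le_one).1
      (intervalIntegral.intervalIntegrable_rpow' hs)) hmeas.aestronglyMeasurable ?_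
    filter_upwards [ae_restrict_mem measurableSet_Ioc] with u hu
    have := hu.1
    rw [norm_of_nonneg (by positivity)]
    exact mul_le_of_le_one_right (by positivity)
      (rpow_le_one_of_one_le_of_nonpos (by linarith) (by linarith))
  · refine Integrable.mono' (integrableOn_Ioi_rpow_of_lt hst one_pos) hmeas.aestronglyMeasurable ?_
    filter_upwards [ae_restrict_mem measurableSet_Ioi] with u (hu : 1 < u)
    rw [norm_of_nonneg (by positivity), sub_eq_add_neg, rpow_add (by positivity)]
    have : (1 + u) ^ (-t) ≤ u ^ (-t) :=
      rpow_le_rpow_of_nonpos (zero_lt_one.trans hu) (by linarith) (by linarith)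
    gcongr

variable [FiniteDimensional ℝ E] [MeasurableSpace E] [BorelSpace E]

theorem exists_lintegral_rieszGaussian_mul_trigSq_le {β : ℝ} (hβ : 0 < β)
    (hβE : β < finrank ℝ E - 1) :
    ∃ C : ℝ, 0 < C ∧ ∀ {v : E}, ‖v‖ ≤ 1 → ∀ {ℓ η : ℝ}, ℓ ∈ Ioc (0 : ℝ) 1 →
      ∀ {n : ℕ} {x : Fin n → E}, AdvancesAlong v ℓ x →
      ∀ {c : Fin n → H}, (∀ m, ‖c m‖ ≤ ℓ * η) →
      ∫⁻ k : E, ENNReal.ofReal (rieszGaussian β k * trigSq c x k) ≤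
        ENNReal.ofReal (C * (η ^ 2 * (n * ℓ))) := by
  have : Nontrivial E := finrank_pos_iff (R := ℝ).1 (by
    rw [← Nat.cast_pos (α := ℝ)]
    linarith)
  set w : ℝ → ℝ := fun u => u ^ (β / 2 - 1) * (1 + u) ^ (-((finrank ℝ E - 1 : ℝ) / 2)) with hw
  have hwint : IntegrableOn w (Ioi 0) :=
    integrableOn_rpow_mul_one_add_rpow_Ioi (by linarith) (by linarith)
  have hw0 : 0 ≤ ∫ u in Ioi 0, w u :=
    setIntegral_nonneg measurableSet_Ioi fun u (hu : 0 < u) => by simp only [hw]; positivity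
  set A := 24 * π ^ ((finrank ℝ E : ℝ) / 2)
  have : 0 < Gamma (β / 2) := Gamma_pos_of_pos (by positivity)
  refine ⟨1 / Gamma (β / 2) * (A * ((∫ u in Ioi 0, w u) + 1)), by positivity, ?_⟩
  intro v hv ℓ η hℓ n x hx c hc
  have hL : 0 ≤ η ^ 2 * (n * ℓ) := by have := hℓ.1; positivity
  have hmix (u : ℝ) (hu : 0 < u) :
      u ^ (β / 2 - 1) * ((π / (1 + u)) ^ ((finrank ℝ E : ℝ) / 2) *
          ∑ m, ∑ l, ⟪c m, c l⟫ * exp (-‖x m - x l‖ ^ 2 / (4 * (1 + u)))) ≤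
        A * (η ^ 2 * (n * ℓ)) * w u := by
    calc _ ≤ u ^ (β / 2 - 1) * (A * (1 + u) ^ (-((finrank ℝ E - 1 : ℝ) / 2)) *
          (η ^ 2 * (n * ℓ))) := mul_le_mul_of_nonneg_left
          (hx.rpow_mul_sum_inner_mul_exp_le hv hℓ (by linarith) hc _) (by positivity)
      _ = _ := by ring
  rw [lintegral_rieszGaussian_mul_trigSq c x hβ, mul_assoc (1 / _),
    ENNReal.ofReal_mul (by positivity)]
  gcongr
  calc _ ≤ ∫⁻ u in Ioi (0 : ℝ), ENNReal.ofReal (A * (η ^ 2 * (n * ℓ)) * w u) :=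
        setLIntegral_mono' measurableSet_Ioi fun u hu => ENNReal.ofReal_le_ofReal (hmix u hu)
    _ = ENNReal.ofReal (∫ u in Ioi (0 : ℝ), A * (η ^ 2 * (n * ℓ)) * w u) := by
        refine (ofReal_integral_eq_lintegral_ofReal (hwint.const_mul _) ?_).symm
        filter_upwards [ae_restrict_mem measurableSet_Ioi] with u (hu : 0 < u)
        simp only [hw]
        positivity
    _ ≤ ENNReal.ofReal (A * ((∫ u in Ioi 0, w u) + 1) * (η ^ 2 * (n * ℓ))) := by
        rw [integral_const_mul, mul_right_comm]
        gcongr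
        linarith

end AdvancingPath

section PathPerturbation

open Module Real

lemma sq_sub_le_integral_sq_deriv {g g' : ℝ → ℝ} (hg : ∀ θ, HasDerivAt g (g' θ) θ)
    (hg' : Continuous g') : (g 1 - g 0) ^ 2 ≤ ∫ θ in (0 : ℝ)..1, g' θ ^ 2 := by
  have hftc : ∫ θ in (0 : ℝ)..1, g' θ = g 1 - g 0 :=
    intervalIntegral.integral_eq_sub_of_hasDerivAt (fun θ _ => hg θ) (hg'.intervalIntegrable _ _)
  set c := g 1 - g 0
  have hvar : ∫ θ in (0 : ℝ)..1, (g' θ - c) ^ 2 = (∫ θ in (0 : ℝ)..1, g' θ ^ 2) - c ^ 2 := by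
    have hexpand (θ : ℝ) : (g' θ - c) ^ 2 = g' θ ^ 2 - 2 * c * g' θ + c ^ 2 := by ring
    simp only [hexpand]
    rw [intervalIntegral.integral_add, intervalIntegral.integral_sub,
      intervalIntegral.integral_const_mul, hftc, intervalIntegral.integral_const]
    · simp only [sub_zero, one_smul]
      ring
    all_goals exact Continuous.intervalIntegrable (by fun_prop) _ _
  have := intervalIntegral.integral_nonneg (μ := volume) (zero_le_one' ℝ)
    fun θ _ => sq_nonneg (g' θ - c)
  linarith

variable {E : Type*} [NormedAddCommGroup E] [InnerProductSpace ℝ E]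

lemma sq_sum_mul_inner_le {ι : Type*} [Fintype ι] (k : E) (c w : ι → ℝ) (ξ : ι → E) :
    (∑ m, c m * (w m * ⟪k, ξ m⟫)) ^ 2 ≤ ‖k‖ ^ 2 * ‖∑ m, w m • c m • ξ m‖ ^ 2 := by
  have hinner : ∑ m, c m * (w m * ⟪k, ξ m⟫) = ⟪k, ∑ m, w m • c m • ξ m⟫ := by
    simp only [inner_sum, real_inner_smul_right, mul_left_comm]
  rw [hinner, ← mul_pow, sq_le_sq, abs_of_nonneg (mul_nonneg (norm_nonneg k) (norm_nonneg _))]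
  exact abs_real_inner_le_norm _ _

-- Differentiating `θ ↦ e^{i⟪k, x m + θ • (y m - x m)⟫}` brings down the factor `⟪k, y m - x m⟫`.
lemma trigSq_sumElim_neg_le {ι : Type*} [Fintype ι] (c : ι → ℝ) (x y : ι → E) (k : E) :
    trigSq (Sum.elim c (-c)) (Sum.elim y x) k ≤ ∫ θ in (0 : ℝ)..1, ‖k‖ ^ 2 *
      trigSq (fun m => c m • (y m - x m)) (fun m => x m + θ • (y m - x m)) k := by
  set p : ι → ℝ → ℝ := fun m θ => ⟪k, x m + θ • (y m - x m)⟫ with hp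
  have hphase (m : ι) (θ : ℝ) : HasDerivAt (p m) ⟪k, y m - x m⟫ θ := by
    simp only [hp, inner_add_right, real_inner_smul_right]
    simpa using ((hasDerivAt_id θ).mul_const ⟪k, y m - x m⟫).const_add ⟪k, x m⟫
  have hcont (m : ι) : Continuous (p m) := by fun_prop
  have hcos := sq_sub_le_integral_sq_deriv
    (fun θ => HasDerivAt.fun_sum (u := Finset.univ) fun m _ => (hphase m θ).cos.const_mul (c m))
    (by fun_prop)
  have hsin := sq_sub_le_integral_sq_deriv
    (fun θ => HasDerivAt.fun_sum (u := Finset.univ) fun m _ => (hphase m θ).sin.const_mul (c m))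
    (by fun_prop)
  have hends : trigSq (Sum.elim c (-c)) (Sum.elim y x) k =
      (∑ m, c m * cos (p m 1) - ∑ m, c m * cos (p m 0)) ^ 2 +
        (∑ m, c m * sin (p m 1) - ∑ m, c m * sin (p m 0)) ^ 2 := by
    simp only [trigSq, hp, Fintype.sum_sum_type, Sum.elim_inl, Sum.elim_inr, Pi.neg_apply,
      smul_eq_mul, mul_neg, Finset.sum_neg_distrib, ← sub_eq_add_neg, norm_eq_abs, sq_abs,
      one_smul, zero_smul, add_zero, add_sub_cancel, mul_comm (c _)]
  rw [hends]
  refine (add_le_add hcos hsin).trans ?_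
  rw [← intervalIntegral.integral_add (Continuous.intervalIntegrable (by fun_prop) _ _)
    (Continuous.intervalIntegrable (by fun_prop) _ _)]
  refine intervalIntegral.integral_mono_on zero_le_one
    (Continuous.intervalIntegrable (by fun_prop) _ _)
    (Continuous.intervalIntegrable (by unfold trigSq; fun_prop) _ _) fun θ _ => ?_
  rw [trigSq, mul_add, add_comm]
  refine add_le_add (sq_sum_mul_inner_le k c (fun m => cos (p m θ)) fun m => y m - x m) ?_
  simp only [neg_mul, mul_neg, Finset.sum_neg_distrib, neg_sq]
  exact sq_sum_mul_inner_le k c (fun m => sin (p m θ)) fun m => y m - x m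

lemma ofReal_rieszGaussian_mul_trigSq_sumElim_neg_le {ι : Type*} [Fintype ι] {β K : ℝ} (c : ι → ℝ)
    (x y : ι → E) {k : E} (hk : ‖k‖ ≤ K) :
    ENNReal.ofReal (rieszGaussian β k * trigSq (Sum.elim c (-c)) (Sum.elim y x) k) ≤
      ENNReal.ofReal (K ^ 2) * ∫⁻ θ in Ioc (0 : ℝ) 1, ENNReal.ofReal (rieszGaussian β k *
        trigSq (fun m => c m • (y m - x m)) (fun m => x m + θ • (y m - x m)) k) := by
  have hcont : Continuous fun θ : ℝ =>
      trigSq (fun m => c m • (y m - x m)) (fun m => x m + θ • (y m - x m)) k := by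
    unfold trigSq
    fun_prop
  have hw := rieszGaussian_nonneg β k
  have hint := (hcont.const_mul (rieszGaussian β k)).intervalIntegrable (μ := volume) 0 1
  have h0 : 0 ≤ ∫ θ in (0 : ℝ)..1,
      trigSq (fun m => c m • (y m - x m)) (fun m => x m + θ • (y m - x m)) k :=
    intervalIntegral.integral_nonneg zero_le_one fun θ _ => trigSq_nonneg ..
  rw [← ofReal_integral_eq_lintegral_ofReal
    ((intervalIntegrable_iff_integrableOn_Ioc_of_le zero_le_one).1 hint)
    (Eventually.of_forall fun θ => mul_nonneg hw (trigSq_nonneg ..)),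
    ← ENNReal.ofReal_mul (sq_nonneg K), ← intervalIntegral.integral_of_le zero_le_one,
    intervalIntegral.integral_const_mul, mul_left_comm]
  gcongr
  refine (trigSq_sumElim_neg_le c x y k).trans ?_
  rw [intervalIntegral.integral_const_mul]
  gcongr

variable [FiniteDimensional ℝ E] [MeasurableSpace E] [BorelSpace E]

theorem exists_setLIntegral_rieszGaussian_mul_trigSq_sumElim_neg_le {β : ℝ} (hβ : 0 < β)
    (hβE : β < finrank ℝ E - 1) {K : ℝ} (hK : 0 < K) :
    ∃ C : ℝ, 0 < C ∧ ∀ {v : E}, ‖v‖ ≤ 1 → ∀ {ℓ η : ℝ}, ℓ ∈ Ioc (0 : ℝ) 1 →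
      ∀ {n : ℕ} {x y : Fin n → E}, AdvancesAlong v ℓ x → AdvancesAlong v ℓ y →
      (∀ m, ‖y m - x m‖ ≤ η) →
      ∫⁻ k in Metric.closedBall (0 : E) K, ENNReal.ofReal (rieszGaussian β k *
          trigSq (Sum.elim (fun _ => ℓ) (-fun _ => ℓ)) (Sum.elim y x) k) ≤
        ENNReal.ofReal (C * (η ^ 2 * (n * ℓ))) := by
  obtain ⟨C, hC, hline⟩ := exists_lintegral_rieszGaussian_mul_trigSq_le (H := E) hβ hβE
  refine ⟨K ^ 2 * C, by positivity, ?_⟩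
  intro v hv ℓ η hℓ n x y hx hy hxy
  have hmeas : Measurable (Function.uncurry fun (k : E) (θ : ℝ) =>
      ENNReal.ofReal (rieszGaussian β k *
        trigSq (fun m => ℓ • (y m - x m)) (fun m => x m + θ • (y m - x m)) k)) := by
    have : Measurable fun p : E × ℝ =>
        trigSq (fun m => ℓ • (y m - x m)) (fun m => x m + p.2 • (y m - x m)) p.1 := by
      apply Continuous.measurable
      unfold trigSq
      fun_prop
    unfold Function.uncurry rieszGaussian
    fun_prop
  have hcoeff (m : Fin n) : ‖ℓ • (y m - x m)‖ ≤ ℓ * η := by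
    rw [norm_smul, norm_of_nonneg hℓ.1.le]
    exact mul_le_mul_of_nonneg_left (hxy m) hℓ.1.le
  calc _ ≤ ∫⁻ k in Metric.closedBall (0 : E) K, ENNReal.ofReal (K ^ 2) *
        ∫⁻ θ in Ioc (0 : ℝ) 1, ENNReal.ofReal (rieszGaussian β k *
          trigSq (fun m => ℓ • (y m - x m)) (fun m => x m + θ • (y m - x m)) k) :=
        setLIntegral_mono' Metric.isClosed_closedBall.measurableSet fun k hk =>
          ofReal_rieszGaussian_mul_trigSq_sumElim_neg_le _ x y (mem_closedBall_zero_iff.1 hk)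
    _ ≤ ENNReal.ofReal (K ^ 2) * ∫⁻ θ in Ioc (0 : ℝ) 1, ∫⁻ k : E, ENNReal.ofReal
          (rieszGaussian β k *
            trigSq (fun m => ℓ • (y m - x m)) (fun m => x m + θ • (y m - x m)) k) := by
        rw [← lintegral_lintegral_swap hmeas.aemeasurable,
          ← lintegral_const_mul' _ _ ENNReal.ofReal_ne_top]
        exact setLIntegral_le_lintegral _ _
    _ ≤ ENNReal.ofReal (K ^ 2) * ∫⁻ _ in Ioc (0 : ℝ) 1,
          ENNReal.ofReal (C * (η ^ 2 * (n * ℓ))) := by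
        refine mul_le_mul_right (setLIntegral_mono' measurableSet_Ioc fun θ hθ => ?_) _
        exact hline hv hℓ (hx.add_smul_sub hy (Ioc_subset_Icc_self hθ)) hcoeff
    _ = ENNReal.ofReal (K ^ 2 * C * (η ^ 2 * (n * ℓ))) := by
        rw [setLIntegral_const, volume_Ioc, sub_zero, ENNReal.ofReal_one, mul_one,
          ← ENNReal.ofReal_mul (sq_nonneg K), mul_assoc]

end PathPerturbation

/-! ### Gaussian fields with a spectral density -/

section SpectralDensity

open Module Real

variable {E : Type*} [NormedAddCommGroup E] [InnerProductSpace ℝ E] [FiniteDimensional ℝ E]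
  [MeasurableSpace E] [BorelSpace E] {w : E → ℝ}

lemma integrable_cos_inner_mul (hw : Integrable w) (x : E) :
    Integrable fun k : E => cos ⟪k, x⟫ * w k :=
  hw.bdd_mul (c := 1) (Continuous.aestronglyMeasurable (by fun_prop))
    (Eventually.of_forall fun k => by simpa using abs_cos_le_one _)

lemma integrable_trigSq_mul (hw : Integrable w) {ι : Type*} [Fintype ι] (c : ι → ℝ) (x : ι → E) :
    Integrable fun k => trigSq c x k * w k := by
  simp only [trigSq_eq_sum, Finset.sum_mul, mul_assoc]
  exact integrable_finsetSum _ fun m _ => integrable_finsetSum _ fun l _ =>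
    (integrable_cos_inner_mul hw _).const_mul _

lemma integral_trigSq_mul (hw : Integrable w) {ι : Type*} [Fintype ι] (c : ι → ℝ) (x : ι → E) :
    ∫ k, trigSq c x k * w k =
      ∑ m, ∑ l, c m * (∫ k, cos ⟪k, x m - x l⟫ * w k) * c l := by
  have hterm (m l : ι) : Integrable fun k => ⟪c m, c l⟫ * (cos ⟪k, x m - x l⟫ * w k) :=
    (integrable_cos_inner_mul hw _).const_mul _
  simp only [trigSq_eq_sum, Finset.sum_mul, mul_assoc]
  rw [integral_finsetSum _ fun m _ => integrable_finsetSum _ fun l _ => hterm m l]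
  refine Finset.sum_congr rfl fun m _ => ?_
  rw [integral_finsetSum _ fun l _ => hterm m l]
  refine Finset.sum_congr rfl fun l _ => ?_
  rw [integral_const_mul, Real.inner_apply]
  ring

/-- The nonnegative weight `w` is dominated by a multiple of the cut-off Riesz kernel and vanishes
outside a ball: at most a singularity of order `β` at the origin, and no high frequencies. -/
def RieszDominated (β A K : ℝ) (w : E → ℝ) : Prop :=
  ∀ᵐ k : E, 0 ≤ w k ∧
    w k ≤ (Metric.closedBall (0 : E) K).indicator (fun k => A * rieszGaussian β k) k

namespace RieszDominated

variable {β A K : ℝ}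

lemma lintegral_mul_le (h : RieszDominated β A K w) (hA : 0 ≤ A) {T : E → ℝ} (hT : ∀ k, 0 ≤ T k) :
    ∫⁻ k, ENNReal.ofReal (T k * w k) ≤ ENNReal.ofReal A *
      ∫⁻ k in Metric.closedBall (0 : E) K, ENNReal.ofReal (rieszGaussian β k * T k) := by
  rw [← lintegral_const_mul' _ _ ENNReal.ofReal_ne_top,
    ← lintegral_indicator Metric.isClosed_closedBall.measurableSet]
  refine lintegral_mono_ae ?_
  filter_upwards [h] with k ⟨_, hk⟩
  by_cases hkK : k ∈ Metric.closedBall (0 : E) K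
  · rw [indicator_of_mem hkK] at hk ⊢
    rw [← ENNReal.ofReal_mul hA, ← mul_assoc, mul_comm _ (T k)]
    exact ENNReal.ofReal_le_ofReal (mul_le_mul_of_nonneg_left hk (hT k))
  · rw [indicator_of_notMem hkK] at hk ⊢
    exact (ENNReal.ofReal_of_nonpos (mul_nonpos_of_nonneg_of_nonpos (hT k) hk)).le

lemma integrable (h : RieszDominated β A K w) (hA : 0 ≤ A) (hβ : 0 < β)
    (hβE : β < finrank ℝ E - 1) (hw : AEStronglyMeasurable w) : Integrable w := by
  obtain ⟨C, -, hline⟩ := exists_lintegral_rieszGaussian_mul_trigSq_le (H := ℝ) hβ hβE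
  have hfin : ∫⁻ k : E, ENNReal.ofReal (rieszGaussian β k * 1) ≤ ENNReal.ofReal C := by
    have hone := hline (norm_zero.trans_le zero_le_one) ⟨one_pos, le_rfl⟩
      (AdvancesAlong.of_fin_one fun _ => 0) (c := fun _ => 1) (η := 1) (by simp)
    simpa [trigSq] using hone
  refine ⟨hw, ?_⟩
  rw [hasFiniteIntegral_iff_norm]
  calc ∫⁻ k, ENNReal.ofReal ‖w k‖ = ∫⁻ k, ENNReal.ofReal (1 * w k) := by
        refine lintegral_congr_ae ?_
        filter_upwards [h] with k ⟨hk, _⟩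
        rw [one_mul, norm_of_nonneg hk]
    _ ≤ ENNReal.ofReal A * ENNReal.ofReal C :=
        (h.lintegral_mul_le hA fun _ => zero_le_one).trans
          (mul_le_mul_right ((setLIntegral_le_lintegral _ _).trans hfin) _)
    _ < ⊤ := ENNReal.mul_lt_top ENNReal.ofReal_lt_top ENNReal.ofReal_lt_top

lemma ofReal_integral_trigSq_mul_le (h : RieszDominated β A K w) (hA : 0 ≤ A) (hw : Integrable w)
    {ι : Type*} [Fintype ι] (c : ι → ℝ) (x : ι → E) :
    ENNReal.ofReal (∫ k, trigSq c x k * w k) ≤ ENNReal.ofReal A *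
      ∫⁻ k in Metric.closedBall (0 : E) K, ENNReal.ofReal (rieszGaussian β k * trigSq c x k) := by
  rw [ofReal_integral_eq_lintegral_ofReal (integrable_trigSq_mul hw c x)]
  · exact h.lintegral_mul_le hA (trigSq_nonneg c x)
  · filter_upwards [h] with k ⟨hk, _⟩
    exact mul_nonneg (trigSq_nonneg ..) hk

end RieszDominated

/-- The random field `f` is centered Gaussian and stationary with spectral density `w`: the variance
of `∑ m, c m * f (x m)` is the integral of `|∑ m, c m e^{i⟪k, x m⟫}|²` against `w`. -/
def HasSpectralDensity {Ω : Type*} [MeasurableSpace Ω] (f : Ω → E → ℝ) (w : E → ℝ)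
    (P : Measure Ω) : Prop :=
  ∀ {ι : Type} [Fintype ι] (c : ι → ℝ) (x : ι → E),
    P.map (fun ω => ∑ m, c m * f ω (x m)) =
      gaussianReal 0 (toNNReal (∫ k, trigSq c x k * w k))

end SpectralDensity

section Subgaussian

open Real
open scoped Nat

variable {Ω : Type*} [MeasurableSpace Ω] {P : Measure Ω} {Y : Ω → ℝ}

lemma hasSubgaussianMGF_of_map_eq_gaussianReal {q σ : ℝ}
    (hY : P.map Y = gaussianReal 0 (toNNReal q)) (hmeas : AEMeasurable Y P) (hq : q ≤ σ) :
    HasSubgaussianMGF Y (toNNReal σ) P where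
  integrable_exp_mul t := by
    have := integrable_exp_mul_gaussianReal (μ := 0) (v := toNNReal q) t
    rw [← hY] at this
    exact this.comp_aemeasurable hmeas
  mgf_le t := by
    rw [mgf_gaussianReal hY, zero_mul, zero_add]
    have : toNNReal q ≤ toNNReal σ := toNNReal_le_toNNReal hq
    gcongr

lemma abs_pow_le_factorial_mul_exp_add_exp_neg (n : ℕ) (x : ℝ) :
    |x| ^ n ≤ n ! * (exp x + exp (-x)) := by
  have h := pow_div_factorial_le_exp |x| (abs_nonneg x) n
  rw [div_le_iff₀ (by positivity), mul_comm] at h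
  exact h.trans (mul_le_mul_of_nonneg_left (exp_abs_le x) (by positivity))

lemma measure_le_abs_le_of_hasSubgaussianMGF [IsFiniteMeasure P] {q ε : ℝ} (hq : 0 ≤ q)
    (h : HasSubgaussianMGF Y (toNNReal q) P) (hε : 0 ≤ ε) :
    P {ω | ε ≤ |Y ω|} ≤ ENNReal.ofReal (2 * exp (-ε ^ 2 / (2 * q))) := by
  have htail {Z : Ω → ℝ} (hZ : HasSubgaussianMGF Z (toNNReal q) P) :
      P {ω | ε ≤ Z ω} ≤ ENNReal.ofReal (exp (-ε ^ 2 / (2 * q))) := by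
    rw [← ofReal_measureReal]
    simpa only [coe_toNNReal q hq] using ENNReal.ofReal_le_ofReal (hZ.measure_ge_le hε)
  have hsub : {ω | ε ≤ |Y ω|} ⊆ {ω | ε ≤ Y ω} ∪ {ω | ε ≤ (-Y) ω} :=
    fun ω (hω : ε ≤ |Y ω|) => le_abs.1 hω
  refine (measure_mono hsub).trans ((measure_union_le _ _).trans ?_)
  rw [two_mul, ENNReal.ofReal_add (exp_pos _).le (exp_pos _).le]
  exact add_le_add (htail h) (htail h.neg)

lemma lintegral_exp_mul_le_of_hasSubgaussianMGF {c : NNReal} (h : HasSubgaussianMGF Y c P)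
    (t : ℝ) :
    ∫⁻ ω, ENNReal.ofReal (exp (t * Y ω)) ∂P ≤ ENNReal.ofReal (exp (c * t ^ 2 / 2)) := by
  rw [← ofReal_integral_eq_lintegral_ofReal (h.integrable_exp_mul t)
    (Eventually.of_forall fun ω => (exp_pos _).le)]
  exact ENNReal.ofReal_le_ofReal (h.mgf_le t)

lemma lintegral_abs_pow_le_of_hasSubgaussianMGF {σ : ℝ} (hσ : 0 < σ)
    (h : HasSubgaussianMGF Y (toNNReal (σ ^ 2)) P) (n : ℕ) :
    ∫⁻ ω, ENNReal.ofReal (|Y ω| ^ n) ∂P ≤ ENNReal.ofReal (2 * n ! * exp 1 * σ ^ n) := by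
  have hpt (ω : Ω) : ENNReal.ofReal (|Y ω| ^ n) ≤ ENNReal.ofReal (σ ^ n * n !) *
      (ENNReal.ofReal (exp (σ⁻¹ * Y ω)) + ENNReal.ofReal (exp (-σ⁻¹ * Y ω))) := by
    rw [← ENNReal.ofReal_add (exp_pos _).le (exp_pos _).le, ← ENNReal.ofReal_mul (by positivity)]
    refine ENNReal.ofReal_le_ofReal ?_
    calc |Y ω| ^ n = σ ^ n * |σ⁻¹ * Y ω| ^ n := by
          rw [abs_mul, abs_of_pos (inv_pos.2 hσ), ← mul_pow, mul_inv_cancel_left₀ hσ.ne']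
      _ ≤ σ ^ n * (n ! * (exp (σ⁻¹ * Y ω) + exp (-(σ⁻¹ * Y ω)))) := by
          gcongr
          exact abs_pow_le_factorial_mul_exp_add_exp_neg n _
      _ = _ := by rw [mul_assoc, neg_mul]
  have hexp (t : ℝ) (ht : t ^ 2 = (σ ^ 2)⁻¹) :
      ∫⁻ ω, ENNReal.ofReal (exp (t * Y ω)) ∂P ≤ ENNReal.ofReal (exp 1) := by
    refine (lintegral_exp_mul_le_of_hasSubgaussianMGF h t).trans (ENNReal.ofReal_le_ofReal ?_)
    rw [coe_toNNReal _ (sq_nonneg σ), ht, mul_inv_cancel₀ (by positivity), exp_le_exp]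
    norm_num
  calc _ ≤ ENNReal.ofReal (σ ^ n * n !) * (∫⁻ ω, ENNReal.ofReal (exp (σ⁻¹ * Y ω)) ∂P +
        ∫⁻ ω, ENNReal.ofReal (exp (-σ⁻¹ * Y ω)) ∂P) := by
        rw [← lintegral_add_left' (h.aemeasurable.const_mul _).exp.ennreal_ofReal,
          ← lintegral_const_mul' _ _ ENNReal.ofReal_ne_top]
        exact lintegral_mono hpt
    _ ≤ ENNReal.ofReal (σ ^ n * n !) * (ENNReal.ofReal (exp 1) + ENNReal.ofReal (exp 1)) := by
        gcongr
        · exact hexp _ (inv_pow _ _)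
        · exact hexp _ (by rw [neg_sq, inv_pow])
    _ = ENNReal.ofReal (2 * n ! * exp 1 * σ ^ n) := by
        rw [← ENNReal.ofReal_add (exp_pos _).le (exp_pos _).le,
          ← ENNReal.ofReal_mul (by positivity)]
        ring_nf

end Subgaussian

section IsLineSubgaussian

open Module Real
open scoped Nat

variable {E : Type*} [NormedAddCommGroup E] [InnerProductSpace ℝ E]
  {Ω : Type*} [MeasurableSpace Ω]

/-- The Riemann sums with mesh `ℓ` of the random field `f` along paths advancing in direction `v`
are subgaussian with variance proxy `C²` times the length of the path, and their changes under a
perturbation of the path of size `η` are subgaussian with variance proxy `η²` times that. -/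
structure IsLineSubgaussian (v : E) (C : ℝ) (f : Ω → E → ℝ) (P : Measure Ω) : Prop where
  measurable (x : E) : Measurable fun ω => f ω x
  sum {ℓ : ℝ} {n : ℕ} {x : Fin n → E} : ℓ ∈ Ioc (0 : ℝ) 1 → AdvancesAlong v ℓ x →
    HasSubgaussianMGF (fun ω => ∑ m, ℓ * f ω (x m)) (toNNReal (C ^ 2 * (n * ℓ))) P
  sum_sub {ℓ η : ℝ} {n : ℕ} {x y : Fin n → E} : ℓ ∈ Ioc (0 : ℝ) 1 → AdvancesAlong v ℓ x →
    AdvancesAlong v ℓ y → (∀ m, ‖y m - x m‖ ≤ η) →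
    HasSubgaussianMGF (fun ω => ∑ m, ℓ * (f ω (y m) - f ω (x m)))
      (toNNReal (C ^ 2 * (η ^ 2 * (n * ℓ)))) P

namespace IsLineSubgaussian

variable {v : E} {C : ℝ} {f : Ω → E → ℝ} {P : Measure Ω}

lemma lintegral_abs_pow_le (h : IsLineSubgaussian v C f P) (hC : 0 < C) (x : E) (n : ℕ) :
    ∫⁻ ω, ENNReal.ofReal (|f ω x| ^ n) ∂P ≤ ENNReal.ofReal (2 * n ! * exp 1 * C ^ n) := by
  have hx := h.sum ⟨one_pos, le_rfl⟩ (AdvancesAlong.of_fin_one fun _ => x)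
  simp only [Fin.sum_univ_one, one_mul, Nat.cast_one, mul_one] at hx
  exact lintegral_abs_pow_le_of_hasSubgaussianMGF hC hx n

lemma lintegral_abs_sub_pow_le (h : IsLineSubgaussian v C f P) (hC : 0 < C) (x y : E) {n : ℕ}
    (hn : n ≠ 0) : ∫⁻ ω, ENNReal.ofReal (|f ω y - f ω x| ^ n) ∂P ≤
      ENNReal.ofReal (2 * n ! * exp 1 * (C * ‖y - x‖) ^ n) := by
  rcases eq_or_ne y x with rfl | hne
  · simp [hn]
  have hyx := h.sum_sub ⟨one_pos, le_rfl⟩ (AdvancesAlong.of_fin_one fun _ => x)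
    (AdvancesAlong.of_fin_one fun _ => y) fun _ => le_rfl
  simp only [Fin.sum_univ_one, one_mul, Nat.cast_one, mul_one, ← mul_pow] at hyx
  exact lintegral_abs_pow_le_of_hasSubgaussianMGF
    (mul_pos hC (norm_pos_iff.2 (sub_ne_zero.2 hne))) hyx n

end IsLineSubgaussian

variable [FiniteDimensional ℝ E] [MeasurableSpace E] [BorelSpace E]

theorem exists_isLineSubgaussian_of_rieszDominated {β A K : ℝ} (hβ : 0 < β)
    (hβE : β < finrank ℝ E - 1) (hA : 0 < A) (hK : 0 < K) (P : Measure Ω) :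
    ∃ C : ℝ, 0 < C ∧ ∀ {v : E} {w : E → ℝ} {f : Ω → E → ℝ}, ‖v‖ ≤ 1 → RieszDominated β A K w →
      Measurable w → (∀ x, Measurable fun ω => f ω x) → HasSpectralDensity f w P →
      IsLineSubgaussian v C f P := by
  obtain ⟨C₁, hC₁, hline⟩ := exists_lintegral_rieszGaussian_mul_trigSq_le (E := E) (H := ℝ) hβ hβE
  obtain ⟨C₂, hC₂, hdiff⟩ :=
    exists_setLIntegral_rieszGaussian_mul_trigSq_sumElim_neg_le (E := E) hβ hβE hK
  refine ⟨√(A * (C₁ + C₂)), by positivity, fun {v w f} hv hdom hw hf hspec => ?_⟩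
  have hwint := hdom.integrable hA.le hβ hβE hw.aestronglyMeasurable
  have hvar {ι : Type} [Fintype ι] {c : ι → ℝ} {x : ι → E} {B L : ℝ} (hB : B ≤ C₁ + C₂)
      (hL : 0 ≤ L) (henergy : ∫⁻ k in Metric.closedBall (0 : E) K,
        ENNReal.ofReal (rieszGaussian β k * trigSq c x k) ≤ ENNReal.ofReal (B * L)) :
      ∫ k, trigSq c x k * w k ≤ √(A * (C₁ + C₂)) ^ 2 * L := by
    have hle := (hdom.ofReal_integral_trigSq_mul_le hA.le hwint c x).trans
      (mul_le_mul_right (henergy.trans (ENNReal.ofReal_le_ofReal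
        (mul_le_mul_of_nonneg_right hB hL))) _)
    rwa [← ENNReal.ofReal_mul hA.le, ← mul_assoc, ENNReal.ofReal_le_ofReal_iff (by positivity),
      ← sq_sqrt (by positivity : 0 ≤ A * (C₁ + C₂))] at hle
  refine ⟨hf, ?_, ?_⟩
  · intro ℓ n x hℓ hx
    have hℓ0 := hℓ.1
    refine hasSubgaussianMGF_of_map_eq_gaussianReal (hspec (fun _ => ℓ) x) (by fun_prop)
      (hvar (by linarith : C₁ ≤ _) (by positivity) ?_)
    refine (setLIntegral_le_lintegral _ _).trans ?_
    simpa only [one_pow, one_mul] using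
      hline hv hℓ hx (c := fun _ => ℓ) (η := 1) (by simp [abs_of_pos hℓ0])
  · intro ℓ η n x y hℓ hx hy hxy
    have hℓ0 := hℓ.1
    have := hasSubgaussianMGF_of_map_eq_gaussianReal
      (hspec (Sum.elim (fun _ => ℓ) (-fun _ => ℓ)) (Sum.elim y x)) (by fun_prop)
      (hvar (by linarith : C₂ ≤ _) (by positivity) (hdiff hv hℓ hx hy hxy))
    simpa only [Fintype.sum_sum_type, Sum.elim_inl, Sum.elim_inr, Pi.neg_apply, neg_mul,
      Finset.sum_neg_distrib, ← sub_eq_add_neg, ← Finset.sum_sub_distrib, ← mul_sub] using this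

end IsLineSubgaussian

section SpectralWeight

open Module Real

variable {d : ℕ} {α : ℝ} {a : ℝ → ℝ}

/-- The spectral density `R̂ᵢᵢ` of the `i`-th component of the field. -/
noncomputable def spectralWeight (d : ℕ) (α : ℝ) (a : ℝ → ℝ) (i : Fin d)
    (k : EuclideanSpace ℝ (Fin d)) : ℝ :=
  a ‖k‖ * ‖k‖ ^ (-(2 * α + (d : ℝ) - 2)) * (1 - k i * k i / ‖k‖ ^ 2)

lemma measurable_spectralWeight (ha : Measurable a) (i : Fin d) :
    Measurable (spectralWeight d α a i) := by
  unfold spectralWeight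
  fun_prop

lemma covEntry_self (x : EuclideanSpace ℝ (Fin d)) (i : Fin d) :
    covEntry d α a x i i = ∫ k, cos ⟪k, x⟫ * spectralWeight d α a i k := by
  simp [covEntry, spectralWeight]

lemma one_sub_mul_self_div_norm_sq_mem_Icc (k : EuclideanSpace ℝ (Fin d)) (i : Fin d) :
    1 - k i * k i / ‖k‖ ^ 2 ∈ Icc (0 : ℝ) 1 := by
  have hki : k i * k i ≤ ‖k‖ ^ 2 := by
    rw [← sq, ← sq_abs]
    exact pow_le_pow_left₀ (abs_nonneg _) (PiLp.norm_apply_le k i) 2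
  have := div_le_one_of_le₀ hki (sq_nonneg _)
  have : 0 ≤ k i * k i / ‖k‖ ^ 2 := div_nonneg (mul_self_nonneg _) (sq_nonneg _)
  constructor <;> linarith

-- The exponent is raised to `(d - 1) / 2` if necessary, so as to be positive.
lemma exists_rieszDominated_spectralWeight (hd : 2 ≤ d) (hα : α < 1 / 2) {K : ℝ} (hK : 0 < K)
    (ha_nonneg : ∀ r, 0 ≤ r → 0 ≤ a r) (ha_bdd : ∃ M, ∀ r, 0 ≤ r → a r ≤ M)
    (ha_supp : ∀ r, K < r → a r = 0) :
    ∃ A β : ℝ, 0 < A ∧ 0 < β ∧ β < d - 1 ∧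
      ∀ i, RieszDominated β A K (spectralWeight d α a i) := by
  obtain ⟨M, hM⟩ := ha_bdd
  have hd' : (2 : ℝ) ≤ d := by exact_mod_cast hd
  have : Nontrivial (EuclideanSpace ℝ (Fin d)) :=
    finrank_pos_iff (R := ℝ).1 (by rw [finrank_euclideanSpace_fin]; omega)
  set β₀ := 2 * α + (d : ℝ) - 2 with hβ₀
  set β := max β₀ ((d - 1) / 2)
  have hM0 : 0 ≤ M := (ha_nonneg 0 le_rfl).trans (hM 0 le_rfl)
  refine ⟨(M + 1) * K ^ (β - β₀) * exp (K ^ 2), β, by positivity,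
    lt_max_of_lt_right (by linarith), max_lt (by linarith) (by linarith), fun i => ?_⟩
  filter_upwards [Measure.ae_ne volume 0] with k hk
  have hk0 : 0 < ‖k‖ := norm_pos_iff.2 hk
  obtain ⟨hproj0, hproj1⟩ := one_sub_mul_self_div_norm_sq_mem_Icc k i
  have ha0 := ha_nonneg ‖k‖ hk0.le
  refine ⟨by unfold spectralWeight; positivity, ?_⟩
  by_cases hkK : ‖k‖ ≤ K
  · rw [indicator_of_mem (mem_closedBall_zero_iff.2 hkK), spectralWeight, rieszGaussian, ← hβ₀]
    have hsplit : ‖k‖ ^ (-β₀) = ‖k‖ ^ (-β) * ‖k‖ ^ (β - β₀) := by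
      rw [← rpow_add hk0]
      ring_nf
    have hβle : β₀ ≤ β := le_max_left _ _
    have hexp : 1 ≤ exp (K ^ 2) * exp (-‖k‖ ^ 2) := by
      rw [← exp_add]
      exact one_le_exp (by nlinarith)
    calc a ‖k‖ * ‖k‖ ^ (-β₀) * (1 - k i * k i / ‖k‖ ^ 2)
        ≤ (M + 1) * (‖k‖ ^ (-β) * K ^ (β - β₀)) * 1 := by
          rw [hsplit]
          gcongr
          exact (hM _ hk0.le).trans (by linarith)
      _ ≤ (M + 1) * (‖k‖ ^ (-β) * K ^ (β - β₀)) * (exp (K ^ 2) * exp (-‖k‖ ^ 2)) := by gcongr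
      _ = _ := by ring
  · rw [indicator_of_notMem (mt mem_closedBall_zero_iff.1 hkK), spectralWeight,
      ha_supp _ (not_le.1 hkK), zero_mul, zero_mul]

variable {Ω : Type*} [MeasurableSpace Ω] {P : Measure Ω}
  {F : Ω → EuclideanSpace ℝ (Fin d) → EuclideanSpace ℝ (Fin d)}

lemma hasSpectralDensity_apply
    (hF_gauss : ∀ (N : ℕ) (x c : Fin N → EuclideanSpace ℝ (Fin d)),
      Measure.map (fun ω => ∑ j : Fin N, ⟪c j, F ω (x j)⟫) P =
        gaussianReal 0 (toNNReal (∑ j : Fin N, ∑ l : Fin N, ∑ i : Fin d, ∑ i' : Fin d,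
          c j i * covEntry d α a (x j - x l) i i' * c l i')))
    {i : Fin d} (hw : Integrable (spectralWeight d α a i)) :
    HasSpectralDensity (fun ω x => F ω x i) (spectralWeight d α a i) P := by
  intro ι _ c x
  have e := Fintype.equivFin ι
  have hcomp (ω : Ω) : ∑ m, c m * F ω (x m) i = ∑ j : Fin (Fintype.card ι),
      ⟪(EuclideanSpace.single i (c (e.symm j)) : EuclideanSpace ℝ (Fin d)),
        F ω (x (e.symm j))⟫ := by
    rw [← e.symm.sum_comp]
    simp [EuclideanSpace.inner_single_left]
  simp only [hcomp]
  rw [hF_gauss, integral_trigSq_mul hw, ← e.symm.sum_comp]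
  congr 2
  refine Finset.sum_congr rfl fun j _ => ?_
  rw [← e.symm.sum_comp]
  refine Finset.sum_congr rfl fun l _ => ?_
  rw [Finset.sum_eq_single i (by simp +contextual) (by simp),
    Finset.sum_eq_single i (by simp +contextual) (by simp), ← covEntry_self]
  simp

theorem exists_isLineSubgaussian_apply (hd : 2 ≤ d) (hα : α < 1 / 2) {K : ℝ} (hK : 0 < K)
    (ha_nonneg : ∀ r, 0 ≤ r → 0 ≤ a r) (ha_bdd : ∃ M, ∀ r, 0 ≤ r → a r ≤ M)
    (ha_meas : Measurable a) (ha_supp : ∀ r, K < r → a r = 0)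
    {v : EuclideanSpace ℝ (Fin d)} (hv : ‖v‖ ≤ 1) (hF_meas : Measurable (Function.uncurry F))
    (hF_gauss : ∀ (N : ℕ) (x c : Fin N → EuclideanSpace ℝ (Fin d)),
      Measure.map (fun ω => ∑ j : Fin N, ⟪c j, F ω (x j)⟫) P =
        gaussianReal 0 (toNNReal (∑ j : Fin N, ∑ l : Fin N, ∑ i : Fin d, ∑ i' : Fin d,
          c j i * covEntry d α a (x j - x l) i i' * c l i'))) :
    ∃ C : ℝ, 0 < C ∧ ∀ i, IsLineSubgaussian v C (fun ω x => F ω x i) P := by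
  obtain ⟨A, β, hA, hβ, hβd, hdom⟩ :=
    exists_rieszDominated_spectralWeight hd hα hK ha_nonneg ha_bdd ha_supp
  rw [← finrank_euclideanSpace_fin (𝕜 := ℝ) (n := d)] at hβd
  obtain ⟨C, hC, hsub⟩ := exists_isLineSubgaussian_of_rieszDominated hβ hβd hA hK P
  refine ⟨C, hC, fun i => ?_⟩
  have hmeas := measurable_spectralWeight (α := α) ha_meas i
  refine hsub hv (hdom i) hmeas (fun x => ?_) (hasSpectralDensity_apply hF_gauss
    ((hdom i).integrable hA.le hβ hβd hmeas.aestronglyMeasurable))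
  have hFx : Measurable fun ω => F ω x := hF_meas.comp (measurable_id.prodMk measurable_const)
  fun_prop

end SpectralWeight

/-! ### Chaining and random envelopes -/

section Chaining

open Real

variable {d : ℕ} {H : Type*} [NormedAddCommGroup H] {N : ℝ} {f : EuclideanSpace ℝ (Fin d) → H}

/-- `f` grows at most like the square root of the distance to the origin and is locally Hölder
continuous with exponent `1/2`, all with the constant `N`; the modulus of continuity is stated at
dyadic distances only. -/
structure HasEnvelope (N : ℝ) (f : EuclideanSpace ℝ (Fin d) → H) : Prop where
  norm_le (x : EuclideanSpace ℝ (Fin d)) : ‖f x‖ ≤ N * √(1 + d + ‖x‖)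
  norm_sub_le (k : ℕ) (x y : EuclideanSpace ℝ (Fin d)) : ‖x - y‖ ≤ 1 / 2 ^ k →
    ‖f x - f y‖ ≤ N * √(1 / 2) ^ k * √(1 + d + ‖x‖)

/-- The point `u / 2ᵏ` of the dyadic lattice of mesh `2⁻ᵏ`. -/
noncomputable def dyadicPoint (k : ℕ) (u : Fin d → ℤ) : EuclideanSpace ℝ (Fin d) :=
  WithLp.toLp 2 fun j => (u j : ℝ) / 2 ^ k

/-- The index in the dyadic lattice of mesh `2⁻ᵏ` of the lower corner of the cube containing
`x`. -/
noncomputable def dyadicFloor (k : ℕ) (x : EuclideanSpace ℝ (Fin d)) : Fin d → ℤ :=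
  fun j => ⌊2 ^ k * x j⌋

/-- The values of `f` on the dyadic lattices obey the bounds from which chaining produces an
envelope. -/
structure HasDyadicEnvelope (N : ℝ) (f : EuclideanSpace ℝ (Fin d) → H) : Prop where
  norm_le (u : Fin d → ℤ) : ‖f (dyadicPoint 0 u)‖ ≤ N * √(1 + ‖dyadicPoint 0 u‖)
  norm_sub_le (k : ℕ) (u u' : Fin d → ℤ) : (∀ j, |u' j - u j| ≤ 1) →
    ‖f (dyadicPoint k u') - f (dyadicPoint k u)‖ ≤ N * √(1 / 2) ^ k * √(1 + ‖dyadicPoint k u‖)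

lemma norm_le_sum_abs_apply (y : EuclideanSpace ℝ (Fin d)) : ‖y‖ ≤ ∑ j, |y j| := by
  rw [EuclideanSpace.norm_eq, sqrt_le_left (Finset.sum_nonneg fun j _ => abs_nonneg _)]
  simpa only [norm_eq_abs] using Finset.sum_sq_le_sq_sum_of_nonneg fun j _ => abs_nonneg (y j)

lemma norm_le_card_mul {y : EuclideanSpace ℝ (Fin d)} {ε : ℝ} (h : ∀ j, |y j| ≤ ε) :
    ‖y‖ ≤ d * ε := by
  simpa using (norm_le_sum_abs_apply y).trans (Finset.sum_le_sum fun j _ => h j)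

lemma norm_dyadicPoint_sub_le {k : ℕ} {u u' : Fin d → ℤ} (h : ∀ j, |u' j - u j| ≤ 1) :
    ‖dyadicPoint k u' - dyadicPoint k u‖ ≤ d * (1 / 2 ^ k) := by
  refine norm_le_card_mul fun j => ?_
  have hj : |((u' j - u j : ℤ) : ℝ)| ≤ 1 := by exact_mod_cast h j
  have heq : (dyadicPoint k u' - dyadicPoint k u) j = ((u' j - u j : ℤ) : ℝ) / 2 ^ k := by
    simp [dyadicPoint, sub_div]
  rw [heq, abs_div, abs_of_pos (by positivity : (0 : ℝ) < 2 ^ k)]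
  gcongr

lemma norm_dyadicPoint_dyadicFloor_sub_le (k : ℕ) (x : EuclideanSpace ℝ (Fin d)) :
    ‖dyadicPoint k (dyadicFloor k x) - x‖ ≤ d * (1 / 2 ^ k) := by
  refine norm_le_card_mul fun j => ?_
  have hp : (0 : ℝ) < 2 ^ k := by positivity
  have heq : (dyadicPoint k (dyadicFloor k x) - x) j = -Int.fract (2 ^ k * x j) / 2 ^ k := by
    simp only [dyadicPoint, dyadicFloor, PiLp.sub_apply, Int.fract]
    field_simp
    ring
  rw [heq, abs_div, abs_neg, abs_of_pos hp, abs_of_nonneg (Int.fract_nonneg _)]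
  gcongr
  exact (Int.fract_lt_one _).le

lemma norm_dyadicPoint_dyadicFloor_le (k : ℕ) (x : EuclideanSpace ℝ (Fin d)) :
    ‖dyadicPoint k (dyadicFloor k x)‖ ≤ d + ‖x‖ := by
  have hk : (d : ℝ) * (1 / 2 ^ k) ≤ d * 1 := by
    gcongr
    exact div_le_one_of_le₀ (one_le_pow₀ one_le_two) (by positivity)
  linarith [norm_le_norm_sub_add (dyadicPoint k (dyadicFloor k x)) x,
    norm_dyadicPoint_dyadicFloor_sub_le k x]

lemma tendsto_dyadicPoint_dyadicFloor (x : EuclideanSpace ℝ (Fin d)) :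
    Tendsto (fun k => dyadicPoint k (dyadicFloor k x)) atTop (nhds x) := by
  rw [tendsto_iff_norm_sub_tendsto_zero]
  refine squeeze_zero (fun _ => norm_nonneg _)
    (fun k => norm_dyadicPoint_dyadicFloor_sub_le k x) ?_
  simpa using (tendsto_pow_atTop_nhds_zero_of_lt_one (r := (1 / 2 : ℝ)) (by norm_num)
    (by norm_num)).const_mul (d : ℝ)

lemma dyadicPoint_eq_succ (k : ℕ) (u : Fin d → ℤ) :
    dyadicPoint k u = dyadicPoint (k + 1) fun j => 2 * u j := by
  ext j
  simp only [dyadicPoint, pow_succ]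
  push_cast
  field_simp

lemma abs_dyadicFloor_succ_sub_le (k : ℕ) (x : EuclideanSpace ℝ (Fin d)) (j : Fin d) :
    |dyadicFloor (k + 1) x j - 2 * dyadicFloor k x j| ≤ 1 := by
  have hk : 2 ^ (k + 1) * x j = 2 * (2 ^ k * x j) := by ring
  have hle : 2 * ⌊2 ^ k * x j⌋ ≤ ⌊2 ^ (k + 1) * x j⌋ := by
    rw [Int.le_floor, hk]
    push_cast
    linarith [Int.floor_le (2 ^ k * x j)]
  have hlt : ⌊2 ^ (k + 1) * x j⌋ < 2 * ⌊2 ^ k * x j⌋ + 2 := by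
    rw [Int.floor_lt, hk]
    push_cast
    linarith [Int.lt_floor_add_one (2 ^ k * x j)]
  simp only [dyadicFloor, abs_le]
  omega

lemma abs_dyadicFloor_sub_le {k : ℕ} {x y : EuclideanSpace ℝ (Fin d)}
    (h : ‖x - y‖ ≤ 1 / 2 ^ k) (j : Fin d) : |dyadicFloor k y j - dyadicFloor k x j| ≤ 1 := by
  have hxy : |x j - y j| * 2 ^ k ≤ 1 :=
    (le_div_iff₀ (by positivity)).1 ((PiLp.norm_apply_le (x - y) j).trans h)
  have hscaled : |2 ^ k * x j - 2 ^ k * y j| ≤ 1 := by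
    rwa [← mul_sub, abs_mul, abs_of_pos (by positivity), mul_comm]
  obtain ⟨hlower, hupper⟩ := abs_le.1 hscaled
  have hfloor {s t : ℝ} (hst : s ≤ t + 1) : ⌊s⌋ ≤ ⌊t⌋ + 1 := by
    rw [← Int.floor_add_one]
    exact Int.floor_mono hst
  have hx := hfloor (by linarith : 2 ^ k * x j ≤ 2 ^ k * y j + 1)
  have hy := hfloor (by linarith : 2 ^ k * y j ≤ 2 ^ k * x j + 1)
  simp only [dyadicFloor, abs_le]
  omega

namespace HasDyadicEnvelope

lemma norm_sub_succ_le (h : HasDyadicEnvelope N f) (hN : 0 ≤ N) (k : ℕ)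
    (x : EuclideanSpace ℝ (Fin d)) :
    ‖f (dyadicPoint (k + 1) (dyadicFloor (k + 1) x)) - f (dyadicPoint k (dyadicFloor k x))‖ ≤
      N * √(1 / 2) ^ (k + 1) * √(1 + d + ‖x‖) := by
  have hstep := h.norm_sub_le (k + 1) (fun j => 2 * dyadicFloor k x j) (dyadicFloor (k + 1) x)
    (abs_dyadicFloor_succ_sub_le k x)
  rw [← dyadicPoint_eq_succ] at hstep
  exact hstep.trans (mul_le_mul_of_nonneg_left
    (sqrt_le_sqrt (by linarith [norm_dyadicPoint_dyadicFloor_le k x])) (by positivity))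

lemma norm_sub_dyadicFloor_le (h : HasDyadicEnvelope N f) (hN : 0 ≤ N) (hf : Continuous f) (k : ℕ)
    (x : EuclideanSpace ℝ (Fin d)) :
    ‖f x - f (dyadicPoint k (dyadicFloor k x))‖ ≤ 3 * N * √(1 / 2) ^ k * √(1 + d + ‖x‖) := by
  have hq : √(1 / 2) < 3 / 4 := (sqrt_lt' (by norm_num)).2 (by norm_num)
  have hlim := (((hf.tendsto x).comp (tendsto_dyadicPoint_dyadicFloor x)).sub_const
    (f (dyadicPoint k (dyadicFloor k x)))).norm
  refine le_of_tendsto hlim ((eventually_ge_atTop k).mono fun n hn => ?_)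
  have htel : ‖f (dyadicPoint n (dyadicFloor n x)) - f (dyadicPoint k (dyadicFloor k x))‖ ≤
      3 * N * √(1 + d + ‖x‖) * (√(1 / 2) ^ k - √(1 / 2) ^ n) := by
    induction n, hn using Nat.le_induction with
    | base => simp
    | succ n _ ih =>
      have hgeom : 0 ≤ N * √(1 + d + ‖x‖) * √(1 / 2) ^ n * (3 - 4 * √(1 / 2)) :=
        mul_nonneg (by positivity) (by linarith)
      have hstep := h.norm_sub_succ_le hN n x
      rw [pow_succ] at hstep ⊢
      linarith [norm_sub_le_norm_sub_add_norm_sub (f (dyadicPoint (n + 1) (dyadicFloor (n + 1) x)))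
        (f (dyadicPoint n (dyadicFloor n x))) (f (dyadicPoint k (dyadicFloor k x)))]
  have hn0 : 0 ≤ 3 * N * √(1 + d + ‖x‖) * √(1 / 2) ^ n := by positivity
  simp only [Function.comp_apply]
  linarith

lemma hasEnvelope (h : HasDyadicEnvelope N f) (hN : 0 ≤ N) (hf : Continuous f) :
    HasEnvelope (10 * N) f := by
  have hchain := h.norm_sub_dyadicFloor_le hN hf
  have hroot (k : ℕ) (x : EuclideanSpace ℝ (Fin d)) :
      √(1 + ‖dyadicPoint k (dyadicFloor k x)‖) ≤ √(1 + d + ‖x‖) :=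
    sqrt_le_sqrt (by linarith [norm_dyadicPoint_dyadicFloor_le k x])
  constructor
  · intro x
    have hcorner := (h.norm_le (dyadicFloor 0 x)).trans
      (mul_le_mul_of_nonneg_left (hroot 0 x) hN)
    have hx := hchain 0 x
    have h0 : 0 ≤ N * √(1 + d + ‖x‖) := by positivity
    simp only [pow_zero, mul_one] at hx
    linarith [norm_le_norm_sub_add (f x) (f (dyadicPoint 0 (dyadicFloor 0 x)))]
  · intro k x y hxy
    have hk : (1 : ℝ) / 2 ^ k ≤ 1 :=
      div_le_one_of_le₀ (one_le_pow₀ one_le_two) (by positivity)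
    have hrooty : √(1 + d + ‖y‖) ≤ 2 * √(1 + d + ‖x‖) := by
      rw [sqrt_le_left (by positivity), mul_pow, sq_sqrt (by positivity)]
      linarith [norm_sub_norm_le y x, norm_sub_rev x y, norm_nonneg x,
        (Nat.cast_nonneg d : (0 : ℝ) ≤ d)]
    have hx := hchain k x
    have hy := (hchain k y).trans (mul_le_mul_of_nonneg_left hrooty (by positivity))
    have hcorners := (h.norm_sub_le k _ _ (abs_dyadicFloor_sub_le hxy)).trans
      (mul_le_mul_of_nonneg_left (hroot k x) (by positivity))
    rw [norm_sub_rev] at hy hcorners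
    linarith [norm_sub_le_norm_sub_add_norm_sub (f x) (f (dyadicPoint k (dyadicFloor k x))) (f y),
      norm_sub_le_norm_sub_add_norm_sub (f (dyadicPoint k (dyadicFloor k x)))
        (f (dyadicPoint k (dyadicFloor k y))) (f y)]

end HasDyadicEnvelope

lemma hasEnvelope_sum {n : ℕ} {M : Fin n → ℝ}
    {f : EuclideanSpace ℝ (Fin d) → EuclideanSpace ℝ (Fin n)}
    (h : ∀ i, HasEnvelope (M i) fun x => f x i) : HasEnvelope (∑ i, M i) f where
  norm_le x := by
    rw [Finset.sum_mul]
    exact (norm_le_sum_abs_apply _).trans (Finset.sum_le_sum fun i _ => (h i).norm_le x)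
  norm_sub_le k x y hxy := by
    rw [mul_assoc, Finset.sum_mul]
    refine (norm_le_sum_abs_apply _).trans (Finset.sum_le_sum fun i _ => ?_)
    rw [← mul_assoc]
    exact (h i).norm_sub_le k x y hxy

end Chaining

section LatticeWeight

open Real

variable {d : ℕ}

/-- A summable weight on the lattice `ℤᵈ` with polynomial decay. -/
noncomputable def latticeWeight (u : Fin d → ℤ) : ℝ := ∏ j, ((1 + |(u j : ℝ)|) ^ 2)⁻¹

lemma latticeWeight_pos (u : Fin d → ℤ) : 0 < latticeWeight u :=
  Finset.prod_pos fun _ _ => by positivity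

lemma summable_inv_one_add_abs_int_sq : Summable fun n : ℤ => ((1 + |(n : ℝ)|) ^ 2)⁻¹ := by
  have hnat : Summable fun n : ℕ => ((1 + (n : ℝ)) ^ 2)⁻¹ := by
    simpa [add_comm] using (summable_nat_add_iff 1).2 (summable_nat_pow_inv.2 one_lt_two)
  exact Summable.of_nat_of_neg (by simpa using hnat) (by simpa using hnat)

lemma summable_latticeWeight : Summable (latticeWeight (d := d)) := by
  refine summable_of_sum_le (c := ∏ _j : Fin d, ∑' n : ℤ, ((1 + |(n : ℝ)|) ^ 2)⁻¹)
    (fun u => (latticeWeight_pos u).le) fun s => ?_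
  have hbox : s ⊆ Fintype.piFinset fun j : Fin d => s.image fun u => u j := fun u hu =>
    Fintype.mem_piFinset.2 fun _ => Finset.mem_image_of_mem _ hu
  refine (Finset.sum_le_sum_of_subset_of_nonneg hbox
    fun u _ _ => (latticeWeight_pos u).le).trans ?_
  unfold latticeWeight
  rw [← Finset.prod_univ_sum (fun j : Fin d => s.image fun u => u j)
    (fun _ (n : ℤ) => ((1 + |(n : ℝ)|) ^ 2)⁻¹)]
  exact Finset.prod_le_prod (fun j _ => Finset.sum_nonneg fun n _ => by positivity)
    fun j _ => summable_inv_one_add_abs_int_sq.sum_le_tsum _ fun n _ => by positivity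

lemma summable_two_pow_mul_latticeWeight_mul (ι : Type*) [Finite ι] {c : ℝ} (hc : 0 ≤ c) :
    Summable fun i : ℕ × (Fin d → ℤ) × ι =>
      2 ^ (i.1 * (4 * d + 1)) * latticeWeight i.2.1 * (c * (1 / 2 ^ i.1) ^ (4 * d + 2)) := by
  have hprod := summable_geometric_two.mul_of_nonneg
    ((summable_latticeWeight (d := d)).mul_of_nonneg (Summable.of_finite (f := fun _ : ι => c))
      (fun u => (latticeWeight_pos u).le) fun _ => hc)
    (fun _ => by positivity) (fun i => mul_nonneg (latticeWeight_pos i.1).le hc)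
  refine hprod.congr fun ⟨k, u, e⟩ => ?_
  simp only [one_div, inv_pow]
  rw [pow_succ _ (4 * d + 1), ← pow_mul]
  field_simp

lemma one_le_latticeWeight_mul (k : ℕ) (u : Fin d → ℤ) :
    1 ≤ latticeWeight u * (2 ^ k * (1 + ‖dyadicPoint k u‖)) ^ (2 * d) := by
  have hj (j : Fin d) : 1 + |(u j : ℝ)| ≤ 2 ^ k * (1 + ‖dyadicPoint k u‖) := by
    have hcoord : |(u j : ℝ) / 2 ^ k| ≤ ‖dyadicPoint k u‖ := PiLp.norm_apply_le (dyadicPoint k u) j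
    rw [abs_div, abs_of_pos (by positivity : (0 : ℝ) < 2 ^ k), div_le_iff₀ (by positivity)]
      at hcoord
    linarith [(one_le_pow₀ one_le_two : (1 : ℝ) ≤ 2 ^ k)]
  have hpow : (2 ^ k * (1 + ‖dyadicPoint k u‖)) ^ (2 * d) =
      ∏ _j : Fin d, (2 ^ k * (1 + ‖dyadicPoint k u‖)) ^ 2 := by
    simp [pow_mul]
  rw [latticeWeight, hpow, ← Finset.prod_mul_distrib]
  refine Finset.one_le_prod fun j _ => ?_
  rw [inv_mul_eq_div, one_le_div (by positivity)]
  exact pow_le_pow_left₀ (by positivity) (hj j) 2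

-- The exponent `4 d + 2` is chosen so that, once the weight is paid for, the decay `2^(-k/2)` and
-- the growth `√(1 + ‖·‖)` remain.
lemma le_of_latticeWeight_mul_pow_le {k : ℕ} {u : Fin d → ℤ} {D A : ℝ} (hA : 0 ≤ A)
    (h : 2 ^ (k * (4 * d + 1)) * latticeWeight u * D ^ (4 * d + 2) ≤ A ^ (4 * d + 2)) :
    D ≤ A * √(1 / 2) ^ k * √(1 + ‖dyadicPoint k u‖) := by
  set B := 1 + ‖dyadicPoint k u‖
  have hB : 1 ≤ B := le_add_of_nonneg_right (norm_nonneg _)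
  have hpow : (2 ^ k * D ^ 2) ^ (2 * d + 1) ≤ (A ^ 2 * B) ^ (2 * d + 1) :=
    calc (2 ^ k * D ^ 2) ^ (2 * d + 1)
        ≤ (2 ^ k * D ^ 2) ^ (2 * d + 1) * (latticeWeight u * (2 ^ k * B) ^ (2 * d)) :=
          le_mul_of_one_le_right (by positivity) (one_le_latticeWeight_mul k u)
      _ = 2 ^ (k * (4 * d + 1)) * latticeWeight u * D ^ (4 * d + 2) * B ^ (2 * d) := by
          ring_nf
      _ ≤ A ^ (4 * d + 2) * B ^ (2 * d + 1) := by gcongr; omega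
      _ = (A ^ 2 * B) ^ (2 * d + 1) := by ring_nf
  have hsq : 2 ^ k * D ^ 2 ≤ A ^ 2 * B :=
    (pow_le_pow_iff_left₀ (by positivity) (by positivity) (by omega)).1 hpow
  refine le_of_sq_le_sq ?_ (by positivity)
  rw [mul_pow, mul_pow, sq_sqrt (by positivity), pow_right_comm, sq_sqrt (by norm_num), one_div,
    inv_pow]
  calc D ^ 2 = (2 ^ k)⁻¹ * (2 ^ k * D ^ 2) := by field_simp
    _ ≤ (2 ^ k)⁻¹ * (A ^ 2 * B) := by gcongr
    _ = A ^ 2 * (2 ^ k)⁻¹ * B := by ring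

end LatticeWeight

section RandomEnvelope

open Real
open scoped Nat

variable {Ω : Type*} [MeasurableSpace Ω] {P : Measure Ω}

lemma exists_memLp_forall_mul_abs_pow_le {ι : Type*} [Countable ι] {p : ℕ} (hp : p ≠ 0)
    {g : ι → Ω → ℝ} (hg : ∀ i, Measurable (g i)) {w c : ι → ℝ} (hw : ∀ i, 0 ≤ w i)
    (hwc : Summable fun i => w i * c i)
    (hgc : ∀ i, ∫⁻ ω, ENNReal.ofReal (|g i ω| ^ p) ∂P ≤ ENNReal.ofReal (c i)) :
    ∃ N : Ω → ℝ, (∀ ω, 0 ≤ N ω) ∧ MemLp N p P ∧ ∀ᵐ ω ∂P, ∀ i, w i * |g i ω| ^ p ≤ N ω ^ p := by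
  set W : Ω → ENNReal := fun ω => ∑' i, ENNReal.ofReal (w i * |g i ω| ^ p)
  have hterm (i : ι) : Measurable fun ω => ENNReal.ofReal (w i * |g i ω| ^ p) := by
    have := hg i
    fun_prop
  have hW : Measurable W := Measurable.tsum hterm
  have hWint : ∫⁻ ω, W ω ∂P < ⊤ := by
    rw [lintegral_tsum fun i => (hterm i).aemeasurable]
    refine (ENNReal.tsum_le_tsum fun i => ?_).trans_lt hwc.tsum_ofReal_lt_top
    simp only [ENNReal.ofReal_mul (hw i)]
    rw [lintegral_const_mul' _ _ ENNReal.ofReal_ne_top]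
    exact mul_le_mul_right (hgc i) _
  have hroot (ω : Ω) : ((W ω).toReal ^ (p : ℝ)⁻¹) ^ p = (W ω).toReal :=
    rpow_inv_natCast_pow ENNReal.toReal_nonneg hp
  have hNmeas : Measurable fun ω => (W ω).toReal ^ (p : ℝ)⁻¹ := hW.ennreal_toReal.pow_const _
  refine ⟨fun ω => (W ω).toReal ^ (p : ℝ)⁻¹, fun ω => by positivity, ?_, ?_⟩
  · rw [← integrable_norm_rpow_iff hNmeas.aestronglyMeasurable (by exact_mod_cast hp) (by simp)]
    refine (integrable_toReal_of_lintegral_ne_top hW.aemeasurable hWint.ne).congr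
      (.of_forall fun ω => ?_)
    simp only [ENNReal.toReal_natCast, rpow_natCast]
    rw [norm_of_nonneg (by positivity), hroot]
  · filter_upwards [ae_lt_top hW hWint.ne] with ω hω i
    rw [hroot, ← ENNReal.ofReal_le_iff_le_toReal hω.ne]
    exact ENNReal.le_tsum i

variable {d : ℕ} {v : EuclideanSpace ℝ (Fin d)} {C : ℝ} {f : Ω → EuclideanSpace ℝ (Fin d) → ℝ}

namespace IsLineSubgaussian

lemma exists_memLp_norm_dyadicPoint_zero_le (h : IsLineSubgaussian v C f P) (hC : 0 < C) :
    ∃ N : Ω → ℝ, (∀ ω, 0 ≤ N ω) ∧ MemLp N (4 * d + 2 : ℕ) P ∧ ∀ᵐ ω ∂P, ∀ u : Fin d → ℤ,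
      ‖f ω (dyadicPoint 0 u)‖ ≤ N ω * √(1 + ‖dyadicPoint 0 u‖) := by
  obtain ⟨N, hN, hmem, hbound⟩ := exists_memLp_forall_mul_abs_pow_le (by omega)
    (fun u : Fin d → ℤ => h.measurable (dyadicPoint 0 u)) (fun u => (latticeWeight_pos u).le)
    (summable_latticeWeight.mul_right _)
    (fun u => h.lintegral_abs_pow_le hC (dyadicPoint 0 u) (4 * d + 2))
  refine ⟨N, hN, hmem, hbound.mono fun ω hω u => ?_⟩
  simpa using le_of_latticeWeight_mul_pow_le (k := 0) (D := ‖f ω (dyadicPoint 0 u)‖) (hN ω)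
    (by simpa only [zero_mul, pow_zero, one_mul, norm_eq_abs] using hω u)

lemma lintegral_abs_sub_dyadicPoint_pow_le (h : IsLineSubgaussian v C f P) (hC : 0 < C) {n k : ℕ}
    (hn : n ≠ 0) {u u' : Fin d → ℤ} (huu' : ∀ j, |u' j - u j| ≤ 1) :
    ∫⁻ ω, ENNReal.ofReal (|f ω (dyadicPoint k u') - f ω (dyadicPoint k u)| ^ n) ∂P ≤
      ENNReal.ofReal (2 * n ! * exp 1 * (C * d) ^ n * (1 / 2 ^ k) ^ n) := by
  refine (h.lintegral_abs_sub_pow_le hC _ _ hn).trans (ENNReal.ofReal_le_ofReal ?_)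
  rw [mul_assoc _ ((C * d) ^ n), ← mul_pow, mul_assoc C]
  gcongr
  exact norm_dyadicPoint_sub_le huu'

lemma exists_memLp_norm_dyadicPoint_sub_le (h : IsLineSubgaussian v C f P) (hC : 0 < C) :
    ∃ N : Ω → ℝ, (∀ ω, 0 ≤ N ω) ∧ MemLp N (4 * d + 2 : ℕ) P ∧
      ∀ᵐ ω ∂P, ∀ (k : ℕ) (u u' : Fin d → ℤ), (∀ j, |u' j - u j| ≤ 1) →
        ‖f ω (dyadicPoint k u') - f ω (dyadicPoint k u)‖ ≤
          N ω * √(1 / 2) ^ k * √(1 + ‖dyadicPoint k u‖) := by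
  set S : Finset (Fin d → ℤ) := Fintype.piFinset fun _ => Finset.Icc (-1) 1
  obtain ⟨c, hc, hmoment⟩ : ∃ c : ℝ, 0 ≤ c ∧ ∀ i : ℕ × (Fin d → ℤ) × S, ∫⁻ ω, ENNReal.ofReal
      (|f ω (dyadicPoint i.1 (i.2.1 + i.2.2)) - f ω (dyadicPoint i.1 i.2.1)| ^ (4 * d + 2)) ∂P ≤
      ENNReal.ofReal (c * (1 / 2 ^ i.1) ^ (4 * d + 2)) := by
    refine ⟨_, by positivity, fun i =>
      h.lintegral_abs_sub_dyadicPoint_pow_le hC (Nat.succ_ne_zero _) fun j => ?_⟩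
    rw [Pi.add_apply, add_sub_cancel_left, abs_le]
    exact Finset.mem_Icc.1 (Fintype.mem_piFinset.1 i.2.2.2 j)
  obtain ⟨N, hN, hmem, hbound⟩ := exists_memLp_forall_mul_abs_pow_le (p := 4 * d + 2)
    (Nat.succ_ne_zero _)
    (fun i : ℕ × (Fin d → ℤ) × S => (h.measurable (dyadicPoint i.1 (i.2.1 + i.2.2))).sub
      (h.measurable (dyadicPoint i.1 i.2.1)))
    (fun i => mul_nonneg (by positivity) (latticeWeight_pos i.2.1).le)
    (summable_two_pow_mul_latticeWeight_mul S hc) hmoment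
  refine ⟨N, hN, hmem, hbound.mono fun ω hω k u u' huu' => ?_⟩
  have he : u' - u ∈ S := Fintype.mem_piFinset.2 fun j => Finset.mem_Icc.2 (abs_le.1 (huu' j))
  exact le_of_latticeWeight_mul_pow_le (hN ω)
    (by simpa only [add_sub_cancel, Pi.sub_apply, norm_eq_abs] using hω (k, u, ⟨u' - u, he⟩))

lemma exists_memLp_hasEnvelope (h : IsLineSubgaussian v C f P) (hC : 0 < C)
    (hf : ∀ᵐ ω ∂P, Continuous (f ω)) :
    ∃ N : Ω → ℝ, (∀ ω, 0 ≤ N ω) ∧ MemLp N (4 * d + 2 : ℕ) P ∧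
      ∀ᵐ ω ∂P, HasEnvelope (N ω) (f ω) := by
  obtain ⟨N₁, hN₁, hmem₁, hbound₁⟩ := h.exists_memLp_norm_dyadicPoint_zero_le hC
  obtain ⟨N₂, hN₂, hmem₂, hbound₂⟩ := h.exists_memLp_norm_dyadicPoint_sub_le hC
  have hN (ω : Ω) : 0 ≤ N₁ ω + N₂ ω := add_nonneg (hN₁ ω) (hN₂ ω)
  refine ⟨fun ω => 10 * (N₁ ω + N₂ ω), fun ω => by linarith [hN ω],
    (hmem₁.add hmem₂).const_mul 10, ?_⟩
  filter_upwards [hf, hbound₁, hbound₂] with ω hcont h₁ h₂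
  refine HasDyadicEnvelope.hasEnvelope ⟨fun u => ?_, fun k u u' huu' => ?_⟩ (hN ω) hcont
  · refine (h₁ u).trans (mul_le_mul_of_nonneg_right ?_ (sqrt_nonneg _))
    linarith [hN₂ ω]
  · refine (h₂ k u u' huu').trans ?_
    rw [mul_assoc, mul_assoc]
    exact mul_le_mul_of_nonneg_right (by linarith [hN₁ ω]) (by positivity)

end IsLineSubgaussian

lemma exists_memLp_hasEnvelope_of_apply {n : ℕ}
    {F : Ω → EuclideanSpace ℝ (Fin d) → EuclideanSpace ℝ (Fin n)} (hC : 0 < C)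
    (h : ∀ i, IsLineSubgaussian v C (fun ω x => F ω x i) P) (hF : ∀ᵐ ω ∂P, Continuous (F ω)) :
    ∃ N : Ω → ℝ, (∀ ω, 0 ≤ N ω) ∧ MemLp N (4 * d + 2 : ℕ) P ∧
      ∀ᵐ ω ∂P, HasEnvelope (N ω) (F ω) := by
  have hcont (i : Fin n) : ∀ᵐ ω ∂P, Continuous fun x => F ω x i :=
    hF.mono fun ω hω => by fun_prop
  choose M hM hmem henv using fun i => (h i).exists_memLp_hasEnvelope hC (hcont i)
  exact ⟨fun ω => ∑ i, M i ω, fun ω => Finset.sum_nonneg fun i _ => hM i ω,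
    memLp_finsetSum _ fun i _ => hmem i,
    (ae_all_iff.2 henv).mono fun ω hω => hasEnvelope_sum hω⟩

end RandomEnvelope

/-! ### Particles driven by a constant drift and a small field -/

section DriftSolution

open Real

variable {E : Type*} [NormedAddCommGroup E]

/-- A smooth substitute for `√(c + ‖z‖)`, to which it is comparable when `c ≥ 1`. -/
noncomputable def sqrtNorm (c : ℝ) (z : E) : ℝ :=
  √√(c ^ 2 + ‖z‖ ^ 2)

lemma sq_sqrtNorm (c : ℝ) (z : E) : sqrtNorm c z ^ 2 = √(c ^ 2 + ‖z‖ ^ 2) :=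
  sq_sqrt (sqrt_nonneg _)

lemma norm_le_sq_sqrtNorm (c : ℝ) (z : E) : ‖z‖ ≤ sqrtNorm c z ^ 2 := by
  rw [sq_sqrtNorm]
  exact le_sqrt_of_sq_le (by linarith [sq_nonneg c])

lemma le_sq_sqrtNorm (c : ℝ) (z : E) : c ≤ sqrtNorm c z ^ 2 := by
  rw [sq_sqrtNorm]
  exact le_sqrt_of_sq_le (by linarith [sq_nonneg ‖z‖])

lemma one_le_sqrtNorm {c : ℝ} (hc : 1 ≤ c) (z : E) : 1 ≤ sqrtNorm c z :=
  (one_le_sq_iff₀ (sqrt_nonneg _)).1 (hc.trans (le_sq_sqrtNorm c z))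

lemma sqrt_add_norm_le_two_mul_sqrtNorm (c : ℝ) (z : E) : √(c + ‖z‖) ≤ 2 * sqrtNorm c z := by
  refine sqrt_le_iff.2 ⟨mul_nonneg zero_le_two (sqrt_nonneg _), ?_⟩
  linarith [le_sq_sqrtNorm c z, norm_le_sq_sqrtNorm c z, mul_pow 2 (sqrtNorm c z) 2,
    sq_nonneg (sqrtNorm c z)]

lemma sqrtNorm_zero {c : ℝ} (hc : 0 ≤ c) : sqrtNorm c (0 : E) = √c := by
  simp [sqrtNorm, sqrt_sq hc]

variable [InnerProductSpace ℝ E]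

lemma hasDerivAt_sqrtNorm {c : ℝ} (hc : 1 ≤ c) {x : ℝ → E} {x' : E} {s : ℝ}
    (hx : HasDerivAt x x' s) :
    HasDerivAt (fun u => sqrtNorm c (x u)) (⟪x s, x'⟫ / (2 * sqrtNorm c (x s) ^ 3)) s := by
  have hr := one_le_sqrtNorm hc (x s)
  have hsq : 0 < √(c ^ 2 + ‖x s‖ ^ 2) := by
    rw [← sq_sqrtNorm]
    positivity
  refine (((hx.norm_sq.const_add (c ^ 2)).sqrt (sqrt_pos.1 hsq).ne').sqrt hsq.ne').congr_deriv ?_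
  change _ / (2 * sqrtNorm c (x s)) = _
  rw [← sq_sqrtNorm]
  field_simp

/-- The trajectory `x` starts at the origin and moves with velocity `v + δ f(x)`. -/
structure IsDriftSolution (v : E) (δ : ℝ) (f : E → E) (x : ℝ → E) : Prop where
  zero : x 0 = 0
  hasDerivAt (s : ℝ) : 0 ≤ s → HasDerivAt x (v + δ • f (x s)) s

namespace IsDriftSolution

variable {v : E} {δ : ℝ} {f : E → E} {x : ℝ → E}

lemma norm_velocity_le (hv : ‖v‖ ≤ 1) (hδ : δ ∈ Ioc (0 : ℝ) 1) (z : E) :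
    ‖v + δ • z‖ ≤ 1 + ‖z‖ := by
  refine (norm_add_le _ _).trans (add_le_add hv ?_)
  rw [norm_smul, norm_of_nonneg hδ.1.le]
  exact mul_le_of_le_one_left (norm_nonneg z) hδ.2

lemma abs_deriv_sqrtNorm_le (hv : ‖v‖ ≤ 1) (hδ : δ ∈ Ioc (0 : ℝ) 1) {c N : ℝ} (hc : 1 ≤ c)
    (hN : 0 ≤ N) (hf : ∀ z, ‖f z‖ ≤ N * √(c + ‖z‖)) (z : E) :
    |⟪z, v + δ • f z⟫ / (2 * sqrtNorm c z ^ 3)| ≤ 1 + N := by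
  set r := sqrtNorm c z
  have hr1 : 1 ≤ r := one_le_sqrtNorm hc z
  have hvel : ‖v + δ • f z‖ ≤ 2 * (1 + N) * r := by
    have := (hf z).trans (mul_le_mul_of_nonneg_left (sqrt_add_norm_le_two_mul_sqrtNorm c z) hN)
    linarith [norm_velocity_le hv hδ (f z)]
  rw [abs_div, abs_of_pos (by positivity : 0 < 2 * r ^ 3), div_le_iff₀ (by positivity)]
  calc |⟪z, v + δ • f z⟫| ≤ ‖z‖ * ‖v + δ • f z‖ := abs_real_inner_le_norm _ _
    _ ≤ r ^ 2 * (2 * (1 + N) * r) := by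
      gcongr
      exact norm_le_sq_sqrtNorm c z
    _ = (1 + N) * (2 * r ^ 3) := by ring

lemma norm_le (h : IsDriftSolution v δ f x) (hv : ‖v‖ ≤ 1) (hδ : δ ∈ Ioc (0 : ℝ) 1) {c N : ℝ}
    (hc : 1 ≤ c) (hN : 0 ≤ N) (hf : ∀ z, ‖f z‖ ≤ N * √(c + ‖z‖)) {s : ℝ} (hs : 0 ≤ s) :
    ‖x s‖ ≤ (c * (1 + N) * (1 + s)) ^ 2 := by
  have hmove : |sqrtNorm c (x s) - sqrtNorm c (x 0)| ≤ (1 + N) * (s - 0) :=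
    norm_image_sub_le_of_norm_deriv_le_segment'
      (fun u hu => (hasDerivAt_sqrtNorm hc (h.hasDerivAt u hu.1)).hasDerivWithinAt)
      (fun u _ => abs_deriv_sqrtNorm_le hv hδ hc hN hf (x u)) s ⟨hs, le_rfl⟩
  have hstart : sqrtNorm c (x 0) ≤ c := by
    rw [h.zero, sqrtNorm_zero (by positivity)]
    exact sqrt_le_iff.2 ⟨by positivity, le_self_pow₀ hc two_ne_zero⟩
  have hgrowth : sqrtNorm c (x s) ≤ c * (1 + N) * (1 + s) :=
    calc sqrtNorm c (x s) ≤ c + (1 + N) * s := by linarith [(abs_le.1 hmove).2]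
      _ ≤ c * (1 + N) + c * ((1 + N) * s) :=
        add_le_add (le_mul_of_one_le_right (by linarith) (by linarith))
          (le_mul_of_one_le_left (by positivity) hc)
      _ = c * (1 + N) * (1 + s) := by ring
  exact (norm_le_sq_sqrtNorm c _).trans (pow_le_pow_left₀ (sqrt_nonneg _) hgrowth 2)

lemma norm_sub_le (h : IsDriftSolution v δ f x) (hv : ‖v‖ ≤ 1) (hδ : δ ∈ Ioc (0 : ℝ) 1)
    {V s u : ℝ} (hs : 0 ≤ s) (hsu : s ≤ u) (hV : ∀ r ∈ Icc s u, ‖f (x r)‖ ≤ V) :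
    ‖x u - x s‖ ≤ (1 + V) * (u - s) :=
  norm_image_sub_le_of_norm_deriv_le_segment'
    (fun r hr => (h.hasDerivAt r (hs.trans hr.1)).hasDerivWithinAt)
    (fun r hr => (norm_velocity_le hv hδ _).trans
      (by linarith [hV r (Ico_subset_Icc_self hr)])) u ⟨hsu, le_rfl⟩

lemma norm_increment_sub_le (h : IsDriftSolution v δ f x) (hδ : 0 ≤ δ) {s ℓ ε : ℝ} (hs : 0 ≤ s)
    (hℓ : 0 ≤ ℓ) {w : E} (hw : ∀ u ∈ Icc s (s + ℓ), ‖f (x u) - w‖ ≤ ε) :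
    ‖(x (s + ℓ) - (s + ℓ) • v) - (x s - s • v) - (δ * ℓ) • w‖ ≤ δ * ℓ * ε := by
  have hderiv (u : ℝ) (hu : u ∈ Icc s (s + ℓ)) :
      HasDerivWithinAt (fun u => x u - u • v - (δ * u) • w) (δ • (f (x u) - w))
        (Icc s (s + ℓ)) u := by
    refine ((((h.hasDerivAt u (hs.trans hu.1)).sub ((hasDerivAt_id u).smul_const v)).sub
      (((hasDerivAt_id u).const_mul δ).smul_const w)).congr_deriv ?_).hasDerivWithinAt
    module
  have hbound (u : ℝ) (hu : u ∈ Ico s (s + ℓ)) : ‖δ • (f (x u) - w)‖ ≤ δ * ε := by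
    rw [norm_smul, norm_of_nonneg hδ]
    exact mul_le_mul_of_nonneg_left (hw u (Ico_subset_Icc_self hu)) hδ
  have hmove := norm_image_sub_le_of_norm_deriv_le_segment' hderiv hbound (s + ℓ)
    ⟨by linarith, le_rfl⟩
  calc _ = ‖x (s + ℓ) - (s + ℓ) • v - (δ * (s + ℓ)) • w - (x s - s • v - (δ * s) • w)‖ := by
        congr 1
        module
    _ ≤ δ * ε * (s + ℓ - s) := hmove
    _ = δ * ℓ * ε := by ring

end IsDriftSolution

variable {d : ℕ} {v : EuclideanSpace ℝ (Fin d)} {δ N V T ℓ μ ε : ℝ}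
  {f : EuclideanSpace ℝ (Fin d) → EuclideanSpace ℝ (Fin d)} {x : ℝ → EuclideanSpace ℝ (Fin d)}

lemma HasEnvelope.norm_sub_le_of_le (hf : HasEnvelope N f) {k : ℕ} (hε : √(1 / 2) ^ k * V ≤ ε)
    {z w : EuclideanSpace ℝ (Fin d)} (hz : N * √(1 + d + ‖z‖) ≤ V) (hzw : ‖z - w‖ ≤ 1 / 2 ^ k) :
    ‖f z - f w‖ ≤ ε :=
  calc ‖f z - f w‖ ≤ √(1 / 2) ^ k * (N * √(1 + d + ‖z‖)) :=
        (hf.norm_sub_le k z w hzw).trans_eq (by ring)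
    _ ≤ √(1 / 2) ^ k * V := by gcongr
    _ ≤ ε := hε

namespace IsDriftSolution

lemma norm_euler_step_le (h : IsDriftSolution v δ f x) (hv : ‖v‖ ≤ 1) (hδ : δ ∈ Ioc (0 : ℝ) 1)
    (hf : HasEnvelope N f) (hV : ∀ u ∈ Icc 0 T, N * √(1 + d + ‖x u‖) ≤ V) (hV0 : 0 ≤ V)
    (hℓ : 0 ≤ ℓ) {k : ℕ} (hk : (1 + V) * ℓ + μ ≤ 1 / 2 ^ k) (hε : √(1 / 2) ^ k * V ≤ ε) {s : ℝ}
    (hs : 0 ≤ s) (hsT : s + ℓ ≤ T) {w : EuclideanSpace ℝ (Fin d)}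
    (hw : ‖w - (x s - s • v)‖ ≤ μ) :
    ‖(x (s + ℓ) - (s + ℓ) • v) - (x s - s • v) - (δ * ℓ) • f (s • v + w)‖ ≤ δ * ℓ * ε := by
  have hVu (u : ℝ) (hu : u ∈ Icc s (s + ℓ)) : N * √(1 + d + ‖x u‖) ≤ V :=
    hV u ⟨hs.trans hu.1, hu.2.trans hsT⟩
  refine h.norm_increment_sub_le hδ.1.le hs hℓ fun u hu => hf.norm_sub_le_of_le hε (hVu u hu) ?_
  have hmove : ‖x u - x s‖ ≤ (1 + V) * (u - s) :=
    h.norm_sub_le hv hδ hs hu.1 fun r hr =>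
      (hf.norm_le _).trans (hVu r ⟨hr.1, hr.2.trans hu.2⟩)
  calc ‖x u - (s • v + w)‖ = ‖(x u - x s) - (w - (x s - s • v))‖ := by congr 1; abel
    _ ≤ (1 + V) * (u - s) + μ := (_root_.norm_sub_le _ _).trans (add_le_add hmove hw)
    _ ≤ (1 + V) * ℓ + μ := by
      gcongr
      linarith [hu.2]
    _ ≤ 1 / 2 ^ k := hk

end IsDriftSolution

end DriftSolution

/-! ### Multiscale induction -/

section DyadicBlock

/-- The largest multiple of `2ᵍ` not exceeding `n`. -/
def dyadicTrunc (g n : ℕ) : ℕ :=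
  n / 2 ^ g * 2 ^ g

/-- The `b`-th block of `2ʰ` consecutive indices. -/
def dyadicBlock (h b : ℕ) : Finset ℕ :=
  Finset.Ico (b * 2 ^ h) ((b + 1) * 2 ^ h)

lemma dyadicTrunc_zero (n : ℕ) : dyadicTrunc 0 n = n := by
  simp [dyadicTrunc]

lemma dyadicTrunc_le (g n : ℕ) : dyadicTrunc g n ≤ n :=
  Nat.div_mul_le_self n _

lemma dyadicTrunc_of_mem_dyadicBlock {h b n : ℕ} (hn : n ∈ dyadicBlock h b) :
    dyadicTrunc h n = b * 2 ^ h := by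
  rw [dyadicBlock, Finset.mem_Ico] at hn
  rw [dyadicTrunc, Nat.div_eq_of_lt_le hn.1 hn.2]

lemma card_dyadicBlock (h b : ℕ) : (dyadicBlock h b).card = 2 ^ h := by
  rw [dyadicBlock, Nat.card_Ico, Nat.succ_mul, Nat.add_sub_cancel_left]

lemma lt_two_pow_of_mem_dyadicBlock {J h b n : ℕ} (hh : h ≤ J) (hb : b < 2 ^ (J - h))
    (hn : n ∈ dyadicBlock h b) : n < 2 ^ J :=
  calc n < (b + 1) * 2 ^ h := (Finset.mem_Ico.1 hn).2
    _ ≤ 2 ^ (J - h) * 2 ^ h := Nat.mul_le_mul_right _ hb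
    _ = 2 ^ J := by rw [← pow_add, Nat.sub_add_cancel hh]

lemma dyadicTrunc_eq_succ_or (g n : ℕ) : dyadicTrunc g n = dyadicTrunc (g + 1) n ∨
    ∃ q, dyadicTrunc (g + 1) n = q * 2 ^ g ∧ dyadicTrunc g n = (q + 1) * 2 ^ g := by
  have hsucc : dyadicTrunc (g + 1) n = 2 * (n / 2 ^ g / 2) * 2 ^ g := by
    rw [dyadicTrunc, pow_succ, ← Nat.div_div_eq_div_mul]
    ring
  rcases Nat.mod_two_eq_zero_or_one (n / 2 ^ g) with heven | hodd
  · left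
    rw [hsucc, dyadicTrunc, show 2 * (n / 2 ^ g / 2) = n / 2 ^ g by omega]
  · right
    refine ⟨_, hsucc, ?_⟩
    rw [dyadicTrunc, show 2 * (n / 2 ^ g / 2) + 1 = n / 2 ^ g by omega]

lemma sum_dyadicBlock_sub {E : Type*} [AddCommGroup E] (y : ℕ → E) (h b : ℕ) :
    ∑ n ∈ dyadicBlock h b, (y (n + 1) - y n) = y ((b + 1) * 2 ^ h) - y (b * 2 ^ h) :=
  Finset.sum_Ico_sub y (Nat.mul_le_mul_right _ b.le_succ)

lemma norm_sub_dyadicTrunc_succ_le {E : Type*} [SeminormedAddCommGroup E] {y : ℕ → E} {J g : ℕ}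
    {κ : ℝ} (hκ : 0 ≤ κ) (hg : g ≤ J)
    (hy : ∀ b < 2 ^ (J - g), ‖y ((b + 1) * 2 ^ g) - y (b * 2 ^ g)‖ ≤ κ) {n : ℕ} (hn : n < 2 ^ J) :
    ‖y (dyadicTrunc g n) - y (dyadicTrunc (g + 1) n)‖ ≤ κ := by
  rcases dyadicTrunc_eq_succ_or g n with heq | ⟨q, hsucc, htrunc⟩
  · rwa [heq, sub_self, norm_zero]
  · rw [hsucc, htrunc]
    refine hy q ?_
    have hlt : (q + 1) * 2 ^ g < 2 ^ (J - g) * 2 ^ g := by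
      rw [← htrunc, ← pow_add, Nat.sub_add_cancel hg]
      exact (dyadicTrunc_le g n).trans_lt hn
    exact q.lt_succ_self.trans (Nat.lt_of_mul_lt_mul_right hlt)

lemma norm_dyadicTrunc_sub_le {E : Type*} [SeminormedAddCommGroup E] {y : ℕ → E} {g h n : ℕ}
    {κ : ℝ} (hgh : g ≤ h)
    (hy : ∀ i < h, ‖y (dyadicTrunc i n) - y (dyadicTrunc (i + 1) n)‖ ≤ κ) :
    ‖y (dyadicTrunc g n) - y (dyadicTrunc h n)‖ ≤ (h - g : ℕ) * κ := by
  simpa [dist_eq_norm] using dist_le_Ico_sum_of_dist_le hgh fun {i} _ hi =>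
    (dist_eq_norm (y (dyadicTrunc i n)) (y (dyadicTrunc (i + 1) n))).trans_le (hy i hi)

lemma sum_dyadicBlock_eq_sum_fin {M : Type*} [AddCommMonoid M] (φ : ℕ → M) (h b : ℕ) :
    ∑ n ∈ dyadicBlock h b, φ n = ∑ m : Fin (2 ^ h), φ (b * 2 ^ h + m) := by
  rw [dyadicBlock, Finset.sum_Ico_eq_sum_range, Nat.succ_mul, Nat.add_sub_cancel_left,
    Finset.sum_range]

lemma add_mem_dyadicBlock {h b m : ℕ} (hm : m < 2 ^ h) : b * 2 ^ h + m ∈ dyadicBlock h b :=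
  Finset.mem_Ico.2 ⟨Nat.le_add_right _ _, by
    rw [Nat.succ_mul]
    exact Nat.add_lt_add_left hm _⟩

lemma div_mem_dyadicBlock {g h b n : ℕ} (hg : g ≤ h) (hn : n ∈ dyadicBlock h b) :
    n / 2 ^ g ∈ dyadicBlock (h - g) b := by
  rw [dyadicBlock, Finset.mem_Ico, ← Nat.sub_add_cancel hg, pow_add] at hn
  rw [dyadicBlock, Finset.mem_Ico, Nat.le_div_iff_mul_le (by positivity),
    Nat.div_lt_iff_lt_mul (by positivity)]
  simpa only [mul_assoc] using hn

lemma mul_mem_dyadicBlock {g h b q : ℕ} (hg : g ≤ h) (hq : q ∈ dyadicBlock (h - g) b) :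
    q * 2 ^ g ∈ dyadicBlock h b := by
  rw [dyadicBlock, Finset.mem_Ico] at hq ⊢
  have hpow : 2 ^ h = 2 ^ (h - g) * 2 ^ g := by rw [← pow_add, Nat.sub_add_cancel hg]
  rw [hpow, ← mul_assoc, ← mul_assoc]
  exact ⟨Nat.mul_le_mul_right _ hq.1, Nat.mul_lt_mul_of_pos_right hq.2 (by positivity)⟩

lemma dyadicTrunc_mem_dyadicBlock {i h b n : ℕ} (hi : i ≤ h) (hn : n ∈ dyadicBlock h b) :
    dyadicTrunc i n ∈ dyadicBlock h b :=
  mul_mem_dyadicBlock hi (div_mem_dyadicBlock hi hn)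

lemma dyadicTrunc_div_mul {g i : ℕ} (hg : g ≤ i) (n : ℕ) :
    dyadicTrunc i (n / 2 ^ g * 2 ^ g) = dyadicTrunc i n := by
  have hpow : 2 ^ i = 2 ^ g * 2 ^ (i - g) := by rw [← pow_add, Nat.add_sub_cancel' hg]
  simp only [dyadicTrunc]
  rw [hpow, ← Nat.div_div_eq_div_mul, ← Nat.div_div_eq_div_mul,
    Nat.mul_div_cancel _ (by positivity)]

end DyadicBlock

section Multiscale

open Real

variable {E : Type*} [NormedAddCommGroup E] [NormedSpace ℝ E] {J : ℕ} {δ ℓ μ Θ : ℝ}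
  {η : ℕ → ℝ} {G : ℕ → E → E} {y z : ℕ → E}

/-- The sequence `y` follows the time-dependent field `δ G` with time step `ℓ` for `2ᴶ` steps, up
to an error `δ²` in the velocity, when the field is evaluated at the `μ`-close points `z`. -/
structure IsApproxEuler (J : ℕ) (δ ℓ μ : ℝ) (G : ℕ → E → E) (y z : ℕ → E) : Prop where
  norm_step_le (n : ℕ) : n < 2 ^ J → ‖y (n + 1) - y n - (δ * ℓ) • G n (z n)‖ ≤ δ * ℓ * δ
  norm_sub_le (n : ℕ) : n < 2 ^ J → ‖z n - y n‖ ≤ μ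

/-- The time integral of `G` over each dyadic block of length `2ʰℓ` has the square-root size
expected from independent increments, both at the position `z` held at the start of the block and
for the correction made by updating the position every `2ᵍ` instead of every `2ᵍ⁺¹` steps.  The
factor `√(2ʰ⁻ᵍ)` accounts for the number of positions the correction depends on. -/
structure BlockSumsBounded (J : ℕ) (ℓ Θ : ℝ) (η : ℕ → ℝ) (G : ℕ → E → E) (z : ℕ → E) :
    Prop where
  norm_frozen_le (h b : ℕ) : h ≤ J → b < 2 ^ (J - h) →
    ‖∑ n ∈ dyadicBlock h b, ℓ • G n (z (b * 2 ^ h))‖ ≤ Θ * √(2 ^ h * ℓ)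
  norm_correction_le (h g b : ℕ) : h ≤ J → g < h → b < 2 ^ (J - h) →
    (∀ i ∈ Icc g (g + 1), ∀ n ∈ dyadicBlock h b, ∀ l ∈ dyadicBlock h b,
      ‖z (dyadicTrunc i n) - z (dyadicTrunc i l)‖ ≤ 2) →
    (∀ n ∈ dyadicBlock h b, ‖z (dyadicTrunc g n) - z (dyadicTrunc (g + 1) n)‖ ≤ η g) →
    ‖∑ n ∈ dyadicBlock h b, ℓ • (G n (z (dyadicTrunc g n)) - G n (z (dyadicTrunc (g + 1) n)))‖ ≤
      Θ * η g * (√(2 ^ h * ℓ) * √(2 ^ (h - g)))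

lemma sqrt_two_pow_mul_le_sqrt (hℓ : 0 ≤ ℓ) {h : ℕ} (hh : h ≤ J) :
    √(2 ^ h * ℓ) ≤ √(2 ^ J * ℓ) := by
  gcongr
  exact one_le_two

namespace IsApproxEuler

lemma norm_sub_le_add (hy : IsApproxEuler J δ ℓ μ G y z) {n l : ℕ} (hn : n < 2 ^ J)
    (hl : l < 2 ^ J) : ‖z n - z l‖ ≤ ‖y n - y l‖ + 2 * μ :=
  calc ‖z n - z l‖ = ‖(y n - y l) + ((z n - y n) - (z l - y l))‖ := by congr 1; abel
    _ ≤ ‖y n - y l‖ + (‖z n - y n‖ + ‖z l - y l‖) :=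
      (norm_add_le _ _).trans (add_le_add le_rfl (_root_.norm_sub_le _ _))
    _ ≤ ‖y n - y l‖ + 2 * μ := by linarith [hy.norm_sub_le n hn, hy.norm_sub_le l hl]

lemma sub_eq_sum_add (G : ℕ → E → E) (y z : ℕ → E) (h b : ℕ) :
    y ((b + 1) * 2 ^ h) - y (b * 2 ^ h) =
      ∑ n ∈ dyadicBlock h b, (y (n + 1) - y n - (δ * ℓ) • G n (z n)) +
      δ • (∑ n ∈ dyadicBlock h b, ℓ • G n (z (b * 2 ^ h)) +
        ∑ g ∈ Finset.range h, ∑ n ∈ dyadicBlock h b,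
          ℓ • (G n (z (dyadicTrunc g n)) - G n (z (dyadicTrunc (g + 1) n)))) := by
  have htelescope (n : ℕ) (hn : n ∈ dyadicBlock h b) :
      ∑ g ∈ Finset.range h,
        ℓ • (G n (z (dyadicTrunc g n)) - G n (z (dyadicTrunc (g + 1) n))) =
      ℓ • (G n (z n) - G n (z (b * 2 ^ h))) := by
    rw [← Finset.smul_sum, Finset.sum_range_sub' fun g => G n (z (dyadicTrunc g n)),
      dyadicTrunc_zero, dyadicTrunc_of_mem_dyadicBlock hn]
  rw [Finset.sum_comm, Finset.sum_congr rfl htelescope, Finset.sum_sub_distrib,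
    sum_dyadicBlock_sub, ← Finset.sum_add_distrib, Finset.smul_sum]
  simp only [← smul_add, add_sub_cancel, smul_smul, sub_add_cancel]

lemma norm_sum_step_le (hy : IsApproxEuler J δ ℓ μ G y z) (hδ : 0 ≤ δ) (hℓ : 0 ≤ ℓ)
    (hT : δ * √(2 ^ J * ℓ) ≤ 1) {h b : ℕ} (hh : h ≤ J) (hb : b < 2 ^ (J - h)) :
    ‖∑ n ∈ dyadicBlock h b, (y (n + 1) - y n - (δ * ℓ) • G n (z n))‖ ≤ δ * √(2 ^ h * ℓ) := by
  refine (norm_sum_le_of_le _ fun n hn =>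
    hy.norm_step_le n (lt_two_pow_of_mem_dyadicBlock hh hb hn)).trans ?_
  rw [Finset.sum_const, card_dyadicBlock, nsmul_eq_mul, Nat.cast_pow, Nat.cast_ofNat]
  have hsmall : δ * √(2 ^ h * ℓ) ≤ 1 :=
    (mul_le_mul_of_nonneg_left (sqrt_two_pow_mul_le_sqrt hℓ hh) hδ).trans hT
  calc 2 ^ h * (δ * ℓ * δ) = (δ * √(2 ^ h * ℓ)) * (δ * √(2 ^ h * ℓ)) := by
        rw [mul_mul_mul_comm, mul_self_sqrt (by positivity)]
        ring
    _ ≤ δ * √(2 ^ h * ℓ) := mul_le_of_le_one_left (by positivity) hsmall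

end IsApproxEuler

lemma mul_correction_le (hδ : 0 ≤ δ) (hℓ : 0 ≤ ℓ) (hΘ : 0 ≤ Θ) (hμ : 2 * μ ≤ δ * √ℓ)
    {g h : ℕ} (hgh : g ≤ h) :
    Θ * (δ * (Θ + 2) * √(2 ^ g * ℓ) + 2 * μ) * (√(2 ^ h * ℓ) * √(2 ^ (h - g))) ≤
      √(2 ^ h * ℓ) * (Θ * (δ * (Θ + 3) * √(2 ^ h * ℓ))) := by
  have hμg : 2 * μ ≤ δ * √(2 ^ g * ℓ) := hμ.trans <| by
    gcongr
    exact le_mul_of_one_le_left hℓ (one_le_pow₀ one_le_two)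
  have hsplit : √(2 ^ g * ℓ) * √(2 ^ (h - g)) = √(2 ^ h * ℓ) := by
    rw [← sqrt_mul (by positivity), mul_right_comm, ← pow_add, Nat.add_sub_cancel' hgh]
  calc Θ * (δ * (Θ + 2) * √(2 ^ g * ℓ) + 2 * μ) * (√(2 ^ h * ℓ) * √(2 ^ (h - g)))
      ≤ Θ * (δ * (Θ + 2) * √(2 ^ g * ℓ) + δ * √(2 ^ g * ℓ)) *
        (√(2 ^ h * ℓ) * √(2 ^ (h - g))) := by gcongr
    _ = √(2 ^ h * ℓ) * (Θ * (δ * (Θ + 3) * (√(2 ^ g * ℓ) * √(2 ^ (h - g))))) := by ring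
    _ = √(2 ^ h * ℓ) * (Θ * (δ * (Θ + 3) * √(2 ^ h * ℓ))) := by rw [hsplit]

namespace IsApproxEuler

lemma norm_dyadicTrunc_sub_dyadicTrunc_le_two (hy : IsApproxEuler J δ ℓ μ G y z) (hδ : 0 ≤ δ)
    (hℓ : 0 ≤ ℓ) (hΘ : 1 ≤ Θ) (hμ1 : 2 * μ ≤ 1)
    (hJ : J * Θ * (δ * (Θ + 3) * √(2 ^ J * ℓ)) ≤ 1 / 2) {h b : ℕ} (hh : h ≤ J)
    (hb : b < 2 ^ (J - h))
    (hinc : ∀ g < h, ∀ n < 2 ^ J,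
      ‖y (dyadicTrunc g n) - y (dyadicTrunc (g + 1) n)‖ ≤ δ * (Θ + 2) * √(2 ^ g * ℓ))
    {g n l : ℕ} (hg : g ≤ h) (hn : n ∈ dyadicBlock h b) (hl : l ∈ dyadicBlock h b) :
    ‖z (dyadicTrunc g n) - z (dyadicTrunc g l)‖ ≤ 2 := by
  have hlt {m : ℕ} (hm : m ∈ dyadicBlock h b) : dyadicTrunc g m < 2 ^ J :=
    (dyadicTrunc_le g m).trans_lt (lt_two_pow_of_mem_dyadicBlock hh hb hm)
  have hspread {m : ℕ} (hm : m ∈ dyadicBlock h b) :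
      ‖y (dyadicTrunc g m) - y (b * 2 ^ h)‖ ≤ 1 / 2 := by
    rw [← dyadicTrunc_of_mem_dyadicBlock hm]
    calc _ ≤ ((h - g : ℕ) : ℝ) * (δ * (Θ + 2) * √(2 ^ J * ℓ)) := by
          refine norm_dyadicTrunc_sub_le hg fun i hi =>
            (hinc i hi m (lt_two_pow_of_mem_dyadicBlock hh hb hm)).trans ?_
          have := sqrt_two_pow_mul_le_sqrt hℓ (hi.le.trans hh)
          gcongr
      _ ≤ J * Θ * (δ * (Θ + 3) * √(2 ^ J * ℓ)) := by
          gcongr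
          · exact (Nat.cast_le.2 ((Nat.sub_le h g).trans hh)).trans
              (le_mul_of_one_le_right (Nat.cast_nonneg J) hΘ)
          · norm_num
      _ ≤ 1 / 2 := hJ
  have hyy : ‖y (dyadicTrunc g n) - y (dyadicTrunc g l)‖ ≤ 1 / 2 + 1 / 2 := by
    rw [← sub_sub_sub_cancel_right _ _ (y (b * 2 ^ h))]
    exact (_root_.norm_sub_le _ _).trans (add_le_add (hspread hn) (hspread hl))
  linarith [hy.norm_sub_le_add (hlt hn) (hlt hl)]

lemma norm_sum_correction_le (hy : IsApproxEuler J δ ℓ μ G y z)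
    (hG : BlockSumsBounded J ℓ Θ (fun g => δ * (Θ + 2) * √(2 ^ g * ℓ) + 2 * μ) G z)
    (hδ : 0 ≤ δ) (hℓ : 0 ≤ ℓ) (hΘ : 1 ≤ Θ) (hμ : 2 * μ ≤ δ * √ℓ) (hμ1 : 2 * μ ≤ 1)
    (hJ : J * Θ * (δ * (Θ + 3) * √(2 ^ J * ℓ)) ≤ 1 / 2) {h b : ℕ} (hh : h ≤ J)
    (hb : b < 2 ^ (J - h))
    (hinc : ∀ g < h, ∀ n < 2 ^ J,
      ‖y (dyadicTrunc g n) - y (dyadicTrunc (g + 1) n)‖ ≤ δ * (Θ + 2) * √(2 ^ g * ℓ)) :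
    ‖∑ g ∈ Finset.range h, ∑ n ∈ dyadicBlock h b,
      ℓ • (G n (z (dyadicTrunc g n)) - G n (z (dyadicTrunc (g + 1) n)))‖ ≤ √(2 ^ h * ℓ) := by
  set S := √(2 ^ h * ℓ)
  have hcorr (g : ℕ) (hg : g ∈ Finset.range h) :
      ‖∑ n ∈ dyadicBlock h b,
        ℓ • (G n (z (dyadicTrunc g n)) - G n (z (dyadicTrunc (g + 1) n)))‖ ≤
      S * (Θ * (δ * (Θ + 3) * S)) := by
    rw [Finset.mem_range] at hg
    refine (hG.norm_correction_le h g b hh hg hb (fun i hi n hn l hl =>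
      hy.norm_dyadicTrunc_sub_dyadicTrunc_le_two hδ hℓ hΘ hμ1 hJ hh hb hinc
        (hi.2.trans hg) hn hl) fun n hn => ?_).trans
      (mul_correction_le hδ hℓ (by positivity) hμ hg.le)
    have hlt := lt_two_pow_of_mem_dyadicBlock hh hb hn
    exact (hy.norm_sub_le_add ((dyadicTrunc_le _ n).trans_lt hlt)
      ((dyadicTrunc_le _ n).trans_lt hlt)).trans (by linarith [hinc g hg n hlt])
  refine (norm_sum_le_of_le _ hcorr).trans ?_
  rw [Finset.sum_const, Finset.card_range, nsmul_eq_mul]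
  have := sqrt_two_pow_mul_le_sqrt hℓ hh
  calc (h : ℝ) * (S * (Θ * (δ * (Θ + 3) * S)))
      ≤ J * (S * (Θ * (δ * (Θ + 3) * √(2 ^ J * ℓ)))) := by gcongr
    _ = S * (J * Θ * (δ * (Θ + 3) * √(2 ^ J * ℓ))) := by ring
    _ ≤ S := mul_le_of_le_one_right (sqrt_nonneg _) (by linarith)

/-- The contribution of each scale to a block is a small multiple of the contribution of the
frozen position, so the induction closes because there are only `J` scales. -/
theorem norm_block_increment_le (hy : IsApproxEuler J δ ℓ μ G y z)
    (hG : BlockSumsBounded J ℓ Θ (fun g => δ * (Θ + 2) * √(2 ^ g * ℓ) + 2 * μ) G z)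
    (hδ : 0 ≤ δ) (hℓ : 0 ≤ ℓ) (hΘ : 1 ≤ Θ) (hμ : 2 * μ ≤ δ * √ℓ)
    (hT : δ * √(2 ^ J * ℓ) ≤ 1) (hJ : J * Θ * (δ * (Θ + 3) * √(2 ^ J * ℓ)) ≤ 1 / 2) :
    ∀ h ≤ J, ∀ b < 2 ^ (J - h),
      ‖y ((b + 1) * 2 ^ h) - y (b * 2 ^ h)‖ ≤ δ * (Θ + 2) * √(2 ^ h * ℓ) := by
  have hμ1 : 2 * μ ≤ 1 := by
    have := sqrt_two_pow_mul_le_sqrt hℓ J.zero_le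
    rw [pow_zero, one_mul] at this
    exact hμ.trans ((mul_le_mul_of_nonneg_left this hδ).trans hT)
  intro h
  induction h using Nat.strong_induction_on with
  | _ h ih =>
  intro hh b hb
  have hinc (g : ℕ) (hg : g < h) (n : ℕ) (hn : n < 2 ^ J) :
      ‖y (dyadicTrunc g n) - y (dyadicTrunc (g + 1) n)‖ ≤ δ * (Θ + 2) * √(2 ^ g * ℓ) :=
    norm_sub_dyadicTrunc_succ_le (by positivity) (hg.le.trans hh)
      (ih g hg (hg.le.trans hh)) hn
  set S := √(2 ^ h * ℓ)
  rw [sub_eq_sum_add G y z h b]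
  calc _ ≤ δ * S + δ * (Θ * S + S) := by
        refine (norm_add_le _ _).trans
          (add_le_add (hy.norm_sum_step_le hδ hℓ hT hh hb) ?_)
        rw [norm_smul, norm_of_nonneg hδ]
        gcongr
        exact (norm_add_le _ _).trans (add_le_add (hG.norm_frozen_le h b hh hb)
          (hy.norm_sum_correction_le hG hδ hℓ hΘ hμ hμ1 hJ hh hb hinc))
    _ = δ * (Θ + 2) * S := by ring

end IsApproxEuler

end Multiscale

section UnionBound

open Real

lemma measure_biUnion_finset_le_ofReal {Ω ι : Type*} [MeasurableSpace Ω] {P : Measure Ω}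
    {S : Finset ι} {A : ι → Set Ω} {c K : ℝ} (hK : (S.card : ℝ) ≤ K) (hc : 0 ≤ c)
    (hA : ∀ i ∈ S, P (A i) ≤ ENNReal.ofReal c) :
    P (⋃ i ∈ S, A i) ≤ ENNReal.ofReal (K * c) := by
  refine (measure_biUnion_finset_le S A).trans ((Finset.sum_le_card_nsmul _ _ _ hA).trans ?_)
  rw [nsmul_eq_mul, ← ENNReal.ofReal_natCast, ← ENNReal.ofReal_mul (by positivity)]
  gcongr

lemma exists_finset_card_le_forall_exists_eqOn {ι X : Type*} [Nonempty X] (Q : Finset ι)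
    (A : Finset X) : ∃ S : Finset (ι → X), S.card ≤ A.card ^ Q.card ∧
      ∀ w : ι → X, (∀ q ∈ Q, w q ∈ A) → ∃ w' ∈ S, EqOn w' w Q := by
  classical
  let extend (p : Q → X) : ι → X := Function.extend Subtype.val p fun _ => Classical.arbitrary X
  refine ⟨(Fintype.piFinset fun _ : Q => A).image extend, Finset.card_image_le.trans ?_,
    fun w hw => ⟨extend fun q => w q, Finset.mem_image_of_mem _ ?_, fun q hq => ?_⟩⟩
  · simp
  · exact Fintype.mem_piFinset.2 fun q => hw q q.2
  · exact Subtype.val_injective.extend_apply (fun q : Q => w q) _ ⟨q, hq⟩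

lemma exists_finset_card_le_forall_exists_eq_dyadicTrunc {X : Type*} [Nonempty X] (A : Finset X)
    {g h : ℕ} (hg : g ≤ h) (b : ℕ) : ∃ S : Finset (ℕ → X), S.card ≤ A.card ^ 2 ^ (h - g) ∧
      ∀ z : ℕ → X, (∀ n ∈ dyadicBlock h b, z n ∈ A) → ∀ i ∈ Icc g h,
        ∃ w ∈ S, ∀ n ∈ dyadicBlock h b, w n = z (dyadicTrunc i n) := by
  classical
  obtain ⟨S, hcard, hS⟩ := exists_finset_card_le_forall_exists_eqOn (dyadicBlock (h - g) b) A
  rw [card_dyadicBlock] at hcard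
  refine ⟨S.image fun w n => w (n / 2 ^ g), Finset.card_image_le.trans hcard, fun z hz i hi => ?_⟩
  obtain ⟨w, hw, hwz⟩ := hS (fun q => z (dyadicTrunc i (q * 2 ^ g))) fun q hq =>
    hz _ (dyadicTrunc_mem_dyadicBlock hi.2 (mul_mem_dyadicBlock hg hq))
  exact ⟨_, Finset.mem_image_of_mem _ hw, fun n hn =>
    (hwz (div_mem_dyadicBlock hg hn)).trans (congrArg z (dyadicTrunc_div_mul hi.1 n))⟩

variable {E : Type*} [NormedAddCommGroup E] [InnerProductSpace ℝ E] {Ω : Type*}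
  {v : E} {ℓ Θ : ℝ}

/-- The event that the sum of `f` over a dyadic block, at some position frozen in the grid `A`,
exceeds its expected size by the factor `Θ`. -/
def frozenDeviation (v : E) (ℓ Θ : ℝ) (f : Ω → E → ℝ) (A : Finset E) (h b : ℕ) : Set Ω :=
  {ω | ∃ w ∈ A, Θ * √(2 ^ h * ℓ) < |∑ n ∈ dyadicBlock h b, ℓ * f ω ((n * ℓ) • v + w)|}

/-- The event that, for some path in the grid `A`, the change of the sum of `f` over a dyadic block
made by refining the time resolution of the path from `2ᵍ⁺¹` to `2ᵍ` exceeds its expected size by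
the factor `Θ`. -/
def correctionDeviation (v : E) (ℓ Θ η : ℝ) (f : Ω → E → ℝ) (A : Finset E) (h g b : ℕ) : Set Ω :=
  {ω | ∃ z : ℕ → E, (∀ n ∈ dyadicBlock h b, z n ∈ A) ∧
    (∀ i ∈ Icc g (g + 1), ∀ n ∈ dyadicBlock h b, ∀ l ∈ dyadicBlock h b,
      ‖z (dyadicTrunc i n) - z (dyadicTrunc i l)‖ ≤ 2) ∧
    (∀ n ∈ dyadicBlock h b, ‖z (dyadicTrunc g n) - z (dyadicTrunc (g + 1) n)‖ ≤ η) ∧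
    Θ * η * (√(2 ^ h * ℓ) * √(2 ^ (h - g))) < |∑ n ∈ dyadicBlock h b,
      ℓ * (f ω ((n * ℓ) • v + z (dyadicTrunc g n)) -
        f ω ((n * ℓ) • v + z (dyadicTrunc (g + 1) n)))|}

/-- The event that some sum of `f` over a dyadic block contained in `[0, 2ᴶ)` has a large deviation;
`η g` is the size of the corrections at the time resolution `2ᵍ`. -/
def blockDeviation (v : E) (ℓ Θ : ℝ) (η : ℕ → ℝ) (f : Ω → E → ℝ) (A : Finset E) (J : ℕ) : Set Ω :=
  ⋃ h ∈ Finset.range (J + 1), ⋃ b ∈ Finset.range (2 ^ (J - h)),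
    frozenDeviation v ℓ Θ f A h b ∪
      ⋃ g ∈ Finset.range h, correctionDeviation v ℓ Θ (η g) f A h g b

lemma AdvancesAlong.dyadicBlock (hv : ‖v‖ = 1) {h b : ℕ} {z : ℕ → E}
    (hz : ∀ n ∈ dyadicBlock h b, ∀ l ∈ dyadicBlock h b, ‖z n - z l‖ ≤ 2) :
    AdvancesAlong v ℓ fun m : Fin (2 ^ h) =>
      ((b * 2 ^ h + m : ℕ) * ℓ) • v + z (b * 2 ^ h + m) := by
  simpa only [Nat.cast_add, add_mul] using AdvancesAlong.line_add hv ((b * 2 ^ h : ℕ) * ℓ)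
    fun m l : Fin (2 ^ h) => hz _ (add_mem_dyadicBlock m.2) _ (add_mem_dyadicBlock l.2)

lemma blockSumsBounded_of_forall_notMem_blockDeviation {d : ℕ} {v : EuclideanSpace ℝ (Fin d)}
    {F : Ω → EuclideanSpace ℝ (Fin d) → EuclideanSpace ℝ (Fin d)} {η : ℕ → ℝ}
    {A : Finset (EuclideanSpace ℝ (Fin d))} {J : ℕ} {ω : Ω}
    (hω : ∀ i, ω ∉ blockDeviation v ℓ Θ η (fun ω x => F ω x i) A J)
    {z : ℕ → EuclideanSpace ℝ (Fin d)} (hz : ∀ n < 2 ^ J, z n ∈ A) :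
    BlockSumsBounded J ℓ (d * Θ) η (fun n w => F ω ((n * ℓ) • v + w)) z := by
  simp only [blockDeviation, mem_iUnion, mem_union, Finset.mem_range, Nat.lt_succ_iff,
    not_exists, not_or] at hω
  refine ⟨fun h b hh hb => ?_, fun h g b hh hg hb hclose hdiff => ?_⟩
  · rw [mul_assoc]
    refine norm_le_card_mul fun i => not_lt.1 fun hlt => (hω i h hh b hb).1 ⟨z (b * 2 ^ h), ?_, ?_⟩
    · exact hz _ (lt_two_pow_of_mem_dyadicBlock hh hb (add_mem_dyadicBlock (by positivity)))
    · simpa using hlt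
  · rw [mul_assoc, mul_assoc, ← mul_assoc Θ]
    refine norm_le_card_mul fun i => not_lt.1 fun hlt => (hω i h hh b hb).2 g hg
      ⟨z, fun n hn => hz n (lt_two_pow_of_mem_dyadicBlock hh hb hn), hclose, hdiff, ?_⟩
    simpa using hlt

variable [MeasurableSpace Ω] {P : Measure Ω} {C η : ℝ} {f : Ω → E → ℝ}

namespace IsLineSubgaussian

lemma measure_frozenDeviation_le [IsFiniteMeasure P] (hf : IsLineSubgaussian v C f P)
    (hC : 0 < C) (hv : ‖v‖ = 1) (hℓ : ℓ ∈ Ioc (0 : ℝ) 1) (hΘ : 0 ≤ Θ) (A : Finset E) (h b : ℕ) :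
    P (frozenDeviation v ℓ Θ f A h b) ≤
      ENNReal.ofReal (A.card * (2 * exp (-Θ ^ 2 / (2 * C ^ 2)))) := by
  have hpos : 0 < 2 ^ h * ℓ := mul_pos (by positivity) hℓ.1
  have htail (w : E) : P {ω | Θ * √(2 ^ h * ℓ) ≤
      |∑ n ∈ dyadicBlock h b, ℓ * f ω ((n * ℓ) • v + w)|} ≤
      ENNReal.ofReal (2 * exp (-Θ ^ 2 / (2 * C ^ 2))) := by
    simp only [sum_dyadicBlock_eq_sum_fin]
    have hline : AdvancesAlong v ℓ fun m : Fin (2 ^ h) => ((b * 2 ^ h + m : ℕ) * ℓ) • v + w :=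
      AdvancesAlong.dyadicBlock hv (z := fun _ => w) fun _ _ _ _ => by simp
    refine (measure_le_abs_le_of_hasSubgaussianMGF
      (mul_nonneg (sq_nonneg C) (by simpa using hpos.le)) (hf.sum hℓ hline)
      (by positivity)).trans_eq ?_
    rw [mul_pow, sq_sqrt hpos.le]
    congr 3
    have := hℓ.1
    push_cast
    field_simp
  refine (measure_mono fun ω hω => ?_).trans
    (measure_biUnion_finset_le_ofReal le_rfl (by positivity) fun w _ => htail w)
  obtain ⟨w, hw, hlt⟩ := hω
  exact mem_iUnion₂.2 ⟨w, hw, hlt.le⟩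

lemma measure_le_abs_sum_sub_le [IsFiniteMeasure P] (hf : IsLineSubgaussian v C f P)
    (hC : 0 < C) (hv : ‖v‖ = 1) (hℓ : ℓ ∈ Ioc (0 : ℝ) 1) (hΘ : 0 ≤ Θ) (hη : 0 < η) {h b : ℕ}
    (k : ℕ) {z z' : ℕ → E}
    (hz : ∀ n ∈ dyadicBlock h b, ∀ l ∈ dyadicBlock h b, ‖z n - z l‖ ≤ 2)
    (hz' : ∀ n ∈ dyadicBlock h b, ∀ l ∈ dyadicBlock h b, ‖z' n - z' l‖ ≤ 2)
    (hzz' : ∀ n ∈ dyadicBlock h b, ‖z n - z' n‖ ≤ η) :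
    P {ω | Θ * η * (√(2 ^ h * ℓ) * √(2 ^ k)) ≤ |∑ n ∈ dyadicBlock h b,
      ℓ * (f ω ((n * ℓ) • v + z n) - f ω ((n * ℓ) • v + z' n))|} ≤
      ENNReal.ofReal (2 * exp (-Θ ^ 2 / (2 * C ^ 2)) ^ 2 ^ k) := by
  have hpos : 0 < 2 ^ h * ℓ := mul_pos (by positivity) hℓ.1
  simp only [sum_dyadicBlock_eq_sum_fin]
  refine (measure_le_abs_le_of_hasSubgaussianMGF
    (mul_nonneg (sq_nonneg C) (mul_nonneg (sq_nonneg η) (by simpa using hpos.le)))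
    (hf.sum_sub hℓ (AdvancesAlong.dyadicBlock hv hz') (AdvancesAlong.dyadicBlock hv hz) fun m => by
      simpa using hzz' _ (add_mem_dyadicBlock m.2))
    (by positivity)).trans_eq ?_
  rw [← exp_nat_mul, mul_pow, mul_pow, mul_pow, sq_sqrt hpos.le, sq_sqrt (by positivity)]
  congr 3
  have := hℓ.1
  push_cast
  field_simp

/-- The union bound runs over paths with `2ʰ⁻ᵍ` free positions; the factor `√(2ʰ⁻ᵍ)` in the
deviation raises the tail probability to the same power. -/
lemma measure_correctionDeviation_le [IsFiniteMeasure P] (hf : IsLineSubgaussian v C f P)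
    (hC : 0 < C) (hv : ‖v‖ = 1) (hℓ : ℓ ∈ Ioc (0 : ℝ) 1) (hΘ : 0 ≤ Θ) (hη : 0 < η) {A : Finset E}
    (hA : (A.card : ℝ) ^ 2 * exp (-Θ ^ 2 / (2 * C ^ 2)) ≤ 1) {h g : ℕ} (hg : g < h) (b : ℕ) :
    P (correctionDeviation v ℓ Θ η f A h g b) ≤
      ENNReal.ofReal (2 * (A.card ^ 2 * exp (-Θ ^ 2 / (2 * C ^ 2)))) := by
  classical
  obtain ⟨S, hScard, hS⟩ := exists_finset_card_le_forall_exists_eq_dyadicTrunc A hg.le b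
  let admissible (p : (ℕ → E) × (ℕ → E)) : Prop :=
    (∀ n ∈ dyadicBlock h b, ∀ l ∈ dyadicBlock h b, ‖p.1 n - p.1 l‖ ≤ 2) ∧
    (∀ n ∈ dyadicBlock h b, ∀ l ∈ dyadicBlock h b, ‖p.2 n - p.2 l‖ ≤ 2) ∧
    ∀ n ∈ dyadicBlock h b, ‖p.1 n - p.2 n‖ ≤ η
  have hcard : (((S ×ˢ S).filter admissible).card : ℝ) ≤ ((A.card : ℝ) ^ 2) ^ 2 ^ (h - g) := by
    have := (Finset.card_filter_le (S ×ˢ S) admissible).trans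
      ((Finset.card_product S S).trans_le (Nat.mul_le_mul hScard hScard))
    rw [← mul_pow, ← sq] at this
    exact_mod_cast this
  have hunion := measure_biUnion_finset_le_ofReal hcard (by positivity) fun p hp =>
    have hp := (Finset.mem_filter.1 hp).2
    hf.measure_le_abs_sum_sub_le hC hv hℓ hΘ hη (h - g) hp.1 hp.2.1 hp.2.2
  refine (measure_mono ?_).trans (hunion.trans (ENNReal.ofReal_le_ofReal ?_))
  · rintro ω ⟨z, hzA, hclose, hdiff, hlt⟩
    obtain ⟨w, hw, hwz⟩ := hS z hzA g ⟨le_rfl, hg.le⟩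
    obtain ⟨w', hw', hwz'⟩ := hS z hzA (g + 1) ⟨g.le_succ, hg⟩
    refine mem_iUnion₂.2 ⟨(w, w'),
      Finset.mem_filter.2 ⟨Finset.mk_mem_product hw hw', fun n hn l hl => ?_, fun n hn l hl => ?_,
        fun n hn => ?_⟩, hlt.le.trans_eq (congrArg _ (Finset.sum_congr rfl fun n hn => ?_))⟩
    · simpa only [hwz n hn, hwz l hl] using hclose g ⟨le_rfl, g.le_succ⟩ n hn l hl
    · simpa only [hwz' n hn, hwz' l hl] using hclose (g + 1) ⟨g.le_succ, le_rfl⟩ n hn l hl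
    · simpa only [hwz n hn, hwz' n hn] using hdiff n hn
    · simp only [hwz n hn, hwz' n hn]
  · rw [mul_left_comm, ← mul_pow]
    gcongr
    exact pow_le_of_le_one (by positivity) hA (by positivity)

lemma measure_blockDeviation_le [IsFiniteMeasure P] (hf : IsLineSubgaussian v C f P)
    (hC : 0 < C) (hv : ‖v‖ = 1) (hℓ : ℓ ∈ Ioc (0 : ℝ) 1) (hΘ : 0 ≤ Θ) {η : ℕ → ℝ}
    (hη : ∀ g, 0 < η g) {A : Finset E} (hA : (A.card : ℝ) ^ 2 * exp (-Θ ^ 2 / (2 * C ^ 2)) ≤ 1)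
    (J : ℕ) : P (blockDeviation v ℓ Θ η f A J) ≤ ENNReal.ofReal
      ((J + 1) * (2 ^ J * ((J + 1) * (2 * (A.card ^ 2 * exp (-Θ ^ 2 / (2 * C ^ 2))))))) := by
  set c := 2 * ((A.card : ℝ) ^ 2 * exp (-Θ ^ 2 / (2 * C ^ 2))) with hc
  have hc0 : 0 ≤ c := by positivity
  refine measure_biUnion_finset_le_ofReal (by simp) (by positivity) fun h hh =>
    measure_biUnion_finset_le_ofReal ?_ (by positivity) fun b _ =>
      (measure_union_le _ _).trans ?_
  · rw [Finset.card_range]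
    exact_mod_cast Nat.pow_le_pow_right two_pos (Nat.sub_le J h)
  have hhJ : (h : ℝ) ≤ J := by exact_mod_cast Finset.mem_range_succ_iff.1 hh
  have hfrozen : P (frozenDeviation v ℓ Θ f A h b) ≤ ENNReal.ofReal c := by
    refine (hf.measure_frozenDeviation_le hC hv hℓ hΘ A h b).trans (ENNReal.ofReal_le_ofReal ?_)
    rw [hc, mul_left_comm]
    gcongr
    exact_mod_cast Nat.le_self_pow two_ne_zero A.card
  have hcorrection : P (⋃ g ∈ Finset.range h, correctionDeviation v ℓ Θ (η g) f A h g b) ≤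
      ENNReal.ofReal (h * c) :=
    measure_biUnion_finset_le_ofReal (by simp) hc0 fun g hg =>
      hf.measure_correctionDeviation_le hC hv hℓ hΘ (hη g) hA (Finset.mem_range.1 hg) b
  refine (add_le_add hfrozen hcorrection).trans ?_
  rw [← ENNReal.ofReal_add hc0 (by positivity)]
  gcongr
  linarith [mul_le_mul_of_nonneg_right hhJ hc0]

end IsLineSubgaussian

lemma measure_exists_not_blockSumsBounded_le [IsFiniteMeasure P] {d : ℕ}
    {v : EuclideanSpace ℝ (Fin d)} {F : Ω → EuclideanSpace ℝ (Fin d) → EuclideanSpace ℝ (Fin d)}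
    (hF : ∀ i, IsLineSubgaussian v C (fun ω x => F ω x i) P) (hC : 0 < C) (hv : ‖v‖ = 1)
    (hℓ : ℓ ∈ Ioc (0 : ℝ) 1) (hΘ : 0 ≤ Θ) {η : ℕ → ℝ} (hη : ∀ g, 0 < η g)
    {A : Finset (EuclideanSpace ℝ (Fin d))}
    (hA : (A.card : ℝ) ^ 2 * exp (-Θ ^ 2 / (2 * C ^ 2)) ≤ 1) (J : ℕ) :
    P {ω | ∃ z : ℕ → EuclideanSpace ℝ (Fin d), (∀ n < 2 ^ J, z n ∈ A) ∧
      ¬ BlockSumsBounded J ℓ (d * Θ) η (fun n w => F ω ((n * ℓ) • v + w)) z} ≤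
    ENNReal.ofReal (d *
      ((J + 1) * (2 ^ J * ((J + 1) * (2 * (A.card ^ 2 * exp (-Θ ^ 2 / (2 * C ^ 2)))))))) := by
  refine (measure_mono ?_).trans (measure_biUnion_finset_le_ofReal (S := Finset.univ) (by simp)
    (by positivity) fun i _ => (hF i).measure_blockDeviation_le hC hv hℓ hΘ hη hA J)
  rintro ω ⟨z, hzA, hz⟩
  by_contra hω
  simp only [Finset.mem_univ, iUnion_true, mem_iUnion, not_exists] at hω
  exact hz (blockSumsBounded_of_forall_notMem_blockDeviation hω hzA)

end UnionBound

/-! ### Discretization of the trajectory -/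

section Discretization

open Real

variable {d : ℕ}

/-- The points of the dyadic lattice of mesh `2⁻ᵏ` whose coordinates are at most `2⁻ᵏM` in absolute
value. -/
noncomputable def dyadicGrid (d k : ℕ) (M : ℤ) : Finset (EuclideanSpace ℝ (Fin d)) := by
  classical exact (Fintype.piFinset fun _ => Finset.Icc (-M) M).image (dyadicPoint k)

lemma card_dyadicGrid_le (d k : ℕ) {M : ℤ} {A : ℝ} (hM : 0 ≤ M) (hA : 2 * M + 1 ≤ A) :
    ((dyadicGrid d k M).card : ℝ) ≤ A ^ d := by
  classical
  have hcard : (dyadicGrid d k M).card ≤ (M + 1 - -M).toNat ^ d := by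
    unfold dyadicGrid
    exact Finset.card_image_le.trans_eq (by simp)
  have hbase : ((M + 1 - -M).toNat : ℝ) ≤ A := by
    have hcast : ((M + 1 - -M).toNat : ℝ) = (M + 1 - -M : ℤ) := by
      exact_mod_cast congrArg (Int.cast (R := ℝ)) (Int.toNat_of_nonneg (by lia))
    rw [hcast]
    push_cast
    linarith
  calc ((dyadicGrid d k M).card : ℝ) ≤ ((M + 1 - -M).toNat : ℝ) ^ d := by exact_mod_cast hcard
    _ ≤ A ^ d := by gcongr

lemma dyadicPoint_dyadicFloor_mem_dyadicGrid {k : ℕ} {A : ℝ} {x : EuclideanSpace ℝ (Fin d)}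
    (hA : 2 ^ k * ‖x‖ + 1 ≤ A) : dyadicPoint k (dyadicFloor k x) ∈ dyadicGrid d k ⌊A⌋ := by
  unfold dyadicGrid
  refine Finset.mem_image_of_mem _ (Fintype.mem_piFinset.2 fun j => Finset.mem_Icc.2 ?_)
  have hj : |2 ^ k * x j| ≤ 2 ^ k * ‖x‖ := by
    rw [abs_mul, abs_of_pos (by positivity)]
    gcongr
    exact PiLp.norm_apply_le x j
  have hj' := abs_le.1 hj
  refine ⟨Int.le_floor.2 ?_, Int.floor_mono (by linarith)⟩
  push_cast
  linarith [Int.sub_one_lt_floor A]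

lemma exists_two_pow_mem_Icc {D : ℝ} (hD : 2 ≤ D) (n : ℕ) :
    ∃ j : ℕ, (2 : ℝ) ^ j ∈ Icc (D ^ n) (D ^ (n + 1)) := by
  obtain ⟨j, hle, hlt⟩ := exists_nat_pow_near (one_le_pow₀ (by linarith) : 1 ≤ D ^ n) one_lt_two
  refine ⟨j + 1, hlt.le, ?_⟩
  rw [pow_succ, pow_succ]
  gcongr

/-- Admissible scales for a particle in a field of strength `D⁻¹` up to time `T`: the time interval
is cut into `2ᴶ` steps of length `ℓ`, and positions are rounded to the lattice of mesh `2⁻ᵏ`.  The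
exponents leave room for the polynomial losses in `D` of the crude bounds on the trajectory. -/
structure IsDiscretization (d q J k : ℕ) (D T ℓ : ℝ) : Prop where
  le_D : 64 * (1 + (d : ℝ)) ^ 2 ≤ D
  T_le : T ≤ D ^ 3
  le_T : 1 ≤ T * D ^ q
  pow_J_mem : (2 : ℝ) ^ J ∈ Icc (D ^ 45) (D ^ 46)
  pow_k_mem : (2 : ℝ) ^ k ∈ Icc (D ^ (q + 48)) (D ^ (q + 49))
  steps : 2 ^ J * ℓ = T

lemma exists_isDiscretization {q : ℕ} {D T : ℝ} (hD : 64 * (1 + (d : ℝ)) ^ 2 ≤ D)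
    (hTD : T ≤ D ^ 3) (hTq : 1 ≤ T * D ^ q) : ∃ J k ℓ, IsDiscretization d q J k D T ℓ := by
  have hD2 : 2 ≤ D := by nlinarith [Nat.cast_nonneg (α := ℝ) d]
  obtain ⟨J, hJ⟩ := exists_two_pow_mem_Icc hD2 45
  obtain ⟨k, hk⟩ := exists_two_pow_mem_Icc hD2 (q + 48)
  exact ⟨J, k, T / 2 ^ J, hD, hTD, hTq, hJ, hk, by field_simp⟩

namespace IsDiscretization

variable {q J k : ℕ} {D T ℓ : ℝ}

lemma sixtyFour_le (h : IsDiscretization d q J k D T ℓ) : 64 ≤ D := by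
  nlinarith [h.le_D, Nat.cast_nonneg (α := ℝ) d]

lemma two_mul_le (h : IsDiscretization d q J k D T ℓ) : 2 * (d : ℝ) ≤ D := by
  nlinarith [h.le_D, Nat.cast_nonneg (α := ℝ) d]

lemma D_pos (h : IsDiscretization d q J k D T ℓ) : 0 < D := by linarith [h.sixtyFour_le]

lemma inv_mem_Ioc (h : IsDiscretization d q J k D T ℓ) : D⁻¹ ∈ Ioc (0 : ℝ) 1 :=
  ⟨inv_pos.2 h.D_pos, inv_le_one_of_one_le₀ (by linarith [h.sixtyFour_le])⟩

lemma T_pos (h : IsDiscretization d q J k D T ℓ) : 0 < T :=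
  pos_of_mul_pos_left (one_pos.trans_le h.le_T) (pow_nonneg h.D_pos.le q)

lemma ℓ_pos (h : IsDiscretization d q J k D T ℓ) : 0 < ℓ :=
  pos_of_mul_pos_right (h.steps ▸ h.T_pos) (by positivity)

lemma ℓ_mul_le_one (h : IsDiscretization d q J k D T ℓ) : ℓ * D ^ 42 ≤ 1 := by
  have hD := h.D_pos
  have hℓ := h.ℓ_pos
  have : ℓ * D ^ 42 * D ^ 3 ≤ 1 * D ^ 3 := by
    calc ℓ * D ^ 42 * D ^ 3 = D ^ 45 * ℓ := by ring
      _ ≤ 2 ^ J * ℓ := by gcongr; exact h.pow_J_mem.1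
      _ ≤ 1 * D ^ 3 := by rw [h.steps, one_mul]; exact h.T_le
  exact le_of_mul_le_mul_right this (by positivity)

lemma ℓ_mem_Ioc (h : IsDiscretization d q J k D T ℓ) : ℓ ∈ Ioc (0 : ℝ) 1 := by
  refine ⟨h.ℓ_pos, le_trans ?_ h.ℓ_mul_le_one⟩
  exact le_mul_of_one_le_right h.ℓ_pos.le (one_le_pow₀ (by linarith [h.sixtyFour_le]))

lemma natCast_mul_le (h : IsDiscretization d q J k D T ℓ) {n : ℕ} (hn : n ≤ 2 ^ J) : n * ℓ ≤ T := by
  rw [← h.steps]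
  have := h.ℓ_pos
  gcongr
  exact_mod_cast hn

lemma two_mul_error_mul_le (h : IsDiscretization d q J k D T ℓ) :
    2 * (d * (1 / 2 ^ k)) * D ^ (q + 47) ≤ 1 := by
  have hD := h.D_pos
  rw [mul_one_div, ← mul_div_assoc, div_mul_eq_mul_div, div_le_one (by positivity)]
  calc 2 * d * D ^ (q + 47) ≤ D * D ^ (q + 47) := by gcongr; exact h.two_mul_le
    _ = D ^ (q + 48) := by ring
    _ ≤ 2 ^ k := h.pow_k_mem.1

lemma two_mul_error_le (h : IsDiscretization d q J k D T ℓ) : 2 * (d * (1 / 2 ^ k)) ≤ D⁻¹ * √ℓ := by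
  have hD := h.D_pos
  have hℓ := h.ℓ_mem_Ioc
  have hℓ_ge : 1 ≤ ℓ * D ^ (q + 46) := by
    calc 1 ≤ 2 ^ J * ℓ * D ^ q := h.steps ▸ h.le_T
      _ ≤ D ^ 46 * ℓ * D ^ q := by gcongr; exacts [hℓ.1.le, h.pow_J_mem.2]
      _ = ℓ * D ^ (q + 46) := by ring
  have hℓ_sqrt : ℓ ≤ √ℓ := le_sqrt_of_sq_le (by nlinarith [hℓ.1, hℓ.2])
  have : 2 * (d * (1 / 2 ^ k)) * D ^ (q + 47) ≤ D⁻¹ * ℓ * D ^ (q + 47) := by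
    calc 2 * (d * (1 / 2 ^ k)) * D ^ (q + 47) ≤ ℓ * D ^ (q + 46) :=
          h.two_mul_error_mul_le.trans hℓ_ge
      _ = D⁻¹ * ℓ * D ^ (q + 47) := by field_simp; ring
  exact (le_of_mul_le_mul_right this (by positivity)).trans (by gcongr)

lemma one_add_pow_mul_ℓ_mul_le_half (h : IsDiscretization d q J k D T ℓ) :
    (1 + D ^ 12) * ℓ * D ^ 28 ≤ 1 / 2 := by
  have hD := h.D_pos
  have hD64 := h.sixtyFour_le
  have hdiv : 2 / D ^ 2 ≤ 1 / 2 := by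
    rw [div_le_iff₀ (by positivity)]
    nlinarith
  calc (1 + D ^ 12) * ℓ * D ^ 28 ≤ (D ^ 12 + D ^ 12) * ℓ * D ^ 28 := by
        gcongr
        exacts [h.ℓ_pos.le, one_le_pow₀ (by linarith)]
    _ = ℓ * D ^ 42 * (2 / D ^ 2) := by field_simp; ring
    _ ≤ 1 * (1 / 2) := mul_le_mul h.ℓ_mul_le_one hdiv (by positivity) zero_le_one
    _ = 1 / 2 := one_mul _

lemma exists_holder_scale (h : IsDiscretization d q J k D T ℓ) : ∃ j : ℕ,
    (1 + D ^ 12) * ℓ + d * (1 / 2 ^ k) ≤ 1 / 2 ^ j ∧ √(1 / 2) ^ j * D ^ 12 ≤ D⁻¹ := by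
  have hD := h.D_pos
  have hD64 := h.sixtyFour_le
  obtain ⟨j, hj⟩ := exists_two_pow_mem_Icc (D := D) (by linarith) 13
  refine ⟨2 * j, ?_, ?_⟩
  · have hpow : (2 : ℝ) ^ (2 * j) ≤ D ^ 28 := by
      rw [mul_comm, pow_mul, show D ^ 28 = (D ^ (13 + 1)) ^ 2 by ring]
      gcongr
      exact hj.2
    have herror : (d : ℝ) * (1 / 2 ^ k) * D ^ 28 ≤ d * (1 / 2 ^ k) * D ^ (q + 47) := by
      gcongr
      · linarith
      · lia
    rw [le_div_iff₀ (by positivity)]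
    calc _ ≤ ((1 + D ^ 12) * ℓ + d * (1 / 2 ^ k)) * D ^ 28 := by
          have := h.ℓ_pos
          gcongr
      _ ≤ 1 := by linarith [h.one_add_pow_mul_ℓ_mul_le_half, h.two_mul_error_mul_le]
  · rw [pow_mul, sq_sqrt (by norm_num), one_div, inv_pow, inv_mul_le_iff₀ (by positivity),
      ← div_eq_mul_inv, le_div_iff₀ hD]
    exact (pow_succ D 12).symm.trans_le hj.1

end IsDiscretization

lemma HasEnvelope.mono {H : Type*} [NormedAddCommGroup H] {N M : ℝ}
    {f : EuclideanSpace ℝ (Fin d) → H} (hf : HasEnvelope N f) (hNM : N ≤ M) : HasEnvelope M f where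
  norm_le x := (hf.norm_le x).trans (by gcongr)
  norm_sub_le k x y hxy := (hf.norm_sub_le k x y hxy).trans (by gcongr)

namespace IsDriftSolution

variable {q J k : ℕ} {D T ℓ N Θ s : ℝ} {v : EuclideanSpace ℝ (Fin d)}
  {f : EuclideanSpace ℝ (Fin d) → EuclideanSpace ℝ (Fin d)} {x : ℝ → EuclideanSpace ℝ (Fin d)}

lemma norm_le_pow_mul_sq (hx : IsDriftSolution v D⁻¹ f x) (hv : ‖v‖ ≤ 1)
    (h : IsDiscretization d q J k D T ℓ) (hN : 1 ≤ N) (hf : HasEnvelope N f) (hs : s ∈ Icc 0 T) :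
    ‖x s‖ ≤ D ^ 7 * N ^ 2 := by
  have hD := h.D_pos
  have hD3 : 1 ≤ D ^ 3 := one_le_pow₀ (by linarith [h.sixtyFour_le])
  calc ‖x s‖ ≤ ((1 + d) * (1 + N) * (1 + s)) ^ 2 :=
        hx.norm_le hv h.inv_mem_Ioc (by simp) (by linarith) hf.norm_le hs.1
    _ ≤ ((1 + d) * (2 * N) * (2 * D ^ 3)) ^ 2 := by
        have := hs.1
        gcongr <;> linarith [hs.2, h.T_le]
    _ = 16 * (1 + d) ^ 2 * (D ^ 6 * N ^ 2) := by ring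
    _ ≤ D * (D ^ 6 * N ^ 2) := by
        gcongr
        nlinarith [h.le_D]
    _ = D ^ 7 * N ^ 2 := by ring

lemma norm_sub_smul_le_pow_mul_sq (hx : IsDriftSolution v D⁻¹ f x) (hv : ‖v‖ ≤ 1)
    (h : IsDiscretization d q J k D T ℓ) (hN : 1 ≤ N) (hf : HasEnvelope N f) (hs : s ∈ Icc 0 T) :
    ‖x s - s • v‖ ≤ D ^ 8 * N ^ 2 := by
  have hD := h.D_pos
  have hdrift : ‖s • v‖ ≤ D ^ 7 * N ^ 2 := by
    rw [norm_smul, norm_of_nonneg hs.1]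
    calc s * ‖v‖ ≤ D ^ 3 * 1 := by
          gcongr
          exact hs.2.trans h.T_le
      _ ≤ D ^ 7 * N ^ 2 := by
          gcongr
          · linarith [h.sixtyFour_le]
          · norm_num
          · exact one_le_pow₀ hN
  calc ‖x s - s • v‖ ≤ ‖x s‖ + ‖s • v‖ := _root_.norm_sub_le _ _
    _ ≤ 2 * (D ^ 7 * N ^ 2) := by linarith [hx.norm_le_pow_mul_sq hv h hN hf hs]
    _ ≤ D * (D ^ 7 * N ^ 2) := by
        gcongr
        linarith [h.sixtyFour_le]
    _ = D ^ 8 * N ^ 2 := by ring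

lemma sq_norm_sub_smul_le_of_pow_four_le (hx : IsDriftSolution v D⁻¹ f x) (hv : ‖v‖ ≤ 1)
    (hd : 2 ≤ d) (h : IsDiscretization d q J k D T ℓ) (hN : D ^ 4 ≤ N) (hf : HasEnvelope N f) :
    ‖x T - T • v‖ ^ 2 ≤ D⁻¹ ^ 8 * N ^ (4 * d + 2) := by
  have hD := h.D_pos
  have hN1 : 1 ≤ N := (one_le_pow₀ (by linarith [h.sixtyFour_le])).trans hN
  rw [inv_pow, ← div_eq_inv_mul, le_div_iff₀ (by positivity)]
  calc ‖x T - T • v‖ ^ 2 * D ^ 8 ≤ (D ^ 8 * N ^ 2) ^ 2 * D ^ 8 := by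
        gcongr
        exact hx.norm_sub_smul_le_pow_mul_sq hv h hN1 hf ⟨h.T_pos.le, le_rfl⟩
    _ = (D ^ 4) ^ 6 * N ^ 4 := by ring
    _ ≤ N ^ 6 * N ^ 4 := by gcongr
    _ = N ^ (4 * 2 + 2) := by ring
    _ ≤ N ^ (4 * d + 2) := by gcongr

lemma mul_sqrt_le (hx : IsDriftSolution v D⁻¹ f x) (hv : ‖v‖ ≤ 1)
    (h : IsDiscretization d q J k D T ℓ) (hf : HasEnvelope (D ^ 4) f) (hs : s ∈ Icc 0 T) :
    D ^ 4 * √(1 + d + ‖x s‖) ≤ D ^ 12 := by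
  have hD := h.D_pos
  have hD1 (n : ℕ) : 1 ≤ D ^ n := one_le_pow₀ (by linarith [h.sixtyFour_le])
  have hx15 : ‖x s‖ ≤ D ^ 15 := by
    simpa only [← pow_mul, ← pow_add] using hx.norm_le_pow_mul_sq hv h (hD1 4) hf hs
  calc D ^ 4 * √(1 + d + ‖x s‖) ≤ D ^ 4 * D ^ 8 := by
        gcongr
        rw [sqrt_le_left (by positivity)]
        calc 1 + d + ‖x s‖ ≤ (1 + d) * D ^ 15 + D ^ 15 := by
              gcongr
              exact le_mul_of_one_le_right (by positivity) (hD1 15)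
          _ = (d + 2) * D ^ 15 := by ring
          _ ≤ D * D ^ 15 := by
              gcongr
              linarith [h.sixtyFour_le, h.two_mul_le]
          _ = (D ^ 8) ^ 2 := by ring
    _ = D ^ 12 := by ring

end IsDriftSolution

end Discretization

section RoundedDisplacement

open Real

variable {d q J k : ℕ} {D T ℓ Θ : ℝ} {v : EuclideanSpace ℝ (Fin d)}
  {f : EuclideanSpace ℝ (Fin d) → EuclideanSpace ℝ (Fin d)} {x : ℝ → EuclideanSpace ℝ (Fin d)}

/-- The deviation of `x` from the uniform motion with velocity `v`, after `n` time steps `ℓ`. -/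
noncomputable def displacement (v : EuclideanSpace ℝ (Fin d)) (ℓ : ℝ)
    (x : ℝ → EuclideanSpace ℝ (Fin d)) (n : ℕ) : EuclideanSpace ℝ (Fin d) :=
  x (n * ℓ) - (n * ℓ) • v

/-- The displacement rounded to the dyadic lattice of mesh `2⁻ᵏ`. -/
noncomputable def roundedDisplacement (k : ℕ) (v : EuclideanSpace ℝ (Fin d)) (ℓ : ℝ)
    (x : ℝ → EuclideanSpace ℝ (Fin d)) (n : ℕ) : EuclideanSpace ℝ (Fin d) :=
  dyadicPoint k (dyadicFloor k (displacement v ℓ x n))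

/-- The size of the change of the rounded displacement during `2ᵍ` time steps, up to the rounding
error. -/
noncomputable def correctionSize (d k : ℕ) (D ℓ Θ : ℝ) (g : ℕ) : ℝ :=
  D⁻¹ * (Θ + 2) * √(2 ^ g * ℓ) + 2 * (d * (1 / 2 ^ k))

namespace IsDriftSolution

lemma isApproxEuler_displacement (hx : IsDriftSolution v D⁻¹ f x) (hv : ‖v‖ ≤ 1)
    (h : IsDiscretization d q J k D T ℓ) (hf : HasEnvelope (D ^ 4) f) :
    IsApproxEuler J D⁻¹ ℓ (d * (1 / 2 ^ k)) (fun n w => f ((n * ℓ) • v + w)) (displacement v ℓ x)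
      (roundedDisplacement k v ℓ x) where
  norm_step_le n hn := by
    obtain ⟨j, hj, hε⟩ := h.exists_holder_scale
    have hD := h.D_pos
    have hℓ := h.ℓ_pos
    have hsucc : (n : ℝ) * ℓ + ℓ = (n + 1 : ℕ) * ℓ := by push_cast; ring
    have := hx.norm_euler_step_le hv h.inv_mem_Ioc hf (fun u hu => hx.mul_sqrt_le hv h hf hu)
      (by positivity) hℓ.le hj hε (s := n * ℓ) (by positivity)
      (hsucc ▸ h.natCast_mul_le hn) (norm_dyadicPoint_dyadicFloor_sub_le k _)
    rwa [hsucc] at this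
  norm_sub_le _ _ := norm_dyadicPoint_dyadicFloor_sub_le k _

lemma roundedDisplacement_mem_dyadicGrid (hx : IsDriftSolution v D⁻¹ f x) (hv : ‖v‖ ≤ 1)
    (h : IsDiscretization d q J k D T ℓ) (hf : HasEnvelope (D ^ 4) f) {n : ℕ} (hn : n < 2 ^ J) :
    roundedDisplacement k v ℓ x n ∈ dyadicGrid d k ⌊D ^ (q + 66)⌋ := by
  have hD := h.D_pos
  have hD1 (n : ℕ) : 1 ≤ D ^ n := one_le_pow₀ (by linarith [h.sixtyFour_le])
  have hs : (n : ℝ) * ℓ ∈ Icc 0 T := ⟨mul_nonneg n.cast_nonneg h.ℓ_pos.le, h.natCast_mul_le hn.le⟩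
  refine dyadicPoint_dyadicFloor_mem_dyadicGrid ?_
  calc 2 ^ k * ‖displacement v ℓ x n‖ + 1
      ≤ D ^ (q + 49) * (D ^ 8 * (D ^ 4) ^ 2) + D ^ (q + 65) := by
        gcongr
        exacts [h.pow_k_mem.2, hx.norm_sub_smul_le_pow_mul_sq hv h (hD1 4) hf hs, hD1 _]
    _ = 2 * D ^ (q + 65) := by ring
    _ ≤ D * D ^ (q + 65) := by
        gcongr
        linarith [h.sixtyFour_le]
    _ = D ^ (q + 66) := by ring

lemma norm_sub_smul_le_of_blockSumsBounded (hx : IsDriftSolution v D⁻¹ f x) (hv : ‖v‖ ≤ 1)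
    (h : IsDiscretization d q J k D T ℓ) (hf : HasEnvelope (D ^ 4) f) (hΘ : 1 ≤ Θ)
    (hJ : J * Θ * (D⁻¹ * (Θ + 3) * √T) ≤ 1 / 2)
    (hG : BlockSumsBounded J ℓ Θ (correctionSize d k D ℓ Θ) (fun n w => f ((n * ℓ) • v + w))
      (roundedDisplacement k v ℓ x)) :
    ‖x T - T • v‖ ≤ D⁻¹ * (Θ + 2) * √T := by
  have hD := h.inv_mem_Ioc.1
  have hJ_pos : (1 : ℝ) ≤ J := by
    refine Nat.one_le_cast.2 (Nat.one_le_iff_ne_zero.2 fun hJ0 => ?_)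
    have hpow := h.pow_J_mem.1
    rw [hJ0, pow_zero] at hpow
    linarith [one_lt_pow₀ (by linarith [h.sixtyFour_le] : 1 < D) (by norm_num : 45 ≠ 0)]
  have hT : D⁻¹ * √T ≤ 1 := by
    calc D⁻¹ * √T = 1 * 1 * (D⁻¹ * 1 * √T) := by ring
      _ ≤ J * Θ * (D⁻¹ * (Θ + 3) * √T) := by gcongr; linarith
      _ ≤ 1 := by linarith
  have hlast := (hx.isApproxEuler_displacement hv h hf).norm_block_increment_le hG hD.le h.ℓ_pos.le
    hΘ h.two_mul_error_le (by rwa [h.steps]) (by rwa [h.steps]) J le_rfl 0 (by simp)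
  simpa [displacement, hx.zero, h.steps] using hlast

end IsDriftSolution

end RoundedDisplacement

section SecondMoment

open Real

variable {Ω : Type*} [MeasurableSpace Ω] {P : Measure Ω} [IsProbabilityMeasure P]

lemma integral_le_of_forall_notMem_le {Y g : Ω → ℝ} {B : Set Ω} {a b p : ℝ} (hY : Integrable Y P)
    (hg : Integrable g P) (ha : 0 ≤ a) (hb : 0 ≤ b) (hp : 0 ≤ p) (hB : P B ≤ ENNReal.ofReal p)
    (hYB : ∀ᵐ ω ∂P, Y ω ≤ b + g ω) (hYa : ∀ᵐ ω ∂P, ω ∉ B → Y ω ≤ a + g ω) :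
    ∫ ω, Y ω ∂P ≤ a + b * p + ∫ ω, g ω ∂P := by
  set B' := toMeasurable P B
  have hB' : MeasurableSet B' := measurableSet_toMeasurable P B
  have hind : Integrable (B'.indicator fun _ => b) P := (integrable_const b).indicator hB'
  have hreal : P.real B' ≤ p := by
    rw [measureReal_def, measure_toMeasurable]
    exact ENNReal.toReal_le_of_le_ofReal hp hB
  have hle : ∀ᵐ ω ∂P, Y ω ≤ a + B'.indicator (fun _ => b) ω + g ω := by
    filter_upwards [hYB, hYa] with ω hωb hωa
    by_cases hω : ω ∈ B'
    · rw [indicator_of_mem hω]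
      linarith
    · rw [indicator_of_notMem hω]
      linarith [hωa fun hmem => hω (subset_toMeasurable P B hmem)]
  have hai : Integrable (fun ω => a + B'.indicator (fun _ => b) ω) P :=
    (integrable_const a).add hind
  calc ∫ ω, Y ω ∂P ≤ ∫ ω, (a + B'.indicator (fun _ => b) ω + g ω) ∂P :=
        integral_mono_ae hY (hai.add hg) hle
    _ = a + P.real B' * b + ∫ ω, g ω ∂P := by
        rw [integral_add hai hg, integral_add (integrable_const a) hind,
          integral_indicator_const b hB']
        simp
    _ ≤ a + b * p + ∫ ω, g ω ∂P := by
        rw [mul_comm b]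
        gcongr

variable {d q J k : ℕ} {C D T ℓ Θ : ℝ} {v : EuclideanSpace ℝ (Fin d)}
  {F : Ω → EuclideanSpace ℝ (Fin d) → EuclideanSpace ℝ (Fin d)}

/-- The event that the field has a large block sum along some discretized path in the grid that
contains the rounded displacements. -/
def badEvent (F : Ω → EuclideanSpace ℝ (Fin d) → EuclideanSpace ℝ (Fin d))
    (v : EuclideanSpace ℝ (Fin d)) (q J k : ℕ) (D ℓ Θ : ℝ) : Set Ω :=
  {ω | ∃ z : ℕ → EuclideanSpace ℝ (Fin d), (∀ n < 2 ^ J, z n ∈ dyadicGrid d k ⌊D ^ (q + 66)⌋) ∧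
    ¬ BlockSumsBounded J ℓ (d * Θ) (correctionSize d k D ℓ (d * Θ))
      (fun n w => F ω ((n * ℓ) • v + w)) z}

lemma IsDiscretization.card_dyadicGrid_sq_le (h : IsDiscretization d q J k D T ℓ) :
    ((dyadicGrid d k ⌊D ^ (q + 66)⌋).card : ℝ) ^ 2 ≤ D ^ ((q + 67) * d * 2) := by
  have hD := h.D_pos
  rw [pow_mul, pow_mul]
  gcongr
  refine card_dyadicGrid_le d k (Int.floor_nonneg.2 (by positivity)) ?_
  calc 2 * (⌊D ^ (q + 66)⌋ : ℝ) + 1 ≤ 2 * D ^ (q + 66) + D ^ (q + 66) := by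
        gcongr
        exacts [Int.floor_le _, one_le_pow₀ (by linarith [h.sixtyFour_le])]
    _ = 3 * D ^ (q + 66) := by ring
    _ ≤ D * D ^ (q + 66) := by
        gcongr
        linarith [h.sixtyFour_le]
    _ = D ^ (q + 67) := by ring

lemma measure_badEvent_le (hF : ∀ i, IsLineSubgaussian v C (fun ω x => F ω x i) P) (hC : 0 < C)
    (hv : ‖v‖ = 1) (h : IsDiscretization d q J k D T ℓ) (hΘ : 0 ≤ Θ)
    (hr : D ^ ((q + 67) * d * 2) * exp (-Θ ^ 2 / (2 * C ^ 2)) ≤ 1) :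
    P (badEvent F v q J k D ℓ Θ) ≤
      ENNReal.ofReal (D ^ 139 * (D ^ ((q + 67) * d * 2) * exp (-Θ ^ 2 / (2 * C ^ 2)))) := by
  have hD := h.D_pos
  have hℓ := h.ℓ_mem_Ioc
  have hcard : _ * exp (-Θ ^ 2 / (2 * C ^ 2)) ≤ _ :=
    mul_le_mul_of_nonneg_right h.card_dyadicGrid_sq_le (exp_pos _).le
  have hη (g : ℕ) : 0 < correctionSize d k D ℓ (d * Θ) g := by
    have := hℓ.1
    unfold correctionSize
    positivity
  refine (measure_exists_not_blockSumsBounded_le hF hC hv hℓ hΘ hη (hcard.trans hr) J).trans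
    (ENNReal.ofReal_le_ofReal ?_)
  have hJ : (J + 1 : ℝ) ≤ D ^ 46 :=
    le_trans (by exact_mod_cast Nat.lt_two_pow_self) h.pow_J_mem.2
  set e := D ^ ((q + 67) * d * 2) * exp (-Θ ^ 2 / (2 * C ^ 2))
  have he : 0 ≤ e := by positivity
  calc _ ≤ d * (D ^ 46 * (D ^ 46 * (D ^ 46 * (2 * e)))) := by
        gcongr
        exact h.pow_J_mem.2
    _ = 2 * d * (D ^ 138 * e) := by ring
    _ ≤ D * (D ^ 138 * e) := by
        gcongr
        exact h.two_mul_le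
    _ = D ^ 139 * e := by ring

lemma integral_sq_norm_sub_smul_le {N : Ω → ℝ} {x : Ω → ℝ → EuclideanSpace ℝ (Fin d)}
    (hF : ∀ i, IsLineSubgaussian v C (fun ω x => F ω x i) P) (hC : 0 < C) (hv : ‖v‖ = 1)
    (hd : 2 ≤ d) (hN : ∀ ω, 0 ≤ N ω) (hN_int : Integrable (fun ω => N ω ^ (4 * d + 2)) P)
    (hFN : ∀ᵐ ω ∂P, HasEnvelope (N ω) (F ω))
    (hx : ∀ᵐ ω ∂P, IsDriftSolution v D⁻¹ (F ω) (x ω))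
    (hx_int : Integrable (fun ω => ‖x ω T - T • v‖ ^ 2) P)
    (h : IsDiscretization d q J k D T ℓ) (hΘ : 1 ≤ Θ)
    (hr : D ^ ((q + 67) * d * 2) * exp (-Θ ^ 2 / (2 * C ^ 2)) ≤ 1)
    (hJ : J * (d * Θ) * (D⁻¹ * (d * Θ + 3) * √T) ≤ 1 / 2) :
    ∫ ω, ‖x ω T - T • v‖ ^ 2 ∂P ≤ (D⁻¹ * (d * Θ + 2) * √T) ^ 2 +
      D ^ 32 * (D ^ 139 * (D ^ ((q + 67) * d * 2) * exp (-Θ ^ 2 / (2 * C ^ 2)))) +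
      D⁻¹ ^ 8 * ∫ ω, N ω ^ (4 * d + 2) ∂P := by
  have hD := h.D_pos
  have hD4 : 1 ≤ D ^ 4 := one_le_pow₀ (by linarith [h.sixtyFour_le])
  have hmoment (ω : Ω) : 0 ≤ D⁻¹ ^ 8 * N ω ^ (4 * d + 2) := by
    have := hN ω
    positivity
  have hdΘ : 1 ≤ d * Θ := one_le_mul_of_one_le_of_one_le (by exact_mod_cast (by lia : 1 ≤ d)) hΘ
  rw [← integral_const_mul]
  refine integral_le_of_forall_notMem_le hx_int (hN_int.const_mul _) (by positivity)
    (by positivity) (by positivity) (measure_badEvent_le hF hC hv h (by linarith) hr) ?_ ?_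
  · filter_upwards [hFN, hx] with ω hω hxω
    rcases le_total (D ^ 4) (N ω) with hlarge | hsmall
    · exact (hxω.sq_norm_sub_smul_le_of_pow_four_le hv.le hd h hlarge hω).trans
        (le_add_of_nonneg_left (by positivity))
    · refine le_add_of_le_of_nonneg ?_ (hmoment ω)
      calc ‖x ω T - T • v‖ ^ 2 ≤ (D ^ 8 * (D ^ 4) ^ 2) ^ 2 := by
            gcongr
            exact hxω.norm_sub_smul_le_pow_mul_sq hv.le h hD4 (hω.mono hsmall) ⟨h.T_pos.le, le_rfl⟩
        _ = D ^ 32 := by ring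
  · filter_upwards [hFN, hx] with ω hω hxω hgood
    rcases le_total (D ^ 4) (N ω) with hlarge | hsmall
    · exact (hxω.sq_norm_sub_smul_le_of_pow_four_le hv.le hd h hlarge hω).trans
        (le_add_of_nonneg_left (by positivity))
    · refine le_add_of_le_of_nonneg ?_ (hmoment ω)
      have hω' := hω.mono hsmall
      gcongr
      refine hxω.norm_sub_smul_le_of_blockSumsBounded hv.le h hω' hdΘ hJ ?_
      by_contra hbad
      exact hgood ⟨_, fun n hn => hxω.roundedDisplacement_mem_dyadicGrid hv.le h hω' hn, hbad⟩

end SecondMoment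

/-! ### The limit of weak fields -/

section WeakField

open Real Topology

variable {t ρ κ s : ℝ}

/-- The time `t δ^{-2(1-ρ)}` at which a particle in a field of strength `δ = D⁻¹` is observed. -/
noncomputable def observationTime (t ρ D : ℝ) : ℝ := t * D ^ (2 * (1 - ρ))

lemma observationTime_inv {δ : ℝ} (hδ : 0 ≤ δ) :
    observationTime t ρ δ⁻¹ = t * δ ^ (-2 * (1 - ρ)) := by
  rw [observationTime, inv_rpow hδ, neg_mul, rpow_neg hδ]

lemma inv_mul_sqrt_observationTime {D : ℝ} (ht : 0 ≤ t) (hD : 0 < D) :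
    D⁻¹ * √(observationTime t ρ D) = √t * D ^ (-ρ) := by
  rw [observationTime, sqrt_mul ht, sqrt_eq_rpow (D ^ _), ← rpow_mul hD.le, ← rpow_neg_one D,
    mul_left_comm, ← rpow_add hD]
  ring_nf

lemma tendsto_rpow_mul_deviation_zero (ht : 0 ≤ t) (hκ : 0 ≤ κ) (hs : s + κ < ρ) (b c : ℝ) :
    Tendsto (fun D => D ^ s * (D⁻¹ * (b * D ^ κ + c) * √(observationTime t ρ D))) atTop (𝓝 0) := by
  have hlim : Tendsto (fun D : ℝ => √t * (b * D ^ (-(ρ - s - κ)) + c * D ^ (-(ρ - s)))) atTop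
      (𝓝 (√t * (b * 0 + c * 0))) :=
    (((tendsto_rpow_neg_atTop (by linarith)).const_mul b).add
      ((tendsto_rpow_neg_atTop (by linarith)).const_mul c)).const_mul _
  simp only [mul_zero, add_zero] at hlim
  refine hlim.congr' ?_
  filter_upwards [eventually_gt_atTop 0] with D hD
  have hκ_exp : D ^ (-(ρ - s - κ)) = D ^ s * D ^ κ * D ^ (-ρ) := by
    rw [← rpow_add hD, ← rpow_add hD]
    ring_nf
  have hs_exp : D ^ (-(ρ - s)) = D ^ s * D ^ (-ρ) := by
    rw [← rpow_add hD]
    ring_nf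
  calc √t * (b * D ^ (-(ρ - s - κ)) + c * D ^ (-(ρ - s)))
      = D ^ s * ((b * D ^ κ + c) * (√t * D ^ (-ρ))) := by rw [hκ_exp, hs_exp]; ring
    _ = D ^ s * (D⁻¹ * (b * D ^ κ + c) * √(observationTime t ρ D)) := by
        rw [← inv_mul_sqrt_observationTime ht hD]
        ring

lemma tendsto_pow_mul_exp_neg_rpow_sq_zero (hκ : 0 < κ) {c : ℝ} (hc : 0 < c) (n : ℕ) :
    Tendsto (fun D : ℝ => D ^ n * exp (-(D ^ κ) ^ 2 / c)) atTop (𝓝 0) := by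
  have hexp := (tendsto_rpow_mul_exp_neg_mul_atTop_nhds_zero (n / (2 * κ)) (1 / c)
    (by positivity)).comp (tendsto_rpow_atTop (y := 2 * κ) (by positivity))
  refine hexp.congr' ?_
  filter_upwards [eventually_gt_atTop 0] with D hD
  have hpow : (D ^ (2 * κ)) ^ (n / (2 * κ)) = D ^ n := by
    rw [← rpow_mul hD.le, mul_div_cancel₀ _ (by positivity), rpow_natCast]
  have hsq : D ^ (2 * κ) = (D ^ κ) ^ 2 := by rw [mul_comm, rpow_mul hD.le, rpow_two]
  rw [Function.comp_apply, hpow, hsq]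
  ring_nf

lemma natCast_le_mul_rpow_of_two_pow_le (hκ : 0 < κ) {D : ℝ} (hD : 0 < D) {J n : ℕ}
    (hJ : (2 : ℝ) ^ J ≤ D ^ n) : (J : ℝ) ≤ n / (κ * log 2) * D ^ κ := by
  have hlog2 : 0 < log 2 := log_pos one_lt_two
  have hlog : J * log 2 ≤ n * log D := by
    simpa only [log_pow] using log_le_log (by positivity) hJ
  calc (J : ℝ) ≤ n * log D / log 2 := (le_div_iff₀ hlog2).2 hlog
    _ ≤ n * (D ^ κ / κ) / log 2 := by
        gcongr
        exact log_le_rpow_div hD.le hκ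
    _ = n / (κ * log 2) * D ^ κ := by field_simp

lemma eventually_observationTime_le_pow_three (hρ : 0 < ρ) :
    ∀ᶠ D in atTop, observationTime t ρ D ≤ D ^ 3 := by
  have hlim : Tendsto (fun D : ℝ => t * D ^ (-(1 + 2 * ρ))) atTop (𝓝 (t * 0)) :=
    (tendsto_rpow_neg_atTop (by linarith)).const_mul t
  filter_upwards [hlim.eventually_le_const (by simp : t * 0 < 1), eventually_gt_atTop 0]
    with D hle hD
  calc observationTime t ρ D = t * D ^ (-(1 + 2 * ρ)) * D ^ 3 := by
        rw [observationTime, mul_assoc, ← rpow_natCast D 3, ← rpow_add hD]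
        push_cast
        ring_nf
    _ ≤ 1 * D ^ 3 := by gcongr
    _ = D ^ 3 := one_mul _

lemma eventually_one_le_observationTime_mul_pow (ht : 0 < t) {q : ℕ} (hq : 2 * ρ ≤ q) :
    ∀ᶠ D in atTop, 1 ≤ observationTime t ρ D * D ^ q := by
  have hlim : Tendsto (fun D : ℝ => t * D ^ (2 * (1 - ρ) + q)) atTop atTop :=
    (tendsto_rpow_atTop (by linarith)).const_mul_atTop ht
  filter_upwards [hlim.eventually_ge_atTop 1, eventually_gt_atTop 0] with D hle hD
  rwa [observationTime, mul_assoc, ← rpow_natCast, ← rpow_add hD]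

lemma eventually_forall_scales_mul_deviation_le (ht : 0 ≤ t) (hκ : 0 < κ) (hκρ : 3 * κ < ρ)
    {b : ℝ} (hb : 0 ≤ b) (n : ℕ) :
    ∀ᶠ D in atTop, ∀ J : ℕ, (2 : ℝ) ^ J ≤ D ^ n →
      J * (b * D ^ κ) * (D⁻¹ * (b * D ^ κ + 3) * √(observationTime t ρ D)) ≤ 1 / 2 := by
  have hlim := (tendsto_rpow_mul_deviation_zero (ρ := ρ) (s := 2 * κ) ht hκ.le (by linarith) b
    3).const_mul (n / (κ * log 2) * b)
  rw [mul_zero] at hlim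
  filter_upwards [hlim.eventually_le_const one_half_pos, eventually_gt_atTop 0] with D hle hD J hJ
  refine le_trans ?_ hle
  calc J * (b * D ^ κ) * (D⁻¹ * (b * D ^ κ + 3) * √(observationTime t ρ D))
      ≤ n / (κ * log 2) * D ^ κ * (b * D ^ κ) *
          (D⁻¹ * (b * D ^ κ + 3) * √(observationTime t ρ D)) := by
        gcongr
        exact natCast_le_mul_rpow_of_two_pow_le hκ hD hJ
    _ = n / (κ * log 2) * b *
          (D ^ (2 * κ) * (D⁻¹ * (b * D ^ κ + 3) * √(observationTime t ρ D))) := by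
        rw [two_mul κ, rpow_add hD]
        ring

lemma tendsto_secondMoment_bound_zero (ht : 0 ≤ t) (hκ : 0 < κ) (hκρ : κ < ρ) {C : ℝ} (hC : 0 < C)
    (b M : ℝ) (m n p : ℕ) :
    Tendsto (fun D => (D⁻¹ * (b * D ^ κ + 2) * √(observationTime t ρ D)) ^ 2 +
      D ^ m * (D ^ n * (D ^ p * exp (-(D ^ κ) ^ 2 / (2 * C ^ 2)))) + D⁻¹ ^ 8 * M) atTop (𝓝 0) := by
  have hdev := (tendsto_rpow_mul_deviation_zero (ρ := ρ) (s := 0) ht hκ.le (by linarith) b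
    2).pow 2
  have hexp := tendsto_pow_mul_exp_neg_rpow_sq_zero hκ (c := 2 * C ^ 2) (by positivity) (m + n + p)
  have henv := ((tendsto_inv_atTop_zero (𝕜 := ℝ)).pow 8).mul_const M
  simpa [pow_add, mul_assoc] using (hdev.add hexp).add henv

variable {Ω : Type*} [MeasurableSpace Ω] {P : Measure Ω} [IsProbabilityMeasure P] {d : ℕ} {C : ℝ}
  {v : EuclideanSpace ℝ (Fin d)} {F : Ω → EuclideanSpace ℝ (Fin d) → EuclideanSpace ℝ (Fin d)}
  {x : ℝ → Ω → ℝ → EuclideanSpace ℝ (Fin d)}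

theorem tendsto_integral_sq_norm_sub_smul_zero (hd : 2 ≤ d) (hv : ‖v‖ = 1) (hC : 0 < C)
    (hF : ∀ i, IsLineSubgaussian v C (fun ω x => F ω x i) P) (hF_cont : ∀ᵐ ω ∂P, Continuous (F ω))
    (hx : ∀ D, 1 ≤ D → ∀ᵐ ω ∂P, IsDriftSolution v D⁻¹ (F ω) (x D ω))
    (hx_int : ∀ D, 1 ≤ D → ∀ s, Integrable (fun ω => ‖x D ω s - s • v‖ ^ 2) P)
    (ht : 0 < t) (hρ : 0 < ρ) :
    Tendsto (fun D => ∫ ω, ‖x D ω (observationTime t ρ D) - observationTime t ρ D • v‖ ^ 2 ∂P)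
      atTop (𝓝 0) := by
  obtain ⟨N, hN, hN_mem, hFN⟩ := exists_memLp_hasEnvelope_of_apply hC hF hF_cont
  have hN_int : Integrable (fun ω => N ω ^ (4 * d + 2)) P := by
    simpa [abs_of_nonneg (hN _)] using hN_mem.integrable_norm_pow (by lia)
  obtain ⟨κ, hκ, hκρ⟩ : ∃ κ, 0 < κ ∧ 3 * κ < ρ := ⟨ρ / 4, by positivity, by linarith⟩
  obtain ⟨q, hq⟩ := exists_nat_ge (2 * ρ)
  refine squeeze_zero' (.of_forall fun D => integral_nonneg fun ω => by positivity) ?_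
    (tendsto_secondMoment_bound_zero (ρ := ρ) ht.le hκ (by linarith) hC d
      (∫ ω, N ω ^ (4 * d + 2) ∂P) 32 139 ((q + 67) * d * 2))
  have hexp := tendsto_pow_mul_exp_neg_rpow_sq_zero hκ (c := 2 * C ^ 2) (by positivity)
    ((q + 67) * d * 2)
  filter_upwards [eventually_ge_atTop 1, eventually_ge_atTop (64 * (1 + (d : ℝ)) ^ 2),
    eventually_observationTime_le_pow_three hρ,
    eventually_one_le_observationTime_mul_pow ht hq,
    hexp.eventually_le_const one_pos,
    eventually_forall_scales_mul_deviation_le ht.le hκ hκρ d.cast_nonneg 46]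
    with D hD_one hD hT_le hT_ge hr hJ
  obtain ⟨J, k, ℓ, h⟩ := exists_isDiscretization hD hT_le hT_ge
  exact integral_sq_norm_sub_smul_le hF hC hv hd hN hN_int hFN (hx D hD_one) (hx_int D hD_one _) h
    (one_le_rpow hD_one hκ.le) hr (hJ J h.pow_J_mem.2)

end WeakField

theorem stmt3_general (d : ℕ) (hd : 2 ≤ d)
    (α : ℝ) (hα : α < 1 / 2)
    (K : ℝ) (hK : 0 < K)
    (a : ℝ → ℝ)
    (ha_nonneg : ∀ r : ℝ, 0 ≤ r → 0 ≤ a r)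
    (ha_bdd : ∃ M : ℝ, ∀ r : ℝ, 0 ≤ r → a r ≤ M)
    (ha_meas : Measurable a)
    (ha_supp : ∀ r : ℝ, K < r → a r = 0)
    (v : EuclideanSpace ℝ (Fin d)) (hv : ‖v‖ = 1)
    (Ω : Type*) [MeasurableSpace Ω] (P : Measure Ω) [IsProbabilityMeasure P]
    (F : Ω → EuclideanSpace ℝ (Fin d) → EuclideanSpace ℝ (Fin d))
    (hF_meas : Measurable (Function.uncurry F))
    (hF_cont : ∀ᵐ ω ∂P, Continuous (F ω))
    (hF_gauss : ∀ (N : ℕ) (x c : Fin N → EuclideanSpace ℝ (Fin d)),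
      Measure.map (fun ω => ∑ j : Fin N, ⟪c j, F ω (x j)⟫) P =
        gaussianReal 0 (Real.toNNReal (∑ j : Fin N, ∑ l : Fin N,
          ∑ i : Fin d, ∑ i' : Fin d,
            c j i * covEntry d α a (x j - x l) i i' * c l i')))
    (X : ℝ → Ω → ℝ → EuclideanSpace ℝ (Fin d))
    (hX_sol : ∀ δ ∈ Ioc (0:ℝ) 1, ∀ᵐ ω ∂P, X δ ω 0 = 0 ∧
      ∀ s : ℝ, 0 ≤ s → HasDerivAt (X δ ω) (v + δ • F ω (X δ ω s)) s)
    (hy_int : ∀ δ ∈ Ioc (0:ℝ) 1, ∀ s : ℝ,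
      Integrable (fun ω => ‖X δ ω s - s • v‖ ^ 2) P)
    (t ρ : ℝ) (ht : 0 < t) (hρ : 0 < ρ) :
    Tendsto (fun δ : ℝ =>
        ∫ ω, ‖X δ ω (t * δ ^ (-2 * (1 - ρ))) -
            (t * δ ^ (-2 * (1 - ρ))) • v‖ ^ 2 ∂P)
      (nhdsWithin 0 (Ioi 0)) (nhds 0) := by
  obtain ⟨C, hC, hF⟩ := exists_isLineSubgaussian_apply hd hα hK ha_nonneg ha_bdd ha_meas ha_supp
    hv.le hF_meas hF_gauss
  have hinv (D : ℝ) (hD : 1 ≤ D) : D⁻¹ ∈ Ioc (0 : ℝ) 1 :=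
    ⟨inv_pos.2 (by linarith), inv_le_one_of_one_le₀ hD⟩
  have hlim := tendsto_integral_sq_norm_sub_smul_zero (x := fun D => X D⁻¹) hd hv hC hF hF_cont
    (fun D hD => (hX_sol _ (hinv D hD)).mono fun _ h => ⟨h.1, fun s => h.2 s⟩)
    (fun D hD => hy_int _ (hinv D hD)) ht hρ
  refine (hlim.comp tendsto_inv_nhdsGT_zero).congr' ?_
  filter_upwards [self_mem_nhdsWithin] with δ (hδ : 0 < δ)
  simp only [Function.comp_apply, inv_inv, observationTime_inv hδ.le]

/-- In the same setting (Gaussian, centered, homogeneous, divergence-free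
field with power spectrum determined by `a` and `α`), assume `α < 1/2`. Then for every
`t > 0` and `ρ > 0` one has `lim_{δ→0+} E|y_δ(t δ^{-2(1-ρ)})|² = 0`. -/
theorem stmt3 (d : ℕ) (hd : 2 ≤ d)
    (α : ℝ) (hα1 : α < 1) (hα2 : α < 1 / 2)
    (K : ℝ) (hK : 0 < K)
    (a : ℝ → ℝ)
    (ha_nonneg : ∀ r : ℝ, 0 ≤ r → 0 ≤ a r)
    (ha_bdd : ∃ M : ℝ, ∀ r : ℝ, 0 ≤ r → a r ≤ M)
    (ha_meas : Measurable a)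
    (ha_supp : ∀ r : ℝ, K < r → a r = 0)
    (ha_cont : ContinuousAt a 0)
    (ha_one : a 0 = 1)
    (v : EuclideanSpace ℝ (Fin d)) (hv : ‖v‖ = 1)
    (Ω : Type*) [MeasurableSpace Ω] (P : Measure Ω) [IsProbabilityMeasure P]
    (F : Ω → EuclideanSpace ℝ (Fin d) → EuclideanSpace ℝ (Fin d))
    (hF_meas : Measurable (Function.uncurry F))
    (hF_reg : ∀ᵐ ω ∂P, ContDiff ℝ 1 (F ω) ∧
      ∀ x : EuclideanSpace ℝ (Fin d),
        ∑ i : Fin d, fderiv ℝ (F ω) x (EuclideanSpace.single i 1) i = 0)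
    (hF_gauss : ∀ (N : ℕ) (x c : Fin N → EuclideanSpace ℝ (Fin d)),
      Measure.map (fun ω => ∑ j : Fin N, ⟪c j, F ω (x j)⟫) P =
        gaussianReal 0 (Real.toNNReal (∑ j : Fin N, ∑ l : Fin N,
          ∑ i : Fin d, ∑ i' : Fin d,
            c j i * covEntry d α a (x j - x l) i i' * c l i')))
    (X : ℝ → Ω → ℝ → EuclideanSpace ℝ (Fin d))
    (hX_meas : ∀ δ ∈ Ioc (0:ℝ) 1, Measurable (Function.uncurry (X δ)))
    (hX_sol : ∀ δ ∈ Ioc (0:ℝ) 1, ∀ᵐ ω ∂P, X δ ω 0 = 0 ∧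
      ∀ s : ℝ, 0 ≤ s → HasDerivAt (X δ ω) (v + δ • F ω (X δ ω s)) s)
    (hy_int : ∀ δ ∈ Ioc (0:ℝ) 1, ∀ s : ℝ,
      Integrable (fun ω => ‖X δ ω s - s • v‖ ^ 2) P)
    (t ρ : ℝ) (ht : 0 < t) (hρ : 0 < ρ) :
    Tendsto (fun δ : ℝ =>
        ∫ ω, ‖X δ ω (t * δ ^ (-2 * (1 - ρ))) -
            (t * δ ^ (-2 * (1 - ρ))) • v‖ ^ 2 ∂P)
      (nhdsWithin 0 (Ioi 0)) (nhds 0) := by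
  exact stmt3_general d hd α hα2 K hK a ha_nonneg ha_bdd ha_meas ha_supp v hv Ω P F hF_meas
    (hF_reg.mono fun _ h => h.1.continuous) hF_gauss X hX_sol hy_int t ρ ht hρ
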